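/- Let J ≥ 1 and let q₁, …, q_J be distinct primes with q_i ≡ −1 (mod 3) for all i; let t_i ∈ {1, 2} for all i, let s ∈ {0, 1, 2}, and set m = 3^s · ∏_{i=1}^J q_i^{t_i}. Let K = ℚ(ζ₃, m^{1/3}), and define r = J if every q_i ≡ −1 (mod 9) and m ≢ ±1 (mod 9); r = J − 1 if either every q_i ≡ −1 (mod 9) and m ≡ ±1 (mod 9), or some q_i ≡ 2 or 5 (mod 9) and m ≢ ±1 (mod 9); and r = J − 2 if some q_i ≡ 2 or 5 (mod 9) and m ≡ ±1 (mod 9). Then for any finite set S of nonzero prime ideals of O_K, dim_{𝔽₃} Cl_S(K)[3] ≥ 2r − 3|S|. -/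

import Mathlib

open IsDedekindDomain NumberField

/-!
Let `k = ℚ(ζ₃)`, let `A` be the class group of `K`, and let `σ` generate `Gal(K/k)`. As `𝓞 k` is a
principal ideal domain, `1 + σ + σ²` annihilates `A`, so `(σ - 1)²` and `3` have the same kernel
on `A`, and `[A : C]² ≤ |A[3]|` for every subgroup `C` containing both `A^σ` and `A^(σ-1)`.

Such a `C` comes from genus theory. Each `q i` is inert in `k` and ramifies in `K`; let `𝔓 i` be
the prime above it. For `c : ι → ZMod 3` put `ψ_c = ∏ i, (·/𝔓 i)₃ ^ c i`. If `ψ_c ζ₃ = 1`, then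
sending the class of `I` to `ψ_c x`, where `x ∈ k` generates the relative norm of `I`, is a
character `Ψ_c` of `A` trivial on `A^σ` and `A^(σ-1)`. If `Ψ_c = 1`, cubic reciprocity (through
Jacobi sums) makes `∏ i, q i ^ c i` a cube modulo almost all primes of `K`, hence a cube in `K`, so
`c` is proportional to the exponents of `m`. Counting the `c` with `ψ_c ζ₃ = 1` modulo those with
`Ψ_c = 1` gives `[A : C] ≥ 3 ^ r` for the common kernel `C` of the `Ψ_c`.

Finally `A → Cl_S(K)` has kernel generated by the classes of the primes of `S`, so its `3`-torsion
loses at most a factor `3` for each of them.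
-/

section FiniteCommGroup

variable {A B : Type*} [CommGroup A] [CommGroup B]

theorem div_id_apply_div_id_apply (σ : A →* A) (hσ : ∀ a, a * σ a * σ (σ a) = 1) (a : A) :
    (σ / MonoidHom.id A) ((σ / MonoidHom.id A) a) = (σ a ^ 3)⁻¹ := by
  have hσσ : σ (σ a) = (a * σ a)⁻¹ := eq_inv_of_mul_eq_one_right (hσ a)
  simp only [MonoidHom.div_apply, MonoidHom.id_apply, map_div, hσσ]
  rw [div_div_div_eq, div_eq_iff_eq_mul]
  group

variable [Finite A]

theorem card_ker_comp_self (D : A →* A) :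
    Nat.card (D.comp D).ker = Nat.card D.ker * (D.range ⊔ D.ker).index := by
  have relIndex_range : (D.comp D).range.relIndex D.range = (D.range ⊔ D.ker).index := by
    rw [MonoidHom.range_comp, MonoidHom.range_eq_map D, Subgroup.relIndex_map_map,
      ← MonoidHom.range_eq_map, top_sup_eq, Subgroup.relIndex_top_right]
  have range_le : (D.comp D).range ≤ D.range := by
    rintro _ ⟨a, rfl⟩
    exact ⟨D a, rfl⟩
  rw [← Subgroup.index_range, ← Subgroup.relIndex_mul_index range_le, relIndex_range,
    Subgroup.index_range, mul_comm]

theorem index_sq_le_card_ker_pow_three (σ : A →* A) (hσ : ∀ a, a * σ a * σ (σ a) = 1)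
    {C : Subgroup A} (mem_of_fixed : ∀ a, σ a = a → a ∈ C) (div_mem : ∀ a, σ a / a ∈ C) :
    C.index ^ 2 ≤ Nat.card (powMonoidHom 3 : A →* A).ker := by
  set D : A →* A := σ / MonoidHom.id A with hD
  have ker_le : D.ker ≤ C := fun a ha ↦ mem_of_fixed a (div_eq_one.mp ha)
  have range_le : D.range ≤ C := by
    rintro _ ⟨a, rfl⟩
    exact div_mem a
  have σ_injective : Function.Injective σ := by
    refine (injective_iff_map_eq_one σ).mpr fun a ha ↦ ?_
    simpa [ha] using hσ a
  have ker_eq : (D.comp D).ker = (powMonoidHom 3 : A →* A).ker := by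
    ext a
    rw [MonoidHom.mem_ker, MonoidHom.comp_apply, hD, div_id_apply_div_id_apply σ hσ,
      inv_eq_one, ← map_pow, map_eq_one_iff σ σ_injective, MonoidHom.mem_ker, powMonoidHom_apply]
  rw [← ker_eq, card_ker_comp_self, ← Subgroup.index_range, sq]
  exact Nat.mul_le_mul
    (Nat.le_of_dvd (Nat.pos_of_ne_zero Subgroup.index_ne_zero_of_finite)
      (Subgroup.index_dvd_of_le range_le))
    (Nat.le_of_dvd (Nat.pos_of_ne_zero Subgroup.index_ne_zero_of_finite)
      (Subgroup.index_dvd_of_le (sup_le range_le ker_le)))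

theorem card_ker_pow_le_pow_rank (n : ℕ) (hn : n ≠ 0) :
    Nat.card (powMonoidHom n : A →* A).ker ≤ n ^ Group.rank A := by
  set P := (powMonoidHom n : A →* A).range
  have pow_eq_one : ∀ x : A ⧸ P, x ^ n = 1 := by
    intro x
    obtain ⟨a, rfl⟩ := QuotientGroup.mk_surjective x
    exact (QuotientGroup.eq_one_iff _).mpr ⟨a, rfl⟩
  calc Nat.card (powMonoidHom n : A →* A).ker = Nat.card (A ⧸ P) := Subgroup.index_range.symm
    _ ≤ n ^ Group.rank (A ⧸ P) :=
        Nat.le_of_dvd (pow_pos (Nat.pos_of_ne_zero hn) _) (card_dvd_exponent_pow_rank' _ pow_eq_one)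
    _ ≤ n ^ Group.rank A := Nat.pow_le_pow_right (Nat.pos_of_ne_zero hn)
        (Group.rank_le_of_surjective (QuotientGroup.mk' P) (QuotientGroup.mk'_surjective P))

theorem card_ker_pow_le_mul_pow_card {n : ℕ} (hn : n ≠ 0) (f : A →* B) (s : Set A)
    (ker_le : f.ker ≤ Subgroup.closure s) [Finite (powMonoidHom n : B →* B).ker] :
    Nat.card (powMonoidHom n : A →* A).ker ≤
      Nat.card (powMonoidHom n : B →* B).ker * n ^ Nat.card s := by
  let fₙ : (powMonoidHom n : A →* A).ker →* (powMonoidHom n : B →* B).ker :=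
    (f.comp (Subgroup.subtype _)).codRestrict _ fun a ↦ by
      have ha : (a : A) ^ n = 1 := a.2
      simp [MonoidHom.mem_ker, ← map_pow, ha]
  have card_range_le : Nat.card fₙ.range ≤ Nat.card (powMonoidHom n : B →* B).ker :=
    Nat.card_le_card_of_injective _ Subtype.val_injective
  have card_ker_le : Nat.card fₙ.ker ≤ n ^ Nat.card s := by
    let ι : fₙ.ker → (powMonoidHom n : Subgroup.closure s →* Subgroup.closure s).ker := fun a ↦
      ⟨⟨a, ker_le (congrArg Subtype.val a.2)⟩, Subtype.ext a.1.2⟩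
    have ι_injective : Function.Injective ι := fun a b h ↦
      Subtype.ext (Subtype.ext (congrArg (fun x ↦ (x.1 : A)) h))
    calc Nat.card fₙ.ker
        ≤ Nat.card (powMonoidHom n : Subgroup.closure s →* Subgroup.closure s).ker :=
          Nat.card_le_card_of_injective ι ι_injective
      _ ≤ n ^ Group.rank (Subgroup.closure s) := card_ker_pow_le_pow_rank n hn
      _ ≤ n ^ Nat.card s := Nat.pow_le_pow_right (Nat.pos_of_ne_zero hn)
          (Subgroup.rank_closure_finite_le_nat_card s)
  rw [← Subgroup.card_mul_index fₙ.ker, Subgroup.index_ker, mul_comm]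
  exact Nat.mul_le_mul card_range_le card_ker_le

end FiniteCommGroup

section Duality

theorem card_monoidHom_le (A R : Type*) [Monoid A] [Finite A] [CommRing R] [IsDomain R] :
    Nat.card (A →* R) ≤ Nat.card A := by
  have linearIndependent := linearIndependent_monoidHom A R
  have := Fintype.ofFinite A
  have := linearIndependent.finite
  have := Fintype.ofFinite (A →* R)
  simpa only [Nat.card_eq_fintype_card, Module.finrank_fintype_fun_eq_card] using
    linearIndependent.fintype_card_le_finrank

theorem index_ker_le_index_iInf_ker {G A R : Type*} [Group G] [CommGroup A] [Finite A] [CommRing R]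
    [IsDomain R] (Φ : G →* A →* R) :
    Φ.ker.index ≤ (⨅ g, (Φ g).ker).index := by
  set C := ⨅ g, (Φ g).ker
  have le_ker (g : G) : C ≤ (Φ g).ker := iInf_le _ g
  let descend (g : G) : A ⧸ C →* R := QuotientGroup.lift C (Φ g) (le_ker g)
  have ker_iff {g h : G} : QuotientGroup.leftRel Φ.ker g h ↔ Φ g = Φ h := by
    rw [QuotientGroup.leftRel_apply, ← MonoidHom.eq_iff, eq_comm]
  have := (linearIndependent_monoidHom (A ⧸ C) R).finite
  refine (Nat.card_le_card_of_injective (Quotient.lift descend fun g h hgh ↦ ?_) ?_).trans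
    (card_monoidHom_le (A ⧸ C) R)
  · simp only [descend, ker_iff.1 hgh]
  · rintro ⟨g⟩ ⟨h⟩ hgh
    refine Quotient.sound (ker_iff.2 (MonoidHom.ext fun a ↦ ?_))
    exact DFunLike.congr_fun hgh (a : A ⧸ C)

end Duality

section Density

open Filter
open scoped ComplexOrder ENNReal Pointwise Topology

variable {α β : Type*}

/-- The expansion `∑_A ∏_{a ∈ A} w a` over finite multisets `A` of the Euler product
`∏_a (1 - w a)⁻¹`. Values in `ℝ≥0∞` make every summability question disappear. -/
noncomputable def eulerSum (w : α → ℝ≥0∞) : ℝ≥0∞ :=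
  ∑' A : Multiset α, (A.map w).prod

theorem eulerSum_le_of_injective {w : α → ℝ≥0∞} {v : β → ℝ≥0∞} {f : α → β}
    (hf : Function.Injective f) (hwv : ∀ a, w a ≤ v (f a)) : eulerSum w ≤ eulerSum v :=
  calc eulerSum w ≤ ∑' A : Multiset α, ((A.map f).map v).prod := by
        refine ENNReal.tsum_le_tsum fun A ↦ ?_
        rw [Multiset.map_map]
        exact Multiset.prod_map_le_prod_map _ _ fun a _ ↦ hwv a
    _ ≤ eulerSum v := ENNReal.tsum_comp_le_tsum_of_injective (Multiset.map_injective hf) _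

theorem disjSum_bijective :
    Function.Bijective fun A : Multiset α × Multiset β ↦ A.1.disjSum A.2 := by
  constructor
  · have getLeft (A : Multiset α) (B : Multiset β) :
        (A.disjSum B).filterMap Sum.getLeft? = A := by
      induction B using Multiset.induction_on <;>
        simp_all [Multiset.disjSum, Multiset.filterMap_add, Multiset.filterMap_map,
          Multiset.filterMap_cons, Function.comp_def]
    have getRight (A : Multiset α) (B : Multiset β) :
        (A.disjSum B).filterMap Sum.getRight? = B := by
      induction A using Multiset.induction_on <;>
        simp_all [Multiset.disjSum, Multiset.filterMap_add, Multiset.filterMap_map,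
          Multiset.filterMap_cons, Function.comp_def]
    rintro ⟨A, B⟩ ⟨A', B'⟩ h
    exact Prod.ext (by simpa only [getLeft] using congrArg (Multiset.filterMap Sum.getLeft?) h)
      (by simpa only [getRight] using congrArg (Multiset.filterMap Sum.getRight?) h)
  · intro M
    induction M using Multiset.induction_on with
    | empty => exact ⟨(0, 0), rfl⟩
    | cons x M ih =>
      obtain ⟨⟨A, B⟩, rfl⟩ := ih
      rcases x with a | b
      · exact ⟨(a ::ₘ A, B), by simp [Multiset.disjSum]⟩
      · exact ⟨(A, b ::ₘ B), by simp [Multiset.disjSum]⟩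

theorem eulerSum_sumElim (w : α → ℝ≥0∞) (v : β → ℝ≥0∞) :
    eulerSum (Sum.elim w v) = eulerSum w * eulerSum v := by
  rw [eulerSum, ← (Equiv.ofBijective _ disjSum_bijective).tsum_eq, ENNReal.tsum_prod', eulerSum,
    ← ENNReal.tsum_mul_right]
  refine tsum_congr fun A ↦ ?_
  rw [eulerSum, ← ENNReal.tsum_mul_left]
  refine tsum_congr fun B ↦ ?_
  simp [Multiset.disjSum, Function.comp_def]

theorem eulerSum_ne_top_of_unique [Unique α] {w : α → ℝ≥0∞} (hw : ∀ a, w a < 1) :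
    eulerSum w ≠ ∞ := by
  have surjective : Function.Surjective fun n : ℕ ↦ Multiset.replicate n (default : α) := fun A ↦
    ⟨A.card, (Multiset.eq_replicate_card.mpr fun a _ ↦ Unique.eq_default a).symm⟩
  have geometric : ∑' n : ℕ, w default ^ n ≠ ∞ := by
    rw [ENNReal.tsum_geometric, ENNReal.inv_ne_top]
    exact (tsub_pos_of_lt (hw default)).ne'
  refine ne_top_of_le_ne_top geometric ?_
  simpa [eulerSum] using ENNReal.tsum_le_tsum_comp_of_surjective surjective
    fun A : Multiset α ↦ (A.map w).prod

theorem eulerSum_ne_top_of_finite [Finite α] {w : α → ℝ≥0∞} (hw : ∀ a, w a < 1) :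
    eulerSum w ≠ ∞ := by
  induction α using Finite.induction_empty_option with
  | @of_equiv α β e ih =>
    exact ne_top_of_le_ne_top (ih fun a ↦ hw (e a))
      (eulerSum_le_of_injective e.symm.injective fun b ↦ by simp)
  | h_empty => simp [eulerSum, Subsingleton.elim (default : Multiset PEmpty) 0]
  | @h_option α _ ih =>
    refine ne_top_of_le_ne_top (ENNReal.mul_ne_top (ih fun a ↦ hw (some a))
      (eulerSum_ne_top_of_unique fun _ : Unit ↦ hw none)) ?_
    rw [← eulerSum_sumElim]
    refine eulerSum_le_of_injective (Equiv.optionEquivSumPUnit α).injective fun a ↦ ?_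
    cases a <;> simp

variable (K : Type*) [Field K] [NumberField K]

/-- The weight `N(P)^{-s}` of a prime in the Dedekind zeta function. -/
noncomputable def primeWeight (s : ℝ) (P : HeightOneSpectrum (𝓞 K)) : ℝ≥0∞ :=
  (Ideal.absNorm P.asIdeal : ℝ≥0∞) ^ (-s)

variable {K}

theorem one_lt_absNorm (P : HeightOneSpectrum (𝓞 K)) : 1 < Ideal.absNorm P.asIdeal := by
  have ne_zero : Ideal.absNorm P.asIdeal ≠ 0 := by
    rw [Ne, Ideal.absNorm_eq_zero_iff]
    exact P.ne_bot
  have ne_one : Ideal.absNorm P.asIdeal ≠ 1 := by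
    rw [Ne, Ideal.absNorm_eq_one_iff]
    exact P.isPrime.ne_top
  lia

theorem primeWeight_lt_one {s : ℝ} (hs : 0 < s) (P : HeightOneSpectrum (𝓞 K)) :
    primeWeight K s P < 1 :=
  ENNReal.rpow_lt_one_of_one_lt_of_neg (by exact_mod_cast one_lt_absNorm P) (by linarith)

theorem primeWeight_anti (P : HeightOneSpectrum (𝓞 K)) : Antitone fun s ↦ primeWeight K s P :=
  fun _ _ hst ↦ ENNReal.rpow_le_rpow_of_exponent_le
    (by exact_mod_cast (one_lt_absNorm P).le) (neg_le_neg hst)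

theorem primeWeight_le_of_absNorm_le {F : Type*} [Field F] [NumberField F] {s : ℝ} (hs : 0 ≤ s)
    {P : HeightOneSpectrum (𝓞 K)} {Q : HeightOneSpectrum (𝓞 F)}
    (h : Ideal.absNorm Q.asIdeal ≤ Ideal.absNorm P.asIdeal) :
    primeWeight K s P ≤ primeWeight F s Q := by
  rw [primeWeight, primeWeight, ENNReal.rpow_neg, ENNReal.rpow_neg, ENNReal.inv_le_inv]
  exact ENNReal.rpow_le_rpow (by exact_mod_cast h) hs

theorem prod_map_primeWeight (s : ℝ) (A : Multiset (HeightOneSpectrum (𝓞 K))) :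
    (A.map (primeWeight K s)).prod =
      (Ideal.absNorm (A.map HeightOneSpectrum.asIdeal).prod : ℝ≥0∞) ^ (-s) := by
  induction A using Multiset.induction_on with
  | empty => simp
  | cons P A ih =>
    rw [Multiset.map_cons, Multiset.prod_cons, ih, Multiset.map_cons, Multiset.prod_cons, map_mul,
      Nat.cast_mul, primeWeight, ENNReal.mul_rpow_of_ne_top (by simp) (by simp)]

theorem prod_map_asIdeal_injective :
    Function.Injective fun A : Multiset (HeightOneSpectrum (𝓞 K)) ↦
      (A.map HeightOneSpectrum.asIdeal).prod := by
  intro A B h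
  have factors_eq (A : Multiset (HeightOneSpectrum (𝓞 K))) :
      UniqueFactorizationMonoid.normalizedFactors (A.map HeightOneSpectrum.asIdeal).prod =
        A.map HeightOneSpectrum.asIdeal := by
    rw [UniqueFactorizationMonoid.normalizedFactors_prod_eq]
    · simp
    · intro I hI
      obtain ⟨P, -, rfl⟩ := Multiset.mem_map.mp hI
      exact P.irreducible
  refine Multiset.map_injective (fun _ _ ↦ HeightOneSpectrum.ext) ?_
  rw [← factors_eq A, ← factors_eq B]
  exact congrArg _ h

theorem exists_prod_map_asIdeal_eq {I : Ideal (𝓞 K)} (hI : I ≠ ⊥) :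
    ∃ A : Multiset (HeightOneSpectrum (𝓞 K)), (A.map HeightOneSpectrum.asIdeal).prod = I := by
  induction I using UniqueFactorizationMonoid.induction_on_prime with
  | h₁ => exact absurd rfl hI
  | h₂ I hunit => exact ⟨0, by simpa using (Ideal.isUnit_iff.mp hunit).symm⟩
  | h₃ I P _ hP ih =>
    obtain ⟨A, rfl⟩ := ih (right_ne_zero_of_mul hI)
    exact ⟨⟨P, Ideal.isPrime_of_prime hP, hP.ne_zero⟩ ::ₘ A, by simp⟩

theorem card_prod_absNorm_eq {n : ℕ} (hn : n ≠ 0) :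
    ENat.card {A : Multiset (HeightOneSpectrum (𝓞 K)) //
      Ideal.absNorm (A.map HeightOneSpectrum.asIdeal).prod = n} =
    Nat.card {I : Ideal (𝓞 K) // Ideal.absNorm I = n} := by
  have : Finite {I : Ideal (𝓞 K) // Ideal.absNorm I = n} := Ideal.finite_setOfPred_absNorm_eq n
  rw [← ENat.card_eq_coe_natCard]
  refine ENat.card_congr (Equiv.ofBijective (fun A ↦ ⟨_, A.2⟩)
    ⟨fun A B h ↦ Subtype.ext (prod_map_asIdeal_injective (congrArg Subtype.val h)), ?_⟩)
  rintro ⟨I, rfl⟩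
  obtain ⟨A, rfl⟩ := exists_prod_map_asIdeal_eq (I := I) fun h ↦ hn (by simp [h])
  exact ⟨⟨A, rfl⟩, rfl⟩

theorem eulerSum_primeWeight {s : ℝ} :
    eulerSum (primeWeight K s) =
      ∑' n : ℕ, ENNReal.ofReal ‖LSeries.term
        (fun n ↦ (Nat.card {I : Ideal (𝓞 K) // Ideal.absNorm I = n} : ℂ)) s n‖ := by
  rw [eulerSum, ← (Equiv.sigmaFiberEquiv fun A : Multiset (HeightOneSpectrum (𝓞 K)) ↦
    Ideal.absNorm (A.map HeightOneSpectrum.asIdeal).prod).tsum_eq, ENNReal.tsum_sigma']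
  refine tsum_congr fun n ↦ ?_
  have fiber_weight (A : {A : Multiset (HeightOneSpectrum (𝓞 K)) //
      Ideal.absNorm (A.map HeightOneSpectrum.asIdeal).prod = n}) :
      (A.1.map (primeWeight K s)).prod = (n : ℝ≥0∞) ^ (-s) := by
    rw [prod_map_primeWeight, A.2]
  simp only [Equiv.sigmaFiberEquiv_apply, fiber_weight, ENNReal.tsum_const]
  rcases eq_or_ne n 0 with rfl | hn
  · have : IsEmpty {A : Multiset (HeightOneSpectrum (𝓞 K)) //
        Ideal.absNorm (A.map HeightOneSpectrum.asIdeal).prod = 0} := by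
      refine ⟨fun A ↦ ?_⟩
      have := A.2
      simp [Ideal.absNorm_eq_zero_iff, HeightOneSpectrum.ne_bot] at this
    rw [(ENat.card_eq_zero_iff_empty _).mpr this]
    simp
  · rw [card_prod_absNorm_eq hn, LSeries.term_of_ne_zero hn, norm_div, Complex.norm_natCast,
      Complex.norm_natCast_cpow_of_pos (Nat.pos_of_ne_zero hn), Complex.ofReal_re,
      div_eq_mul_inv, ← Real.rpow_neg (Nat.cast_nonneg n), ENNReal.ofReal_mul (Nat.cast_nonneg _),
      ENNReal.ofReal_natCast, ← ENNReal.ofReal_rpow_of_pos (by positivity), ENNReal.ofReal_natCast]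
    simp

theorem dedekindZeta_eq_tsum_norm (s : ℝ) :
    dedekindZeta K s = ((∑' n : ℕ, ‖LSeries.term
      (fun n ↦ (Nat.card {I : Ideal (𝓞 K) // Ideal.absNorm I = n} : ℂ)) s n‖ : ℝ) : ℂ) := by
  rw [dedekindZeta, LSeries, Complex.ofReal_tsum]
  exact tsum_congr fun n ↦
    Complex.eq_coe_norm_of_nonneg (LSeries.term_nonneg (by positivity) s)

theorem tendsto_sub_one_mul_eulerSum (K : Type*) [Field K] [NumberField K] :
    Tendsto (fun s : ℝ ↦ ENNReal.ofReal (s - 1) * eulerSum (primeWeight K s)) (𝓝[>] 1)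
      (𝓝 (ENNReal.ofReal (dedekindZeta_residue K))) := by
  set a : ℝ → ℕ → ℝ := fun s n ↦ ‖LSeries.term
    (fun n ↦ (Nat.card {I : Ideal (𝓞 K) // Ideal.absNorm I = n} : ℂ)) s n‖
  have tendsto_real : Tendsto (fun s : ℝ ↦ (s - 1) * ∑' n, a s n) (𝓝[>] 1)
      (𝓝 (dedekindZeta_residue K)) := by
    have := (Complex.continuous_re.tendsto _).comp (tendsto_sub_one_mul_dedekindZeta_nhdsGT K)
    refine (this.congr fun s ↦ ?_)
    rw [Function.comp_apply, dedekindZeta_eq_tsum_norm]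
    norm_cast
  refine (ENNReal.tendsto_ofReal tendsto_real).congr' ?_
  filter_upwards [tendsto_real.eventually_const_lt (dedekindZeta_residue_pos K),
    self_mem_nhdsWithin] with s pos (hs : 1 < s)
  have summable : Summable (a s) := by
    by_contra h
    simp [tsum_eq_zero_of_not_summable h] at pos
  rw [ENNReal.ofReal_mul (by linarith), eulerSum_primeWeight,
    ENNReal.ofReal_tsum_of_nonneg (fun n ↦ norm_nonneg _) summable]

theorem eulerSum_primeWeight_le (T : Set (HeightOneSpectrum (𝓞 K))) {s : ℝ} (hs : 1 ≤ s) :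
    eulerSum (primeWeight K s) ≤
      eulerSum (fun P : T ↦ primeWeight K 1 P) *
        eulerSum (fun P : (Tᶜ : Set _) ↦ primeWeight K s P) := by
  classical
  rw [← eulerSum_sumElim]
  refine eulerSum_le_of_injective (Equiv.Set.sumCompl T).symm.injective fun P ↦ ?_
  by_cases hP : P ∈ T
  · rw [Equiv.Set.sumCompl_symm_apply_of_mem hP]
    exact primeWeight_anti P hs
  · rw [Equiv.Set.sumCompl_symm_apply_of_notMem hP, Sum.elim_inr]

/-- Otherwise `ζ_F` would grow at least as fast as `ζ_K²` near `s = 1`. -/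
theorem not_exists_injective_sum_of_absNorm_le (K F : Type*) [Field K] [NumberField K] [Field F]
    [NumberField F] {T : Set (HeightOneSpectrum (𝓞 K))} (hT : T.Finite)
    {f g : (Tᶜ : Set (HeightOneSpectrum (𝓞 K))) → HeightOneSpectrum (𝓞 F)}
    (hfg : Function.Injective (Sum.elim f g))
    (hf : ∀ P, Ideal.absNorm (f P).asIdeal ≤ Ideal.absNorm P.1.asIdeal)
    (hg : ∀ P, Ideal.absNorm (g P).asIdeal ≤ Ideal.absNorm P.1.asIdeal) : False := by
  have : Finite T := hT
  set B := eulerSum fun P : T ↦ primeWeight K 1 P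
  have B_ne_top : B ≠ ∞ := eulerSum_ne_top_of_finite fun P ↦ primeWeight_lt_one one_pos P.1
  have sq_le (s : ℝ) (hs : 1 ≤ s) :
      eulerSum (primeWeight K s) ^ 2 ≤ B ^ 2 * eulerSum (primeWeight F s) := by
    refine (pow_le_pow_left₀ zero_le (eulerSum_primeWeight_le T hs) 2).trans ?_
    rw [mul_pow]
    gcongr
    rw [sq, ← eulerSum_sumElim]
    refine eulerSum_le_of_injective hfg fun P ↦ ?_
    rcases P with P | P
    · exact primeWeight_le_of_absNorm_le (by linarith) (hf P)
    · exact primeWeight_le_of_absNorm_le (by linarith) (hg P)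
  have limit_le : ENNReal.ofReal (dedekindZeta_residue K) ^ 2 ≤
      ENNReal.ofReal (1 - 1) * (B ^ 2 * ENNReal.ofReal (dedekindZeta_residue F)) := by
    refine le_of_tendsto_of_tendsto (ENNReal.Tendsto.pow (tendsto_sub_one_mul_eulerSum K))
      (ENNReal.Tendsto.mul (ENNReal.tendsto_ofReal
        ((tendsto_id.sub_const (1 : ℝ)).mono_left nhdsWithin_le_nhds))
        (.inr (ENNReal.mul_ne_top (by simp [B_ne_top]) (by simp)))
        (ENNReal.Tendsto.const_mul (tendsto_sub_one_mul_eulerSum F) (by simp [B_ne_top]))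
        (by simp)) ?_
    filter_upwards [self_mem_nhdsWithin] with s (hs : 1 < s)
    calc (ENNReal.ofReal (s - 1) * eulerSum (primeWeight K s)) ^ 2
        ≤ ENNReal.ofReal (s - 1) ^ 2 * (B ^ 2 * eulerSum (primeWeight F s)) := by
          rw [mul_pow]
          gcongr
          exact sq_le s hs.le
      _ = _ := by
          rw [id]
          ring
  simp [(dedekindZeta_residue_pos K).not_ge] at limit_le

end Density

section KummerDensity

open Polynomial
open scoped Pointwise

theorem exists_pow_eq_one_sub_mul_mem {A B : Type*} [CommRing A] [CommRing B] [IsDomain B]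
    {j : A →+* B} {n : ℕ} (hn : 0 < n) {ζ : A} (hζ : IsPrimitiveRoot (j ζ) n) {y : A} {θ : B}
    {Q : Ideal B} [hQ : Q.IsPrime] (h : j y ^ n - θ ^ n ∈ Q) :
    ∃ z : A, j z ^ n = 1 ∧ j y - j z * θ ∈ Q := by
  have : NeZero n := ⟨hn.ne'⟩
  rw [hζ.pow_sub_pow_eq_prod_sub_mul _ _ hn, hQ.prod_mem_iff] at h
  obtain ⟨η, hη, hηQ⟩ := h
  obtain ⟨i, -, rfl⟩ := hζ.eq_pow_of_pow_eq_one ((mem_nthRootsFinset hn _).1 hη)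
  exact ⟨ζ ^ i, by rw [map_pow, pow_right_comm, hζ.pow_eq_one, one_pow], by rwa [map_pow]⟩

variable {K F : Type*} [Field K] [Field F] [Algebra K F]

theorem stabilizer_eq_bot_of_pow_sub_mem {n : ℕ} (hn : 0 < n) {ζ : 𝓞 K}
    (hζ : IsPrimitiveRoot ζ n) {M y : 𝓞 K} {θ : 𝓞 F} (hθ : θ ^ n = algebraMap (𝓞 K) (𝓞 F) M)
    (adjoin_eq_top : Algebra.adjoin K {(θ : F)} = ⊤) (Q : Ideal (𝓞 F)) [hQ : Q.IsPrime]
    (hy : algebraMap (𝓞 K) (𝓞 F) (y ^ n - M) ∈ Q) (hM : algebraMap (𝓞 K) (𝓞 F) (n * M) ∉ Q) :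
    MulAction.stabilizer Gal(F/K) Q = ⊥ := by
  set j := algebraMap (𝓞 K) (𝓞 F)
  have hjζ : IsPrimitiveRoot (j ζ) n :=
    hζ.map_of_injective (RingOfIntegers.algebraMap.injective K F)
  have hθQ : θ ∉ Q := fun h ↦ hM <| by
    rw [map_mul, ← hθ]
    exact Q.mul_mem_left _ (Ideal.pow_mem_of_mem Q h n hn)
  obtain ⟨z, hz, hzθ⟩ : ∃ z : 𝓞 K, j z ^ n = 1 ∧ j y - j z * θ ∈ Q :=
    exists_pow_eq_one_sub_mul_mem hn hjζ (by rwa [hθ, ← map_pow, ← map_sub])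
  have hzQ : j z ∉ Q := fun h ↦ hQ.ne_top <| (Ideal.eq_top_iff_one Q).2 <| by
    rw [← hz]
    exact Ideal.pow_mem_of_mem Q h n hn
  refine eq_bot_iff.2 fun σ hσ ↦ Subgroup.mem_bot.2 ?_
  have smul_j (x : 𝓞 K) : σ • j x = j x := RingOfIntegers.ext (σ.commutes x)
  obtain ⟨ω, hω, hσθ⟩ : ∃ ω ∈ nthRootsFinset n (1 : 𝓞 F), σ • θ - ω * θ = 0 := by
    rw [← Finset.prod_eq_zero_iff, ← hjζ.pow_sub_pow_eq_prod_sub_mul _ _ hn, ← smul_pow', hθ,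
      smul_j, sub_self]
  rw [sub_eq_zero] at hσθ
  have conj_mem : j y - j z * (ω * θ) ∈ Q := by
    rw [← hσθ, ← smul_j y, ← smul_j z, ← smul_mul', ← smul_sub,
      ← MulAction.mem_stabilizer_iff.1 hσ]
    exact Ideal.smul_mem_pointwise_smul σ _ Q hzθ
  have ω_eq_one : ω = 1 := by
    by_contra hω1
    have mem : (ω - 1) * (j z * θ) ∈ Q := by
      convert Q.sub_mem hzθ conj_mem using 1
      ring
    have hω1Q : ω - 1 ∈ Q := (hQ.mem_or_mem mem).resolve_right (hQ.mul_notMem hzQ hθQ)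
    refine hM ?_
    rw [map_mul, map_natCast]
    exact Q.mul_mem_right _ (Q.mem_of_dvd
      (sub_one_dvd_natCast_of_pow_eq_one ((mem_nthRootsFinset hn _).1 hω) hω1) hω1Q)
  have : (σ : F →ₐ[K] F) = AlgHom.id K F := AlgHom.ext_of_adjoin_eq_top adjoin_eq_top <| by
    rintro _ rfl
    rw [ω_eq_one, one_mul] at hσθ
    exact congrArg (algebraMap (𝓞 F) F) hσθ
  exact AlgEquiv.ext fun x ↦ DFunLike.congr_fun this x

variable [NumberField K] [NumberField F]

theorem absNorm_eq_of_stabilizer_eq_bot [IsGalois K F] {P : Ideal (𝓞 K)} (hP : P ≠ ⊥) [P.IsPrime]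
    (Q : Ideal (𝓞 F)) [Q.IsPrime] [Q.LiesOver P] (h : MulAction.stabilizer Gal(F/K) Q = ⊥) :
    Ideal.absNorm Q = Ideal.absNorm P := by
  have : P.IsMaximal := Ideal.IsPrime.isMaximal inferInstance hP
  have : Q.IsMaximal := Ideal.IsMaximal.of_liesOver_isMaximal Q P
  have ramification_mul_inertia := Ideal.card_stabilizer_eq (G := Gal(F/K)) P Q
  rw [h, Subgroup.card_bot] at ramification_mul_inertia
  have inertia_eq_one := Nat.eq_one_of_mul_eq_one_left ramification_mul_inertia.symm
  rw [Ideal.inertiaDegIn_eq_inertiaDeg P Q Gal(F/K), Ideal.inertiaDeg_eq_of_isMaximal P,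
    ← Ideal.inertiaDeg'_algebraMap] at inertia_eq_one
  rw [Ideal.absNorm_eq_pow_inertiaDeg'_of_liesOver Q P ‹_› hP, inertia_eq_one, pow_one]

theorem finrank_eq_one_of_stabilizer_eq_bot [IsGalois K F]
    {T : Set (HeightOneSpectrum (𝓞 K))} (hT : T.Finite)
    (h : ∀ P ∉ T, ∀ Q : Ideal (𝓞 F), Q.IsPrime → Q.LiesOver P.asIdeal →
      MulAction.stabilizer Gal(F/K) Q = ⊥) :
    Module.finrank K F = 1 := by
  by_contra finrank_ne_one
  obtain ⟨σ, hσ⟩ : ∃ σ : Gal(F/K), σ ≠ 1 := by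
    by_contra! h
    have : Subsingleton Gal(F/K) := subsingleton_of_forall_eq 1 h
    exact finrank_ne_one (by rw [← IsGalois.card_aut_eq_finrank, Nat.card_unique])
  have exists_over (P : HeightOneSpectrum (𝓞 K)) :
      ∃ Q : HeightOneSpectrum (𝓞 F), Q.asIdeal.LiesOver P.asIdeal := by
    obtain ⟨Q, hQ, hQP⟩ := (inferInstance : Nonempty (P.asIdeal.primesOver (𝓞 F)))
    exact ⟨⟨Q, hQ, Ideal.ne_bot_of_liesOver_of_ne_bot P.ne_bot Q⟩, hQP⟩
  choose Q hQ using exists_over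
  let Q' (P : HeightOneSpectrum (𝓞 K)) : HeightOneSpectrum (𝓞 F) :=
    ⟨σ • (Q P).asIdeal, inferInstance,
      Ideal.ne_bot_of_liesOver_of_ne_bot (p := P.asIdeal) P.ne_bot _⟩
  have hQ' (P) : (Q' P).asIdeal.LiesOver P.asIdeal :=
    inferInstanceAs ((σ • (Q P).asIdeal).LiesOver P.asIdeal)
  have eq_of_over {P P' : HeightOneSpectrum (𝓞 K)} {R R' : HeightOneSpectrum (𝓞 F)}
      (hR : R.asIdeal.LiesOver P.asIdeal) (hR' : R'.asIdeal.LiesOver P'.asIdeal) (e : R = R') :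
      P = P' :=
    HeightOneSpectrum.ext (by rw [hR.over, hR'.over, e])
  have ne_conj (P : (Tᶜ : Set (HeightOneSpectrum (𝓞 K)))) : Q P ≠ Q' P := fun e ↦ hσ <| by
    have mem_stabilizer : σ ∈ MulAction.stabilizer Gal(F/K) (Q P).asIdeal :=
      (congrArg HeightOneSpectrum.asIdeal e).symm
    rwa [h P P.2 _ inferInstance (hQ P), Subgroup.mem_bot] at mem_stabilizer
  refine not_exists_injective_sum_of_absNorm_le K F hT (f := fun P ↦ Q P) (g := fun P ↦ Q' P)
    (Function.Injective.sumElim ?_ ?_ ?_) ?_ ?_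
  · exact fun P P' e ↦ Subtype.ext (eq_of_over (hQ P) (hQ P') e)
  · exact fun P P' e ↦ Subtype.ext (eq_of_over (hQ' P) (hQ' P') e)
  · intro P P' e
    obtain rfl : P = P' := Subtype.ext (eq_of_over (hQ P) (hQ' P') e)
    exact ne_conj P e
  · exact fun P ↦ (absNorm_eq_of_stabilizer_eq_bot P.1.ne_bot _
      (h P P.2 _ inferInstance (hQ P))).le
  · exact fun P ↦ (absNorm_eq_of_stabilizer_eq_bot P.1.ne_bot _
      (h P P.2 _ (Q' P).isPrime (hQ' P))).le

theorem exists_pow_eq_of_forall_pow_sub_mem {p : ℕ} (hp : p.Prime) {ζ : 𝓞 K}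
    (hζ : IsPrimitiveRoot ζ p) {M : 𝓞 K} (hM : M ≠ 0)
    {T : Set (HeightOneSpectrum (𝓞 K))} (hT : T.Finite)
    (h : ∀ P ∉ T, ∃ y : 𝓞 K, y ^ p - M ∈ P.asIdeal) :
    ∃ β : K, β ^ p = M := by
  by_contra! not_pow
  have irreducible : Irreducible (X ^ p - C (M : K)) := X_pow_sub_C_irreducible_of_prime hp not_pow
  have : Fact (Irreducible (X ^ p - C (M : K))) := ⟨irreducible⟩
  let F := AdjoinRoot (X ^ p - C (M : K))
  have roots_nonempty : (primitiveRoots p K).Nonempty :=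
    ⟨ζ, (mem_primitiveRoots hp.pos).2 (hζ.map_of_injective RingOfIntegers.coe_injective)⟩
  have : IsSplittingField K F (X ^ p - C (M : K)) :=
    isSplittingField_AdjoinRoot_X_pow_sub_C roots_nonempty irreducible
  have : FiniteDimensional K F := IsSplittingField.finiteDimensional F (X ^ p - C (M : K))
  have : NumberField F := NumberField.of_module_finite K F
  have : IsGalois K F := isGalois_of_isSplittingField_X_pow_sub_C roots_nonempty irreducible F
  have root_pow : AdjoinRoot.root (X ^ p - C (M : K)) ^ p = algebraMap K F M :=
    root_X_pow_sub_C_pow p (M : K)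
  obtain ⟨θ, hθ⟩ : ∃ θ : 𝓞 F, (θ : F) = AdjoinRoot.root (X ^ p - C (M : K)) :=
    ⟨⟨_, IsIntegral.of_pow hp.pos (root_pow ▸ M.isIntegral_coe.algebraMap)⟩, rfl⟩
  have bad_finite : {P : HeightOneSpectrum (𝓞 K) | P.asIdeal ∣ Ideal.span {p * M}}.Finite :=
    Ideal.finite_factors (by simp [hp.ne_zero, hM])
  refine hp.ne_one ?_
  rw [← finrank_of_isSplittingField_X_pow_sub_C roots_nonempty irreducible F]
  refine finrank_eq_one_of_stabilizer_eq_bot (hT.union bad_finite) fun P hP Q hQ hQP ↦ ?_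
  obtain ⟨hPT, hpM⟩ : P ∉ T ∧ ↑p * M ∉ P.asIdeal := by simpa [Ideal.dvd_span_singleton] using hP
  obtain ⟨y, hy⟩ := h P hPT
  refine stabilizer_eq_bot_of_pow_sub_mem hp.pos hζ (M := M) (y := y) (θ := θ) ?_ ?_ Q ?_ ?_
  · exact RingOfIntegers.ext ((congrArg (· ^ p) hθ).trans root_pow)
  · rw [hθ, AdjoinRoot.adjoinRoot_eq_top]
  · rwa [← Ideal.mem_of_liesOver Q P.asIdeal]
  · rwa [← Ideal.mem_of_liesOver Q P.asIdeal]

end KummerDensity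

section ResidueCharacters

variable {O κ : Type*} [CommRing O] [Field κ] {n : ℕ} {π : O →+* κ}
  {χ : MulChar κ O}

theorem exists_generator_pow_mul_div_eq_one_iff [Finite κ] (hn : n ∣ Nat.card κ - 1) :
    ∃ g : κˣ, (∀ x, x ∈ Subgroup.zpowers g) ∧
      ∀ l, g ^ (l * ((Nat.card κ - 1) / n)) = 1 ↔ n ∣ l := by
  obtain ⟨g, hg⟩ := IsCyclic.exists_generator (α := κˣ)
  refine ⟨g, hg, fun l ↦ ?_⟩
  have one_lt_card : 1 < Nat.card κ := Finite.one_lt_card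
  obtain ⟨e, he⟩ := hn
  have n_pos : 0 < n := Nat.pos_of_ne_zero fun h ↦ by simp [h] at he; omega
  have e_pos : 0 < e := Nat.pos_of_ne_zero fun h ↦ by simp [h] at he; omega
  rw [← orderOf_dvd_iff_pow_eq_one, orderOf_eq_card_of_forall_mem_zpowers hg, Nat.card_units, he,
    Nat.mul_div_cancel_left e n_pos, Nat.mul_dvd_mul_iff_right e_pos]

/-- `χ` is the `n`-th power residue character of `O` modulo the kernel of `π : O →+* κ`: its values
are zero and `n`-th roots of unity, and it satisfies Euler's criterion. -/
structure IsPowResidueChar (n : ℕ) (π : O →+* κ) (χ : MulChar κ O) : Prop where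
  dvd_card_sub_one : n ∣ Nat.card κ - 1
  pow_eq_one : χ ^ n = 1
  map_apply : ∀ x, π (χ x) = x ^ ((Nat.card κ - 1) / n)

namespace IsPowResidueChar

theorem natCast_ne_zero [Finite κ] (h : IsPowResidueChar n π χ) : (n : κ) ≠ 0 := fun hn ↦ by
  have := Fintype.ofFinite κ
  have card_cast : ((Nat.card κ - 1 : ℕ) : κ) = -1 := by
    rw [Nat.cast_sub Finite.one_lt_card.le, Nat.card_eq_fintype_card,
      FiniteField.cast_card_eq_zero, zero_sub, Nat.cast_one]
  obtain ⟨e, he⟩ := h.dvd_card_sub_one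
  rw [he, Nat.cast_mul, hn, zero_mul] at card_cast
  exact one_ne_zero (neg_eq_zero.1 card_cast.symm)

theorem apply_pow (h : IsPowResidueChar n π χ) {x : κ} (hx : x ≠ 0) : χ x ^ n = 1 := by
  lift x to κˣ using hx.isUnit
  rw [← MulChar.pow_apply_coe, h.pow_eq_one, MulChar.one_apply_coe]

theorem orderOf_eq [Finite κ] (h : IsPowResidueChar n π χ) : orderOf χ = n := by
  refine Nat.dvd_antisymm (orderOf_dvd_of_pow_eq_one h.pow_eq_one) ?_
  obtain ⟨g, -, pow_eq_one_iff⟩ := exists_generator_pow_mul_div_eq_one_iff h.dvd_card_sub_one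
  refine (pow_eq_one_iff _).1 (Units.ext ?_)
  rw [Units.val_pow_eq_pow_val, pow_mul', ← h.map_apply, ← map_pow, ← MulChar.pow_apply_coe,
    pow_orderOf_eq_one, MulChar.one_apply_coe, map_one, Units.val_one]

theorem exists_pow_eq [Nontrivial O] [Finite κ] (h : IsPowResidueChar n π χ) {x : κ}
    (hx : χ x = 1) : ∃ y : κ, y ^ n = x := by
  have hx0 : x ≠ 0 := by
    rintro rfl
    exact zero_ne_one (χ.map_zero.symm.trans hx)
  obtain ⟨g, hg, pow_eq_one_iff⟩ := exists_generator_pow_mul_div_eq_one_iff h.dvd_card_sub_one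
  obtain ⟨l, hl⟩ := mem_powers_iff_mem_zpowers.2 (hg (Units.mk0 x hx0))
  have hlx : (g : κ) ^ l = x := by simpa using congrArg Units.val hl
  obtain ⟨i, rfl⟩ : n ∣ l := (pow_eq_one_iff l).1 <| Units.ext <| by
    rw [Units.val_pow_eq_pow_val, pow_mul, hlx, ← h.map_apply, hx, map_one, Units.val_one]
  exact ⟨g ^ i, by rw [← pow_mul', hlx]⟩

/-- Expanding `x ^ e * (1 - x) ^ e` with `e = (#κ - 1) / n`, only powers of `x` with exponent
less than `#κ - 1` appear, and these sum to zero over `κ`. -/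
theorem map_jacobiSum [Fintype κ] (h : IsPowResidueChar n π χ) (hn : 2 < n) :
    π (jacobiSum χ χ) = 0 := by
  set e := (Nat.card κ - 1) / n with he
  have he_mul : e * n = Nat.card κ - 1 := Nat.div_mul_cancel h.dvd_card_sub_one
  have expand (x : κ) : π (χ x * χ (1 - x)) =
      ∑ k ∈ Finset.range (e + 1), (-1) ^ (k + e) * (e.choose k : κ) * x ^ (e + (e - k)) := by
    rw [map_mul, h.map_apply, h.map_apply, ← he, sub_pow, Finset.mul_sum]
    refine Finset.sum_congr rfl fun k _ ↦ ?_
    rw [one_pow, pow_add x]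
    ring
  rw [jacobiSum, map_sum, Finset.sum_congr rfl fun x _ ↦ expand x, Finset.sum_comm]
  refine Finset.sum_eq_zero fun k _ ↦ ?_
  have one_lt_card : 1 < Nat.card κ := Finite.one_lt_card
  rw [← Finset.mul_sum, FiniteField.sum_pow_lt_card_sub_one, mul_zero]
  rw [← Nat.card_eq_fintype_card]
  have : e * 3 ≤ e * n := Nat.mul_le_mul_left e hn
  omega

end IsPowResidueChar

variable [IsDomain O]

theorem eq_of_pow_eq_one_of_map_eq (π : O →+* κ) (hn : (n : κ) ≠ 0) {a b : O} (ha : a ^ n = 1)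
    (hb : b ^ n = 1) (h : π a = π b) : a = b := by
  have hn0 : n ≠ 0 := by rintro rfl; exact hn Nat.cast_zero
  have b_mul : b * b ^ (n - 1) = 1 := by rw [mul_pow_sub_one hn0, hb]
  suffices a * b ^ (n - 1) = 1 by
    calc a = a * b ^ (n - 1) * b := by rw [mul_assoc, mul_comm _ b, b_mul, mul_one]
      _ = b := by rw [this, one_mul]
  by_contra ne_one
  have pow_eq_one : (a * b ^ (n - 1)) ^ n = 1 := by
    rw [mul_pow, pow_right_comm, hb, one_pow, ha, mul_one]
  have map_sub_one : π (a * b ^ (n - 1) - 1) = 0 := by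
    rw [map_sub, map_mul, h, ← map_mul, b_mul, sub_self]
  have dvd := map_dvd π (sub_one_dvd_natCast_of_pow_eq_one pow_eq_one ne_one)
  rw [map_sub_one, map_natCast, zero_dvd_iff] at dvd
  exact hn dvd

theorem isPrimitiveRoot_map_of_natCast_ne_zero {ζ : O} (hζ : IsPrimitiveRoot ζ n) (π : O →+* κ)
    (hn : (n : κ) ≠ 0) : IsPrimitiveRoot (π ζ) n := by
  have n_pos : 0 < n := Nat.pos_of_ne_zero fun h ↦ hn (by rw [h, Nat.cast_zero])
  refine IsPrimitiveRoot.mk_of_lt _ n_pos (by rw [← map_pow, hζ.pow_eq_one, map_one])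
    fun l hl hln h ↦ hζ.pow_ne_one_of_pos_of_lt hl.ne' hln ?_
  refine eq_of_pow_eq_one_of_map_eq π hn ?_ (one_pow n) (by rw [map_pow, h, map_one])
  rw [pow_right_comm, hζ.pow_eq_one, one_pow]

theorem exists_isPowResidueChar [Finite κ] {ζ : O} (hζ : IsPrimitiveRoot ζ n) (π : O →+* κ)
    (hn : (n : κ) ≠ 0) : ∃ χ : MulChar κ O, IsPowResidueChar n π χ := by
  classical
  have := Fintype.ofFinite κ
  have : NeZero n := ⟨fun h ↦ hn (by rw [h, Nat.cast_zero])⟩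
  have hπζ := isPrimitiveRoot_map_of_natCast_ne_zero hζ π hn
  have dvd_card : n ∣ Nat.card κ - 1 := hπζ.dvd_of_pow_eq_one _ <| by
    rw [Nat.card_eq_fintype_card, FiniteField.pow_card_sub_one_eq_one _ (hπζ.ne_zero NeZero.out)]
  obtain ⟨g, hg, pow_eq_one_iff⟩ := exists_generator_pow_mul_div_eq_one_iff dvd_card
  set e := (Nat.card κ - 1) / n
  obtain ⟨i, -, hi⟩ : ∃ i < n, π ζ ^ i = g ^ e := hπζ.eq_pow_of_pow_eq_one <| by
    rw [← pow_mul', ← Units.val_pow_eq_pow_val, (pow_eq_one_iff n).2 dvd_rfl, Units.val_one]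
  let μ : Oˣ := (hζ.isUnit NeZero.out).unit ^ i
  have μ_pow : μ ^ n = 1 := Units.ext <| by
    simp [μ, pow_right_comm _ i, hζ.pow_eq_one]
  have hμ : μ ∈ rootsOfUnity (Fintype.card κˣ) O := by
    rw [mem_rootsOfUnity, Fintype.card_units, ← Nat.card_eq_fintype_card,
      ← Nat.mul_div_cancel' dvd_card, pow_mul, μ_pow, one_pow]
  have apply_g := MulChar.ofRootOfUnity_spec hμ hg
  refine ⟨MulChar.ofRootOfUnity hμ hg, dvd_card, ?_, fun x ↦ ?_⟩
  · rw [MulChar.eq_iff hg, MulChar.pow_apply_coe, apply_g, MulChar.one_apply_coe]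
    rw [← Units.val_pow_eq_pow_val, μ_pow, Units.val_one]
  · rcases eq_or_ne x 0 with rfl | hx
    · have e_pos : 0 < e :=
        Nat.div_pos (Nat.le_of_dvd (Nat.sub_pos_of_lt Finite.one_lt_card) dvd_card) n.pos_of_neZero
      rw [MulChar.map_zero, map_zero, zero_pow e_pos.ne']
    · obtain ⟨l, hl⟩ := mem_powers_iff_mem_zpowers.2 (hg (Units.mk0 x hx))
      obtain rfl : (g : κ) ^ l = x := by simpa using congrArg Units.val hl
      rw [map_pow, apply_g, map_pow, pow_right_comm, ← hi]
      simp [μ]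

namespace IsPowResidueChar

theorem apply_eq_of_map_eq [Finite κ] (h : IsPowResidueChar n π χ) {x : κ} (hx : x ≠ 0) {z : O}
    (hz : z ^ n = 1) (hxz : x ^ ((Nat.card κ - 1) / n) = π z) : χ x = z :=
  eq_of_pow_eq_one_of_map_eq π h.natCast_ne_zero (h.apply_pow hx) hz (by rw [h.map_apply, hxz])

theorem apply_ringEquiv {κ' : Type*} [Field κ'] [Finite κ'] {π' : O →+* κ'} {χ' : MulChar κ' O}
    (h : IsPowResidueChar n π χ) (h' : IsPowResidueChar n π' χ') (g : O →+* O) (e : κ ≃+* κ')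
    (hge : ∀ x, e (π x) = π' (g x)) (x : κ) : χ' (e x) = g (χ x) := by
  rcases eq_or_ne x 0 with rfl | hx
  · rw [map_zero, MulChar.map_zero, MulChar.map_zero, map_zero]
  · refine h'.apply_eq_of_map_eq (by simpa using hx) (by rw [← map_pow, h.apply_pow hx, map_one]) ?_
    rw [← hge, h.map_apply, map_pow, Nat.card_congr e.toEquiv]

end IsPowResidueChar

theorem natCast_pow_sub_one_eq_one [Finite κ] {q d : ℕ} (hd : d ≠ 0) (hcard : Nat.card κ = q ^ d)
    {a : ℕ} (ha : (a : κ) ≠ 0) : (a : κ) ^ (q - 1) = 1 := by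
  have := Fintype.ofFinite κ
  obtain ⟨p, _, r, hp, hpr⟩ := FiniteField.card' κ
  have : Fact p.Prime := ⟨hp⟩
  have q_dvd : q ∣ p ^ (r : ℕ) := by
    rw [← hpr, ← Nat.card_eq_fintype_card, hcard]
    exact dvd_pow_self q hd
  obtain ⟨j, -, rfl⟩ := (Nat.dvd_prime_pow hp).1 q_dvd
  refine mul_right_cancel₀ ha ?_
  rw [pow_sub_one_mul (pow_ne_zero j hp.ne_zero), ← iterateFrobenius_def, map_natCast, one_mul]

theorem ringHomComp_eq_pow {R : Type*} [CommMonoid R] [NeZero n] {χ : MulChar R O}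
    (hχ : χ ^ n = 1) {ζ : O} (hζ : IsPrimitiveRoot ζ n) {g : O →+* O} {k : ℕ} (hg : g ζ = ζ ^ k) :
    χ.ringHomComp g = χ ^ k := by
  ext u
  have pow_eq_one : χ u ^ n = 1 := by
    rw [← MulChar.pow_apply_coe, hχ, MulChar.one_apply_coe]
  obtain ⟨i, -, hi⟩ := hζ.eq_pow_of_pow_eq_one pow_eq_one
  rw [MulChar.ringHomComp_apply, MulChar.pow_apply_coe, ← hi, map_pow, hg, pow_right_comm]

theorem orderOf_ringHomComp {R L : Type*} [CommMonoid R] [Field L] (χ : MulChar R O) (f : O →+* L)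
    (hχ : (orderOf χ : L) ≠ 0) : orderOf (χ.ringHomComp f) = orderOf χ := by
  refine orderOf_eq_orderOf_iff.2 fun l ↦ ⟨fun h ↦ MulChar.ext fun u ↦ ?_, fun h ↦ ?_⟩
  · have map_eq_one : f (χ u ^ l) = 1 := by
      rw [map_pow, ← MulChar.ringHomComp_apply, ← MulChar.pow_apply_coe, h, MulChar.one_apply_coe]
    rw [MulChar.pow_apply_coe, MulChar.one_apply_coe]
    refine eq_of_pow_eq_one_of_map_eq f hχ ?_ (one_pow _) (map_eq_one.trans (map_one f).symm)
    rw [pow_right_comm, ← MulChar.pow_apply_coe, pow_orderOf_eq_one, MulChar.one_apply_coe, one_pow]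
  · rw [MulChar.ringHomComp_pow, h, MulChar.ringHomComp_one]

theorem jacobiSum_mul_map_jacobiSum [CharZero O] [Fintype κ] (hχ : χ ≠ 1) (hχ' : χ * χ ≠ 1)
    {τ : O →+* O} (hτ : χ.ringHomComp τ = χ⁻¹) :
    jacobiSum χ χ * τ (jacobiSum χ χ) = Fintype.card κ := by
  have injective := IsFractionRing.injective O (FractionRing O)
  have ringChar_ne : ringChar (FractionRing O) ≠ ringChar κ := by
    rw [ringChar.eq_zero]
    exact (CharP.char_ne_zero_of_finite κ (ringChar κ)).symm
  have := jacobiSum_mul_jacobiSum_inv (χ := χ.ringHomComp (algebraMap O (FractionRing O)))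
    (φ := χ.ringHomComp (algebraMap O (FractionRing O))) ringChar_ne
    ((MulChar.ringHomComp_eq_one_iff injective).not.2 hχ)
    ((MulChar.ringHomComp_eq_one_iff injective).not.2 hχ)
    (by rwa [← MulChar.ringHomComp_mul, Ne, MulChar.ringHomComp_eq_one_iff injective])
  rw [MulChar.ringHomComp_inv, ← hτ, jacobiSum_ringHomComp, jacobiSum_ringHomComp,
    jacobiSum_ringHomComp, ← map_mul, ← map_natCast (algebraMap O (FractionRing O))] at this
  exact injective this

theorem natCast_card_ne_zero_of_ringChar_ne [Fintype κ] {F : Type*} [Field F]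
    (h : ringChar F ≠ ringChar κ) : (Fintype.card κ : F) ≠ 0 := fun card_eq_zero ↦ by
  obtain ⟨k, hp, hk⟩ := FiniteField.card κ (ringChar κ)
  rw [hk, Nat.cast_pow] at card_eq_zero
  rcases (Nat.dvd_prime hp).1 (ringChar.dvd (eq_zero_of_pow_eq_zero card_eq_zero)) with h1 | h2
  · exact CharP.ringChar_ne_one h1
  · exact h h2

theorem gaussSum_pow_prime_pow {L : Type*} [CommRing L] (p : ℕ) [Fact p.Prime] [CharP L p]
    [Fintype κ] (χ : MulChar κ L) (ψ : AddChar κ L) (k : ℕ) :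
    gaussSum χ ψ ^ p ^ k = gaussSum (χ ^ p ^ k) (ψ ^ p ^ k) := by
  induction k with
  | zero => simp only [pow_zero, pow_one]
  | succ k ih => rw [pow_succ, pow_mul, ih, gaussSum_frob p, ← pow_mul, ← pow_mul]

theorem apply_card_mul_gaussSum_pow {κ' L : Type*} [Field κ'] [Fintype κ'] [CommRing L]
    [Algebra κ' L] [Nontrivial L] [Fintype κ] {χ : MulChar κ L} (ψ : AddChar κ L)
    (hχ : χ ^ (Fintype.card κ' - 1) = 1) (hκ' : (Fintype.card κ' : κ) ≠ 0) :
    χ (Fintype.card κ' : κ) * gaussSum χ ψ ^ Fintype.card κ' = gaussSum χ ψ := by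
  obtain ⟨k, hp, hk⟩ := FiniteField.card κ' (ringChar κ')
  have : Fact (ringChar κ').Prime := ⟨hp⟩
  have : CharP L (ringChar κ') :=
    charP_of_injective_algebraMap (algebraMap κ' L).injective (ringChar κ')
  have χ_pow : χ ^ Fintype.card κ' = χ := by
    rw [← Nat.sub_add_cancel Fintype.card_pos, pow_succ, hχ, one_mul]
  have frobenius : gaussSum χ ψ ^ Fintype.card κ' =
      gaussSum χ (ψ.mulShift (Units.mk0 (Fintype.card κ' : κ) hκ')) := by
    rw [Units.val_mk0, ← AddChar.pow_mulShift, hk, gaussSum_pow_prime_pow, ← hk, χ_pow]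
  rw [frobenius]
  exact gaussSum_mulShift χ ψ (Units.mk0 _ hκ')

namespace IsPowResidueChar

variable {κ' : Type*} [Field κ'] {π' : O →+* κ'} {χ' : MulChar κ' O}

/-- The element is `g(χ) ^ n` for the Gauss sum `g(χ)`, whose Frobenius conjugate over `κ'` is
`χ(#κ')⁻¹ * g(χ)`. -/
theorem apply_card_mul_apply_prod_jacobiSum [Fintype κ] [Fintype κ'] (hχ : 2 ≤ orderOf χ)
    (h : IsPowResidueChar (orderOf χ) π' χ') (hκ' : (Fintype.card κ' : κ) ≠ 0) :
    χ (Fintype.card κ' : κ) * χ' (π' (χ (-1) * Fintype.card κ *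
      ∏ i ∈ Finset.Ico 1 (orderOf χ - 1), jacobiSum χ (χ ^ i))) = 1 := by
  set γ := χ (-1) * Fintype.card κ * ∏ i ∈ Finset.Ico 1 (orderOf χ - 1), jacobiSum χ (χ ^ i)
  have ringChar_ne : ringChar κ' ≠ ringChar κ := fun e ↦ hκ' <| by
    obtain ⟨k, -, hk⟩ := FiniteField.card κ' (ringChar κ')
    rw [hk, e, Nat.cast_pow, CharP.cast_eq_zero, zero_pow k.ne_zero]
  let ψ := AddChar.FiniteField.primitiveChar κ κ' ringChar_ne
  let L := CyclotomicField ψ.n κ'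
  let f : O →+* L := (algebraMap κ' L).comp π'
  have card_ne_zero : (Fintype.card κ : L) ≠ 0 := by
    rw [← map_natCast (algebraMap κ' L)]
    exact (map_ne_zero _).2 (natCast_card_ne_zero_of_ringChar_ne ringChar_ne)
  have order_eq : orderOf (χ.ringHomComp f) = orderOf χ := orderOf_ringHomComp χ f <| by
    rw [← map_natCast (algebraMap κ' L)]
    exact (map_ne_zero _).2 h.natCast_ne_zero
  have gauss_ne_zero : gaussSum (χ.ringHomComp f) ψ.char ≠ 0 :=
    gaussSum_ne_zero_of_nontrivial card_ne_zero
      (fun e ↦ by rw [e, orderOf_one] at order_eq; omega) ψ.prim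
  have gauss_pow : gaussSum (χ.ringHomComp f) ψ.char ^ orderOf χ = f γ := by
    rw [← order_eq, gaussSum_pow_eq_prod_jacobiSum (order_eq ▸ hχ) ψ.prim, order_eq]
    simp only [γ, map_mul, map_prod, map_natCast, MulChar.ringHomComp_apply,
      MulChar.ringHomComp_pow, jacobiSum_ringHomComp]
  obtain ⟨e, he⟩ := h.dvd_card_sub_one
  rw [Nat.card_eq_fintype_card] at he
  have frobenius := apply_card_mul_gaussSum_pow (χ := χ.ringHomComp f) (κ' := κ') ψ.char
    (by rw [he, ← order_eq, pow_mul, pow_orderOf_eq_one, one_pow]) hκ'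
  have map_eq_one : π' (χ (Fintype.card κ' : κ)) * π' γ ^ e = 1 := by
    refine (algebraMap κ' L).injective (mul_right_cancel₀ gauss_ne_zero ?_)
    rw [map_mul, map_pow, map_one, one_mul]
    change f _ * f γ ^ e * _ = _
    rwa [← gauss_pow, ← pow_mul, ← he, mul_assoc, pow_sub_one_mul Fintype.card_ne_zero]
  have γ_ne_zero : π' γ ≠ 0 := fun h0 ↦ gauss_ne_zero <| eq_zero_of_pow_eq_zero <|
    gauss_pow.trans ((congrArg (algebraMap κ' L) h0).trans (map_zero _))
  refine eq_of_pow_eq_one_of_map_eq π' h.natCast_ne_zero ?_ (one_pow _) ?_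
  · lift (Fintype.card κ' : κ) to κˣ using hκ'.isUnit with u
    rw [mul_pow, h.apply_pow γ_ne_zero, ← MulChar.pow_apply_coe, pow_orderOf_eq_one,
      MulChar.one_apply_coe, one_mul]
  · rw [map_mul, h.map_apply, Nat.card_eq_fintype_card, he,
      Nat.mul_div_cancel_left e (by omega), map_eq_one, map_one]

theorem apply_natCast_eq_one [Finite κ] {q : ℕ} (h : IsPowResidueChar n π χ)
    (hcard : Nat.card κ = q ^ 2) (hn : n ∣ q + 1) {a : ℕ} (ha : (a : κ) ≠ 0) :
    χ (a : κ) = 1 := by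
  refine h.apply_eq_of_map_eq ha (one_pow n) ?_
  rw [map_one, hcard, ← one_pow 2, Nat.sq_sub_sq, mul_comm, Nat.mul_div_assoc _ hn, pow_mul,
    natCast_pow_sub_one_eq_one two_ne_zero hcard ha, one_pow]

theorem apply_natCast_eq_one_of_card_eq_pow [Finite κ] {p q : ℕ} [hp : Fact p.Prime]
    (h : IsPowResidueChar p π χ) (hcard : Nat.card κ = q ^ p) {a : ℕ} (ha : (a : κ) ≠ 0) :
    χ (a : κ) = 1 := by
  have one_le_q : 1 ≤ q := Nat.one_le_iff_ne_zero.2 fun hq ↦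
    Nat.card_pos.ne' (hcard.trans (by rw [hq, zero_pow hp.out.ne_zero]))
  have q_cast : (q : ZMod p) = 1 := by
    have := (ZMod.natCast_eq_zero_iff _ _).2 h.dvd_card_sub_one
    rwa [hcard, Nat.cast_sub (Nat.one_le_pow _ _ one_le_q), Nat.cast_pow, ZMod.pow_card,
      Nat.cast_one, sub_eq_zero] at this
  have dvd_geom_sum : p ∣ ∑ i ∈ Finset.range p, q ^ i := by
    rw [← ZMod.natCast_eq_zero_iff]
    simp [q_cast]
  refine h.apply_eq_of_map_eq ha (one_pow p) ?_
  rw [map_one, hcard, ← geom_sum_mul_of_one_le one_le_q, mul_comm, Nat.mul_div_assoc _ dvd_geom_sum,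
    pow_mul, natCast_pow_sub_one_eq_one hp.out.ne_zero hcard ha, one_pow]

theorem apply_map_jacobiSum [Fintype κ] [Finite κ'] (h : IsPowResidueChar 3 π χ)
    (h' : IsPowResidueChar 3 π' χ') {q : ℕ} (hq : q.Prime) (hq3 : 3 ∣ q + 1)
    (hcard : Nat.card κ' = q ^ 2) (hqκ : (q : κ) ≠ 0) :
    χ' (π' (jacobiSum χ χ)) = χ (q : κ) := by
  have := Fintype.ofFinite κ'
  have card_cast : (Fintype.card κ' : κ) = q ^ 2 := by
    rw [← Nat.card_eq_fintype_card, hcard, Nat.cast_pow]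
  have hqκ' : (Fintype.card κ : κ') ≠ 0 := by
    refine natCast_card_ne_zero_of_ringChar_ne fun ringChar_eq ↦ ?_
    have : Fact q.Prime := ⟨hq⟩
    have := charP_of_card_eq_prime_pow (Nat.card_eq_fintype_card.symm.trans hcard)
    rw [ringChar.eq κ' q] at ringChar_eq
    exact hqκ (by rw [ringChar_eq, ringChar.Nat.cast_ringChar])
  have reciprocity := apply_card_mul_apply_prod_jacobiSum (χ := χ) (π' := π') (χ' := χ')
    (by rw [h.orderOf_eq]; omega) (by rwa [h.orderOf_eq])
    (by rw [card_cast]; exact pow_ne_zero 2 hqκ)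
  have neg_one : χ (-1) = 1 :=
    MulChar.val_neg_one_eq_one_of_odd_order (by decide : Odd 3) h.pow_eq_one
  rw [h.orderOf_eq, Finset.prod_congr (Nat.Ico_succ_singleton 1) fun _ _ ↦ rfl,
    Finset.prod_singleton, pow_one, neg_one, one_mul, map_mul, map_natCast π', map_mul,
    h'.apply_natCast_eq_one hcard hq3 hqκ', one_mul, card_cast, map_pow] at reciprocity
  linear_combination χ (q : κ) * reciprocity - χ' (π' (jacobiSum χ χ)) * h.apply_pow hqκ

end IsPowResidueChar

end ResidueCharacters

section CyclicGalois

open Polynomial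

variable {k K : Type*} [Field k] [Field K] [Algebra k K]

theorem algebraMap_norm_eq_prod_range_pow [FiniteDimensional k K] [IsGalois k K] {σ : Gal(K/k)}
    (hσ : ∀ g : Gal(K/k), g ∈ Subgroup.zpowers σ) (x : K) :
    algebraMap k K (Algebra.norm k x) = ∏ i ∈ Finset.range (Module.finrank k K), (σ ^ i) x := by
  classical
  have card_eq : orderOf σ = Module.finrank k K := by
    rw [orderOf_eq_card_of_forall_mem_zpowers hσ, IsGalois.card_aut_eq_finrank]
  rw [Algebra.norm_eq_prod_automorphisms, ← card_eq, ← IsCyclic.image_range_orderOf hσ,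
    Finset.prod_image]
  exact fun i hi j hj h ↦ pow_injOn_Iio_orderOf (by simpa using hi) (by simpa using hj) h

theorem mem_range_algebraMap_of_apply_eq [FiniteDimensional k K] [IsGalois k K] {σ : Gal(K/k)}
    (hσ : ∀ g : Gal(K/k), g ∈ Subgroup.zpowers σ) {x : K} (hx : σ x = x) :
    x ∈ Set.range (algebraMap k K) := by
  have zpowers_le : Subgroup.zpowers σ ≤ MulAction.stabilizer Gal(K/k) x :=
    Subgroup.zpowers_le.2 hx
  exact IntermediateField.mem_bot.1
    ((IsGalois.mem_bot_iff_fixed x).2 fun g ↦ zpowers_le (hσ g))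

open IntermediateField in
theorem exists_generator_apply_eq_smul [FiniteDimensional k K] {n : ℕ}
    (hn : Module.finrank k K = n) {ζ : k} (hζ : IsPrimitiveRoot ζ n) {a : k} {α : K}
    (hα : α ^ n = algebraMap k K a) (adjoin_eq_top : k⟮α⟯ = ⊤) :
    ∃ σ : Gal(K/k), (∀ g : Gal(K/k), g ∈ Subgroup.zpowers σ) ∧ σ α = ζ • α := by
  have := NeZero.of_pos (hn ▸ Module.finrank_pos (R := k) (M := K))
  have irred : Irreducible (X ^ n - C a) :=
    hn ▸ irreducible_X_pow_sub_C_of_root_adjoin_eq_top (hn ▸ hα) adjoin_eq_top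
  have nonempty : (primitiveRoots (Module.finrank k K) k).Nonempty :=
    ⟨ζ, (mem_primitiveRoots Module.finrank_pos).2 (hn ▸ hζ)⟩
  have : IsSplittingField k K (X ^ n - C a) :=
    hn ▸ isSplittingField_X_pow_sub_C_of_root_adjoin_eq_top nonempty (hn ▸ hα) adjoin_eq_top
  let e := autEquivZmod irred K hζ
  refine ⟨e.symm (Multiplicative.ofAdd 1), fun g ↦ ?_, ?_⟩
  · refine Subgroup.mem_zpowers_iff.2 ⟨(e g).toAdd.val, e.injective ?_⟩
    rw [zpow_natCast, map_pow, e.apply_symm_apply, ← ofAdd_nsmul, nsmul_one,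
      ZMod.natCast_zmod_val, ofAdd_toAdd]
  · simpa using autEquivZmod_symm_apply_natCast irred K hα hζ 1

theorem exists_eq_pow_mul_of_pow_eq_pow {n : ℕ} [NeZero n] {ζ a b : K} (hζ : IsPrimitiveRoot ζ n)
    (h : a ^ n = b ^ n) : ∃ i, a = ζ ^ i * b := by
  by_cases hb : b = 0
  · exact ⟨0, by simpa [hb, NeZero.ne n] using h⟩
  · have : (a / b) ^ n = 1 := by rw [div_pow, h, div_self (pow_ne_zero n hb)]
    obtain ⟨i, -, hi⟩ := hζ.eq_pow_of_pow_eq_one this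
    exact ⟨i, by rw [hi, div_mul_cancel₀ a hb]⟩

end CyclicGalois

section PureCubicFrame

open Polynomial IntermediateField

/-- Data for the Galois action on `K = ℚ(ζ₃, m^{1/3})` with base field `k = ℚ(ζ₃)`: a primitive
cube root of unity `ζ`, a cube root `μ` of `m`, a generator `σ` of the Galois group of `K` over `k`
and an automorphism `τ` inducing complex conjugation on `k`, all on the level of `𝓞 K`. -/
structure PureCubicFrame (k K : Type*) [Field k] [NumberField k] [Field K] [NumberField K]
    [Algebra k K] (m : ℕ) where
  ζ : 𝓞 K
  μ : 𝓞 K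
  σ : 𝓞 K ≃+* 𝓞 K
  τ : 𝓞 K ≃+* 𝓞 K
  isPrimitiveRoot_ζ : IsPrimitiveRoot ζ 3
  σ_ζ : σ ζ = ζ
  τ_ζ : τ ζ = ζ ^ 2
  μ_pow : μ ^ 3 = m
  σ_μ : σ μ = ζ * μ
  σ_σ_σ (x : 𝓞 K) : σ (σ (σ x)) = x
  τ_σ (x : 𝓞 K) : τ (σ x) = σ (σ (τ x))
  τ_τ {x : 𝓞 K} (hx : σ x = x) : τ (τ x) = x
  σ_algebraMap (x : 𝓞 k) : σ (algebraMap (𝓞 k) (𝓞 K) x) = algebraMap (𝓞 k) (𝓞 K) x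
  exists_algebraMap_eq {x : 𝓞 K} (hx : σ x = x) : ∃ y, algebraMap (𝓞 k) (𝓞 K) y = x
  algebraMap_intNorm (x : 𝓞 K) :
    algebraMap (𝓞 k) (𝓞 K) (Algebra.intNorm (𝓞 k) (𝓞 K) x) = x * σ x * σ (σ x)
  finrank_eq : Module.finrank k K = 3

variable {K : Type*} [Field K] [NumberField K] {ζ α : K} {m : ℕ}

theorem finrank_rat_eq_two (k : Type*) [Field k] [NumberField k] [IsCyclotomicExtension {3} ℚ k] :
    Module.finrank ℚ k = 2 := by
  rw [IsCyclotomicExtension.finrank (n := 3) k (cyclotomic.irreducible_rat (by norm_num))]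
  decide

theorem norm_pow_three_eq_sq {k : Type*} [Field k] [NumberField k] [IsCyclotomicExtension {3} ℚ k]
    {x : k} (hx : x ^ 3 = m) : Algebra.norm ℚ x ^ 3 = (m : ℚ) ^ 2 := by
  rw [← map_pow, hx, ← map_natCast (algebraMap ℚ k), Algebra.norm_algebraMap,
    finrank_rat_eq_two]

theorem adjoin_simple_eq_top_of_adjoin_pair_eq_top
    (hgen : Algebra.adjoin ℚ ({ζ, α} : Set K) = ⊤) : ℚ⟮ζ⟯⟮α⟯ = ⊤ := by
  have adjoin_le : Algebra.adjoin ℚ ({ζ, α} : Set K) ≤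
      (restrictScalars ℚ ℚ⟮ζ⟯⟮α⟯).toSubalgebra := by
    refine Algebra.adjoin_le ?_
    rintro x (rfl | rfl)
    · exact (ℚ⟮x⟯⟮α⟯).algebraMap_mem ⟨x, mem_adjoin_simple_self ℚ x⟩
    · exact mem_adjoin_simple_self _ x
  exact eq_top_iff.2 fun x _ ↦ adjoin_le (hgen ▸ Algebra.mem_top)

theorem irreducible_X_pow_three_sub_C (hζ : IsPrimitiveRoot ζ 3)
    (hnc : ∀ y : ℚ, y ^ 3 ≠ (m : ℚ) ^ 2) : Irreducible (X ^ 3 - C (m : ℚ⟮ζ⟯)) := by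
  have : IsCyclotomicExtension {3} ℚ ℚ⟮ζ⟯ :=
    hζ.intermediateField_adjoin_isCyclotomicExtension ℚ
  exact X_pow_sub_C_irreducible_of_prime Nat.prime_three fun b hb ↦
    hnc _ (norm_pow_three_eq_sq hb)

theorem finrank_adjoin_simple_eq_three (hζ : IsPrimitiveRoot ζ 3) (hα : α ^ 3 = (m : K))
    (hgen : Algebra.adjoin ℚ ({ζ, α} : Set K) = ⊤) (hnc : ∀ y : ℚ, y ^ 3 ≠ (m : ℚ) ^ 2) :
    Module.finrank ℚ⟮ζ⟯ K = 3 := by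
  have minpoly_eq : X ^ 3 - C (m : ℚ⟮ζ⟯) = minpoly ℚ⟮ζ⟯ α :=
    minpoly.eq_of_irreducible_of_monic (irreducible_X_pow_three_sub_C hζ hnc) (by simp [hα])
      (monic_X_pow_sub_C _ (by norm_num))
  rw [← finrank_top', ← adjoin_simple_eq_top_of_adjoin_pair_eq_top hgen,
    adjoin.finrank (.of_finite ℚ⟮ζ⟯ α), ← minpoly_eq, natDegree_X_pow_sub_C]

theorem isGalois_rat_of_adjoin_pair_eq_top (hm : m ≠ 0) (hζ : IsPrimitiveRoot ζ 3)
    (hα : α ^ 3 = (m : K)) (hgen : Algebra.adjoin ℚ ({ζ, α} : Set K) = ⊤) : IsGalois ℚ K := by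
  have ne_zero : α ≠ 0 := ne_zero_pow three_ne_zero (hα ▸ Nat.cast_ne_zero.2 hm)
  have mem_rootSet {x : K} (hx : x ^ 3 = m) : x ∈ (X ^ 3 - C (m : ℚ)).rootSet K :=
    (mem_rootSet_of_ne (X_pow_sub_C_ne_zero (by norm_num) _)).2 (by simp [hx])
  have : IsSplittingField ℚ K (X ^ 3 - C (m : ℚ)) := by
    refine ⟨?_, top_le_iff.1 (hgen ▸ Algebra.adjoin_le ?_)⟩
    · rw [Polynomial.map_sub, Polynomial.map_pow, map_X, map_C]
      exact X_pow_sub_C_splits_of_isPrimitiveRoot hζ (by rw [hα, map_natCast])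
    set A := Algebra.adjoin ℚ ((X ^ 3 - C (m : ℚ)).rootSet K)
    have α_mem : α ∈ A := Algebra.subset_adjoin (mem_rootSet hα)
    have ζ_mul_α_mem : ζ * α ∈ A :=
      Algebra.subset_adjoin (mem_rootSet (by rw [mul_pow, hζ.pow_eq_one, one_mul, hα]))
    rintro x (rfl | rfl)
    · have : x = algebraMap ℚ K (1 / m) * (x * α * α ^ 2) := by
        rw [map_div₀, map_one, map_natCast, ← hα]
        field
      rw [SetLike.mem_coe, this]
      exact A.mul_mem (A.algebraMap_mem _) (A.mul_mem ζ_mul_α_mem (A.pow_mem α_mem 2))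
    · exact α_mem
  exact IsGalois.of_separable_splitting_field (p := X ^ 3 - C (m : ℚ))
    (separable_X_pow_sub_C (m : ℚ) (by norm_num) (by exact_mod_cast hm))

theorem exists_apply_eq_pow_of_coprime [IsGalois ℚ K] {n i : ℕ} (hn : 0 < n)
    (hζ : IsPrimitiveRoot ζ n) (hi : i.Coprime n) : ∃ τ : Gal(K/ℚ), τ ζ = ζ ^ i := by
  have := NeZero.of_pos hn
  refine minpoly.exists_algEquiv_of_root' (Algebra.IsAlgebraic.isAlgebraic ζ) ?_
  rw [← cyclotomic_eq_minpoly_rat hζ hn, aeval_def, ← eval_map, map_cyclotomic]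
  exact isRoot_cyclotomic_iff.2 (hζ.pow_of_coprime i hi)

theorem apply_apply_eq_self_of_mem_adjoin_simple (hζ : IsPrimitiveRoot ζ 3) {τ : Gal(K/ℚ)}
    (hτ : τ ζ = ζ ^ 2) {x : K} (hx : x ∈ ℚ⟮ζ⟯) : τ (τ x) = x := by
  have adjoin_le : ℚ⟮ζ⟯ ≤ fixedField (Subgroup.zpowers (τ * τ)) := by
    rw [adjoin_simple_le_iff, mem_fixedField_iff]
    have apply_ζ : (τ * τ) ζ = ζ := by
      rw [AlgEquiv.mul_apply, hτ, map_pow, hτ, ← pow_mul, pow_succ ζ 3, hζ.pow_eq_one, one_mul]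
    exact fun g hg ↦ (Subgroup.zpowers_le (H := MulAction.stabilizer Gal(K/ℚ) ζ)).2 apply_ζ hg
  exact (mem_fixedField_iff _ x).1 (adjoin_le hx) _ (Subgroup.mem_zpowers (τ * τ))

theorem apply_generator_eq_of_apply_eq_sq (hζ : IsPrimitiveRoot ζ 3) (hα : α ^ 3 = (m : K))
    (hgen : Algebra.adjoin ℚ ({ζ, α} : Set K) = ⊤) {σ : Gal(K/ℚ⟮ζ⟯)} (hσ : σ α = ζ * α)
    {τ : Gal(K/ℚ)} (hτ : τ ζ = ζ ^ 2) (x : K) : τ (σ x) = σ (σ (τ x)) := by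
  have σ_ζ : σ ζ = ζ := σ.commutes (AdjoinSimple.gen ℚ ζ)
  obtain ⟨i, hi⟩ : ∃ i, τ α = ζ ^ i * α :=
    exists_eq_pow_mul_of_pow_eq_pow hζ (by rw [← map_pow, hα, map_natCast])
  let σ' : Gal(K/ℚ) := σ.restrictScalars ℚ
  suffices h : ((τ * σ' : Gal(K/ℚ)) : K →ₐ[ℚ] K) = (σ' * σ' * τ : Gal(K/ℚ)) from
    DFunLike.congr_fun h x
  refine AlgHom.ext_of_adjoin_eq_top hgen ?_
  rintro y (rfl | rfl)
  · change τ (σ y) = σ (σ (τ y))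
    rw [σ_ζ, hτ, map_pow, map_pow, σ_ζ, σ_ζ]
  · change τ (σ y) = σ (σ (τ y))
    rw [hσ, map_mul, hτ, hi, map_mul, map_mul, map_pow, map_pow, σ_ζ, σ_ζ, hσ, map_mul, σ_ζ, hσ]
    ring

theorem exists_generator_adjoin_simple (hζ : IsPrimitiveRoot ζ 3) (hα : α ^ 3 = (m : K))
    (hgen : Algebra.adjoin ℚ ({ζ, α} : Set K) = ⊤) (hnc : ∀ y : ℚ, y ^ 3 ≠ (m : ℚ) ^ 2) :
    ∃ σ : Gal(K/ℚ⟮ζ⟯), (∀ g : Gal(K/ℚ⟮ζ⟯), g ∈ Subgroup.zpowers σ) ∧ σ α = ζ * α := by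
  have hζ' : IsPrimitiveRoot (AdjoinSimple.gen ℚ ζ) 3 :=
    hζ.of_map_of_injective (f := algebraMap ℚ⟮ζ⟯ K) (algebraMap ℚ⟮ζ⟯ K).injective
  exact exists_generator_apply_eq_smul (finrank_adjoin_simple_eq_three hζ hα hgen hnc) hζ'
    (by rw [hα, map_natCast]) (adjoin_simple_eq_top_of_adjoin_pair_eq_top hgen)

theorem nonempty_pureCubicFrame (hm : m ≠ 0) (hζ : IsPrimitiveRoot ζ 3) (hα : α ^ 3 = (m : K))
    (hgen : Algebra.adjoin ℚ ({ζ, α} : Set K) = ⊤) (hnc : ∀ y : ℚ, y ^ 3 ≠ (m : ℚ) ^ 2) :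
    Nonempty (PureCubicFrame ℚ⟮ζ⟯ K m) := by
  have := isGalois_rat_of_adjoin_pair_eq_top hm hζ hα hgen
  have finrank_eq := finrank_adjoin_simple_eq_three hζ hα hgen hnc
  obtain ⟨σ, hσ, σ_α⟩ := exists_generator_adjoin_simple hζ hα hgen hnc
  obtain ⟨τ, τ_ζ⟩ : ∃ τ : Gal(K/ℚ), τ ζ = ζ ^ 2 :=
    exists_apply_eq_pow_of_coprime (by norm_num) hζ (by norm_num)
  have σ_pow : σ ^ 3 = 1 := by
    rw [← finrank_eq, ← IsGalois.card_aut_eq_finrank, pow_card_eq_one']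
  have mem_of_fixed {x : K} (hx : σ x = x) : x ∈ ℚ⟮ζ⟯ := by
    obtain ⟨y, rfl⟩ := mem_range_algebraMap_of_apply_eq hσ hx
    exact y.2
  exact ⟨{
    ζ := hζ.toInteger
    μ := ⟨α, .of_pow three_pos (hα ▸ map_natCast (algebraMap ℤ K) m ▸ isIntegral_algebraMap)⟩
    σ := RingOfIntegers.mapRingEquiv σ
    τ := RingOfIntegers.mapRingEquiv τ
    isPrimitiveRoot_ζ := hζ.toInteger_isPrimitiveRoot
    σ_ζ := RingOfIntegers.ext (σ.commutes (AdjoinSimple.gen ℚ ζ))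
    τ_ζ := RingOfIntegers.ext τ_ζ
    μ_pow := RingOfIntegers.ext hα
    σ_μ := RingOfIntegers.ext σ_α
    σ_σ_σ x := RingOfIntegers.ext (DFunLike.congr_fun σ_pow (x : K))
    τ_σ x := RingOfIntegers.ext (apply_generator_eq_of_apply_eq_sq hζ hα hgen σ_α τ_ζ x)
    τ_τ hx := RingOfIntegers.ext (apply_apply_eq_self_of_mem_adjoin_simple hζ τ_ζ
      (mem_of_fixed (congrArg (algebraMap (𝓞 K) K) hx)))
    σ_algebraMap x := RingOfIntegers.ext (σ.commutes x)
    exists_algebraMap_eq {x} hx := by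
      have hxk : (x : K) ∈ ℚ⟮ζ⟯ := mem_of_fixed (congrArg (algebraMap (𝓞 K) K) hx)
      exact ⟨⟨⟨x, hxk⟩, (isIntegral_algebraMap_iff (algebraMap ℚ⟮ζ⟯ K).injective).1 x.2⟩, rfl⟩
    algebraMap_intNorm x := by
      refine RingOfIntegers.ext ?_
      change algebraMap ℚ⟮ζ⟯ K (algebraMap (𝓞 ℚ⟮ζ⟯) ℚ⟮ζ⟯ (Algebra.intNorm (𝓞 ℚ⟮ζ⟯) (𝓞 K) x)) = _
      rw [Algebra.algebraMap_intNorm (K := ℚ⟮ζ⟯) (L := K), algebraMap_norm_eq_prod_range_pow hσ,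
        finrank_eq, Finset.prod_range_succ, Finset.prod_range_succ, Finset.prod_range_one]
      rfl
    finrank_eq := finrank_eq }⟩

end PureCubicFrame

section IdealNorms

variable {R : Type*} [CommRing R] [IsDedekindDomain R] [Module.Free ℤ R]

theorem absNorm_map_ringEquiv (e : R ≃+* R) (I : Ideal R) :
    Ideal.absNorm (I.map e) = Ideal.absNorm I := by
  rw [Ideal.absNorm_apply, Ideal.absNorm_apply, Submodule.cardQuot_apply, Submodule.cardQuot_apply]
  exact (Nat.card_congr (Ideal.quotientEquiv I (I.map e) e rfl).toEquiv).symm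

theorem eq_of_le_of_absNorm_eq [Module.Finite ℤ R] {I J : Ideal R} (hIJ : I ≤ J) (hI : I ≠ ⊥)
    (absNorm_eq : Ideal.absNorm I = Ideal.absNorm J) : I = J := by
  obtain ⟨L, rfl⟩ := Ideal.dvd_iff_le.2 hIJ
  have absNorm_ne_zero : Ideal.absNorm J ≠ 0 := by
    rwa [← absNorm_eq, Ne, Ideal.absNorm_eq_zero_iff]
  rw [map_mul] at absNorm_eq
  rw [Ideal.absNorm_eq_one_iff.1 (mul_eq_left₀ absNorm_ne_zero |>.1 absNorm_eq), Ideal.mul_top]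

theorem exists_sub_algebraMap_mem {k K : Type*} [Field k] [NumberField k] [Field K]
    [NumberField K] [Algebra k K] {P : Ideal (𝓞 K)} (hP0 : P ≠ ⊥)
    (absNorm_eq : Ideal.absNorm P = Ideal.absNorm (P.comap (algebraMap (𝓞 k) (𝓞 K)))) (x : 𝓞 K) :
    ∃ y : 𝓞 k, x - algebraMap (𝓞 k) (𝓞 K) y ∈ P := by
  set p := P.comap (algebraMap (𝓞 k) (𝓞 K))
  let φ : 𝓞 k ⧸ p →+* 𝓞 K ⧸ P := Ideal.quotientMap P (algebraMap (𝓞 k) (𝓞 K)) le_rfl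
  have inj : Function.Injective φ := Ideal.quotientMap_injective
  have := Ideal.finiteQuotientOfFreeOfNeBot P hP0
  have card_eq : Nat.card (𝓞 k ⧸ p) = Nat.card (𝓞 K ⧸ P) := by
    rw [Ideal.absNorm_apply, Ideal.absNorm_apply] at absNorm_eq
    exact absNorm_eq.symm
  obtain ⟨y, hy⟩ :=
    ((Nat.bijective_iff_injective_and_card φ).2 ⟨inj, card_eq⟩).2 (Ideal.Quotient.mk P x)
  obtain ⟨y, rfl⟩ := Ideal.Quotient.mk_surjective y
  exact ⟨y, Ideal.Quotient.eq.1 hy.symm⟩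

end IdealNorms

namespace PureCubicFrame

variable {k K : Type*} [Field k] [NumberField k] [Field K] [NumberField K] [Algebra k K] {m : ℕ}
  (F : PureCubicFrame k K m)

theorem ζ_sq_add_ζ_add_one : F.ζ ^ 2 + F.ζ + 1 = 0 := by
  have := F.isPrimitiveRoot_ζ.geom_sum_eq_zero (by norm_num)
  simp only [Finset.sum_range_succ, Finset.sum_range_zero, pow_zero, pow_one] at this
  linear_combination this

/-- The extension to `𝓞 K` of the relative norm of the ideal `I` to `k`. -/
def idealNorm (I : Ideal (𝓞 K)) : Ideal (𝓞 K) := I * I.map F.σ * (I.map F.σ).map F.σ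

theorem finrank_ringOfIntegers (F : PureCubicFrame k K m) :
    Module.finrank (𝓞 k) (𝓞 K) = 3 :=
  (IsFractionRing.finrank_eq (𝓞 k) k (𝓞 K) K).symm.trans F.finrank_eq

theorem map_relNorm_eq_idealNorm (I : Ideal (𝓞 K)) :
    (Ideal.relNorm (𝓞 k) I).map (algebraMap (𝓞 k) (𝓞 K)) = F.idealNorm I := by
  by_cases hI : I = ⊥
  · simp [hI, idealNorm]
  refine eq_of_le_of_absNorm_eq ?_ ?_ ?_
  · rw [Ideal.map_relNorm, Ideal.span_le]
    rintro _ ⟨x, hx, rfl⟩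
    rw [Function.comp_apply, F.algebraMap_intNorm]
    exact Ideal.mul_mem_mul (Ideal.mul_mem_mul hx (Ideal.mem_map_of_mem _ hx))
      (Ideal.mem_map_of_mem _ (Ideal.mem_map_of_mem _ hx))
  · rwa [Ne, Ideal.map_eq_bot_iff_of_injective (FaithfulSMul.algebraMap_injective _ _),
      Ideal.relNorm_eq_bot_iff]
  · rw [Ideal.absNorm_algebraMap, Ideal.absNorm_relNorm, F.finrank_ringOfIntegers, idealNorm,
      map_mul, map_mul, absNorm_map_ringEquiv, absNorm_map_ringEquiv, absNorm_map_ringEquiv]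
    ring

theorem exists_pow_three_eq_map_comap_pow {P : Ideal (𝓞 K)} [P.IsPrime] (hσ : P.map F.σ = P) :
    ∃ f, Ideal.relNorm (𝓞 k) P = P.comap (algebraMap (𝓞 k) (𝓞 K)) ^ f ∧
      P ^ 3 = ((P.comap (algebraMap (𝓞 k) (𝓞 K))).map (algebraMap (𝓞 k) (𝓞 K))) ^ f := by
  have : P.LiesOver (P.comap (algebraMap (𝓞 k) (𝓞 K))) := ⟨rfl⟩
  have := Ideal.comap_isPrime (algebraMap (𝓞 k) (𝓞 K)) P
  obtain ⟨f, hf⟩ :=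
    Ideal.exists_relNorm_eq_pow_of_isPrime P (P.comap (algebraMap (𝓞 k) (𝓞 K)))
  refine ⟨f, hf, ?_⟩
  rw [← Ideal.map_pow, ← hf, F.map_relNorm_eq_idealNorm, idealNorm, hσ, hσ]
  ring

theorem eq_map_comap_or_absNorm_eq {P : Ideal (𝓞 K)} [hP : P.IsPrime] (hP0 : P ≠ ⊥)
    (hσ : P.map F.σ = P) :
    P = (P.comap (algebraMap (𝓞 k) (𝓞 K))).map (algebraMap (𝓞 k) (𝓞 K)) ∨
      Ideal.absNorm P = Ideal.absNorm (P.comap (algebraMap (𝓞 k) (𝓞 K))) := by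
  obtain ⟨f, relNorm_eq, pow_eq⟩ := F.exists_pow_three_eq_map_comap_pow hσ
  set p := P.comap (algebraMap (𝓞 k) (𝓞 K))
  have prime_P : Prime P := Ideal.prime_of_isPrime hP0 hP
  have f_ne_zero : f ≠ 0 := by
    rintro rfl
    rw [pow_zero, Ideal.one_eq_top] at pow_eq
    exact hP.ne_top (top_le_iff.1 (pow_eq ▸ Ideal.pow_le_self three_ne_zero))
  obtain ⟨e, -, he⟩ := (dvd_prime_pow prime_P 3).1 (pow_eq ▸ dvd_pow_self _ f_ne_zero)
  rw [associated_iff_eq] at he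
  have mul_eq : e * f = 3 := by
    rw [he, ← pow_mul] at pow_eq
    exact (pow_injective_of_not_isUnit prime_P.not_isUnit hP0 pow_eq).symm
  rcases (Nat.dvd_prime Nat.prime_three).1 (Dvd.intro_left e mul_eq) with rfl | rfl
  · rw [← Ideal.absNorm_relNorm (𝓞 k) (𝓞 K) P, relNorm_eq, pow_one]
    exact Or.inr rfl
  · rw [he, show e = 1 by lia, pow_one]
    exact Or.inl rfl

theorem absNorm_span_natCast (F : PureCubicFrame k K m) [IsCyclotomicExtension {3} ℚ k]
    (n : ℕ) : Ideal.absNorm (Ideal.span {(n : 𝓞 K)}) = n ^ 6 := by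
  have finrank_eq : Module.finrank ℚ K = 6 := by
    rw [← Module.finrank_mul_finrank ℚ k K, finrank_rat_eq_two, F.finrank_eq]
  rw [Ideal.absNorm_span_singleton, ← map_natCast (algebraMap ℤ (𝓞 K)), Algebra.norm_algebraMap,
    RingOfIntegers.rank, finrank_eq, Int.natAbs_pow, Int.natAbs_natCast]

theorem exists_rat_pow_three_eq_sq [IsCyclotomicExtension {3} ℚ k] {x : 𝓞 K} (hσ : F.σ x = x)
    {n : ℕ} (hn : x ^ 3 = n) : ∃ y : ℚ, y ^ 3 = (n : ℚ) ^ 2 := by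
  obtain ⟨y, rfl⟩ := F.exists_algebraMap_eq hσ
  have y_pow : y ^ 3 = n :=
    FaithfulSMul.algebraMap_injective (𝓞 k) (𝓞 K) (by rw [map_pow, hn, map_natCast])
  exact ⟨_, norm_pow_three_eq_sq (x := (y : k))
    (by exact_mod_cast congrArg (algebraMap (𝓞 k) k) y_pow)⟩

theorem exists_algebraMap_toInteger_eq_ζ :
    ∃ (η : k) (hη : IsPrimitiveRoot η 3), algebraMap (𝓞 k) (𝓞 K) hη.toInteger = F.ζ := by
  obtain ⟨z, hz⟩ := F.exists_algebraMap_eq F.σ_ζ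
  have hz_prim : IsPrimitiveRoot z 3 := IsPrimitiveRoot.of_map_of_injective
    (hz ▸ F.isPrimitiveRoot_ζ) (FaithfulSMul.algebraMap_injective (𝓞 k) (𝓞 K))
  exact ⟨z, hz_prim.map_of_injective RingOfIntegers.coe_injective, hz⟩

theorem mem_or_mem_of_absNorm_eq {P : Ideal (𝓞 K)} [hP : P.IsPrime] (hP0 : P ≠ ⊥)
    (hσ : P.map F.σ = P)
    (absNorm_eq : Ideal.absNorm P = Ideal.absNorm (P.comap (algebraMap (𝓞 k) (𝓞 K)))) :
    3 ∈ P ∨ F.μ ∈ P := by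
  obtain ⟨y, hy⟩ := exists_sub_algebraMap_mem hP0 absNorm_eq F.μ
  have σ_mem : F.ζ * F.μ - algebraMap (𝓞 k) (𝓞 K) y ∈ P := by
    rw [← F.σ_μ, ← F.σ_algebraMap y, ← map_sub, ← hσ]
    exact Ideal.mem_map_of_mem F.σ hy
  have mul_mem : (F.ζ - 1) * F.μ ∈ P := by
    convert P.sub_mem σ_mem hy using 1
    ring
  refine (hP.mem_or_mem mul_mem).imp_left fun h ↦ ?_
  rw [show (3 : 𝓞 K) = (-F.ζ - 2) * (F.ζ - 1) by linear_combination F.ζ_sq_add_ζ_add_one]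
  exact P.mul_mem_left _ h

theorem ζ_sub_one_mem {P : Ideal (𝓞 K)} [hP : P.IsPrime] (h3 : 3 ∈ P) : F.ζ - 1 ∈ P := by
  refine hP.mem_of_pow_mem 2 (?_ : (F.ζ - 1) ^ 2 ∈ P)
  rw [show (F.ζ - 1) ^ 2 = -F.ζ * 3 by linear_combination F.ζ_sq_add_ζ_add_one]
  exact P.mul_mem_left _ h3

theorem map_τ_span_ζ_sub_one :
    (Ideal.span {F.ζ - 1}).map F.τ = Ideal.span {F.ζ - 1} := by
  have isUnit : IsUnit (F.ζ + 1) :=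
    .of_mul_eq_one (-F.ζ) (by linear_combination -F.ζ_sq_add_ζ_add_one)
  rw [Ideal.map_span, Set.image_singleton, map_sub, map_one, F.τ_ζ,
    show F.ζ ^ 2 - 1 = (F.ζ - 1) * (F.ζ + 1) by ring, Ideal.span_singleton_mul_right_unit isUnit]

variable [IsCyclotomicExtension {3} ℚ k]

theorem exists_idealNorm_eq_span (I : Ideal (𝓞 K)) :
    ∃ a, F.σ a = a ∧ F.idealNorm I = Ideal.span {a} := by
  have := IsCyclotomicExtension.Rat.three_pid k
  obtain ⟨a, ha⟩ := (IsPrincipalIdealRing.principal (Ideal.relNorm (𝓞 k) I)).principal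
  refine ⟨_, F.σ_algebraMap a, ?_⟩
  rw [← F.map_relNorm_eq_idealNorm, ha, Ideal.submodule_span_eq, Ideal.map_span,
    Set.image_singleton]

theorem eq_pow_or_eq_neg_pow_of_isUnit {u : 𝓞 K} (hu : IsUnit u) (hσ : F.σ u = u) :
    ∃ j : ℕ, u = F.ζ ^ j ∨ u = -F.ζ ^ j := by
  obtain ⟨η, hη, η_eq⟩ := F.exists_algebraMap_toInteger_eq_ζ
  obtain ⟨y, rfl⟩ := F.exists_algebraMap_eq hσ
  obtain ⟨y, rfl⟩ : IsUnit y := isUnit_of_map_unit (algebraMap (𝓞 k) (𝓞 K)) y hu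
  have mem := IsCyclotomicExtension.Rat.Three.Units.mem hη y
  simp only [List.mem_cons, List.not_mem_nil, or_false] at mem
  rcases mem with rfl | rfl | rfl | rfl | rfl | rfl
  · exact ⟨0, Or.inl (by simp)⟩
  · exact ⟨0, Or.inr (by simp)⟩
  · exact ⟨1, Or.inl (by simp [η_eq])⟩
  · exact ⟨1, Or.inr (by simp [η_eq])⟩
  · exact ⟨2, Or.inl (by simp [η_eq])⟩
  · exact ⟨2, Or.inr (by simp [η_eq])⟩

theorem inert_or_three_mem_or_μ_mem {P : Ideal (𝓞 K)} [P.IsPrime] (hP0 : P ≠ ⊥)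
    (hσ : P.map F.σ = P) :
    (∃ a, F.σ a = a ∧ P = Ideal.span {a} ∧ ∃ Q, Ideal.absNorm P = Q ^ 3) ∨ 3 ∈ P ∨ F.μ ∈ P := by
  refine (F.eq_map_comap_or_absNorm_eq hP0 hσ).imp (fun eq_map ↦ ?_)
    (F.mem_or_mem_of_absNorm_eq hP0 hσ)
  have := IsCyclotomicExtension.Rat.three_pid k
  obtain ⟨a, ha⟩ :=
    (IsPrincipalIdealRing.principal (P.comap (algebraMap (𝓞 k) (𝓞 K)))).principal
  refine ⟨algebraMap (𝓞 k) (𝓞 K) a, F.σ_algebraMap a, ?_,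
    Ideal.absNorm (P.comap (algebraMap (𝓞 k) (𝓞 K))), ?_⟩
  · rw [eq_map, ha, Ideal.submodule_span_eq, Ideal.map_span, Set.image_singleton]
  · rw [← F.finrank_ringOfIntegers, ← Ideal.absNorm_algebraMap (R := 𝓞 k) (S := 𝓞 K), ← eq_map]

theorem map_τ_eq_of_three_mem {P : Ideal (𝓞 K)} [hP : P.IsPrime] (hσ : P.map F.σ = P)
    (h3 : 3 ∈ P) : P.map F.τ = P := by
  obtain ⟨η, hη, η_eq⟩ := F.exists_algebraMap_toInteger_eq_ζ
  have prime : Prime (hη.toInteger - 1) := hη.zeta_sub_one_prime'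
  have isMaximal : (Ideal.span {hη.toInteger - 1}).IsMaximal :=
    Ring.DimensionLEOne.maximalOfPrime (by simpa using prime.ne_zero)
      ((Ideal.span_singleton_prime prime.ne_zero).2 prime)
  have comap_eq : P.comap (algebraMap (𝓞 k) (𝓞 K)) = Ideal.span {hη.toInteger - 1} := by
    refine (isMaximal.eq_of_le (Ideal.comap_isPrime _ P).ne_top ?_).symm
    rw [Ideal.span_singleton_le_iff_mem, Ideal.mem_comap, map_sub, η_eq, map_one]
    exact F.ζ_sub_one_mem h3
  obtain ⟨f, -, pow_eq⟩ := F.exists_pow_three_eq_map_comap_pow hσ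
  rw [comap_eq, Ideal.map_span, Set.image_singleton, map_sub, map_one, η_eq] at pow_eq
  refine (pow_left_inj three_ne_zero).1 ?_
  rw [← Ideal.map_pow, pow_eq, Ideal.map_pow, F.map_τ_span_ζ_sub_one]

end PureCubicFrame

section RamifiedPrimes

theorem natCast_notMem_of_coprime {R : Type*} [CommRing R] {P : Ideal R} (hP : P ≠ ⊤) {a b : ℕ}
    (hab : a.Coprime b) (ha : (a : R) ∈ P) : (b : R) ∉ P := fun hb ↦ by
  obtain ⟨u, v, huv⟩ := Nat.isCoprime_iff_coprime.2 hab
  refine hP (P.eq_top_iff_one.2 ?_)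
  have one_eq : (u : R) * a + v * b = 1 := by exact_mod_cast congrArg (Int.cast : ℤ → R) huv
  exact one_eq ▸ P.add_mem (P.mul_mem_left _ ha) (P.mul_mem_left _ hb)

theorem natCast_quotient_ne_zero {R : Type*} [CommRing R] {P : Ideal R} {n : ℕ}
    (hn : (n : R) ∉ P) : (n : R ⧸ P) ≠ 0 := by
  rwa [← map_natCast (Ideal.Quotient.mk P), Ne, Ideal.Quotient.eq_zero_iff_mem]

theorem pow_dvd_of_pow_eq_pow_mul {R : Type*} [CommRing R] [IsDedekindDomain R]
    {P M Q A : Ideal R} [P.IsPrime] {n t : ℕ} (hnt : n.Coprime t) (hQ : Q ≠ ⊥) (hA : A ≠ ⊥)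
    (h : M ^ n = Q ^ t * A) (hPQ : Q ≤ P) (hPA : ¬A ≤ P) : P ^ n ∣ Q := by
  have hP : Prime P := Ideal.prime_of_isPrime (fun hP ↦ hQ (le_bot_iff.1 (hP ▸ hPQ))) ‹_›
  have finite {I : Ideal R} (hI : I ≠ ⊥) : FiniteMultiplicity P I :=
    FiniteMultiplicity.of_prime_left hP hI
  have multiplicity_A : multiplicity P A = 0 :=
    multiplicity_eq_zero.2 fun hdvd ↦ hPA (Ideal.dvd_iff_le.1 hdvd)
  have prod_ne_bot : Q ^ t * A ≠ ⊥ := mul_ne_zero (pow_ne_zero _ hQ) hA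
  rcases n.eq_zero_or_pos with rfl | hn
  · exact pow_zero P ▸ one_dvd Q
  have hM : M ≠ ⊥ := fun hM ↦ prod_ne_bot (by rw [← h, hM, ← Ideal.zero_eq_bot, zero_pow hn.ne'])
  have multiplicity_eq : n * multiplicity P M = t * multiplicity P Q := by
    rw [← (finite hM).multiplicity_pow hP, h, multiplicity_mul hP (finite prod_ne_bot),
      (finite hQ).multiplicity_pow hP, multiplicity_A, add_zero]
  have dvd_multiplicity : n ∣ multiplicity P Q := hnt.dvd_of_dvd_mul_left ⟨_, multiplicity_eq.symm⟩
  have multiplicity_ne_zero : multiplicity P Q ≠ 0 := fun h0 ↦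
    multiplicity_eq_zero.1 h0 (Ideal.dvd_iff_le.2 hPQ)
  exact pow_dvd_of_le_multiplicity
    (Nat.le_of_dvd (Nat.pos_of_ne_zero multiplicity_ne_zero) dvd_multiplicity)

attribute [local instance] Ideal.Quotient.field

/-- The cubic residue symbol `(·/P)₃` of a sextic field containing a primitive cube root of unity,
for a prime `P` with `P³ = (q)` and residue field of order `q²`, where `q ≡ 2 mod 3` is a rational
prime. The symbol is extended by zero to `P`, and its values are cube roots of unity of `𝓞 K`. -/
structure RamifiedCubicSymbol (K : Type*) [Field K] [NumberField K] (q : ℕ) where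
  P : Ideal (𝓞 K)
  [isMaximal : P.IsMaximal]
  χ : MulChar (𝓞 K ⧸ P) (𝓞 K)
  isPowResidueChar : IsPowResidueChar 3 (Ideal.Quotient.mk P) χ
  prime : q.Prime
  mod_three : q % 3 = 2
  pow_three_eq : P ^ 3 = Ideal.span {(q : 𝓞 K)}
  absNorm_eq : Ideal.absNorm P = q ^ 2

attribute [instance] RamifiedCubicSymbol.isMaximal

namespace RamifiedCubicSymbol

variable {k K : Type*} [Field k] [NumberField k] [Field K] [NumberField K] [Algebra k K] {m q : ℕ}
  (X : RamifiedCubicSymbol K q)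

theorem natCast_mem : (q : 𝓞 K) ∈ X.P := by
  have hq : (q : 𝓞 K) ∈ X.P ^ 3 := X.pow_three_eq ▸ Ideal.mem_span_singleton_self _
  exact Ideal.pow_le_self (by norm_num) hq

theorem ne_bot : X.P ≠ ⊥ := fun hP ↦ by
  have hq : (q : 𝓞 K) ∈ (⊥ : Ideal (𝓞 K)) := hP ▸ X.natCast_mem
  exact X.prime.ne_zero (by exact_mod_cast Ideal.mem_bot.1 hq)

theorem eq_of_natCast_mem {P' : Ideal (𝓞 K)} [hP' : P'.IsPrime] (hq : (q : 𝓞 K) ∈ P') :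
    P' = X.P := by
  have pow_le : X.P ^ 3 ≤ P' := by rwa [X.pow_three_eq, Ideal.span_singleton_le_iff_mem]
  exact (X.isMaximal.eq_of_le hP'.ne_top (hP'.le_of_pow_le pow_le)).symm

theorem map_eq (g : 𝓞 K ≃+* 𝓞 K) : X.P.map g = X.P := by
  have := Ideal.map_isPrime_of_equiv g (I := X.P)
  exact X.eq_of_natCast_mem (by simpa only [map_natCast] using Ideal.mem_map_of_mem g X.natCast_mem)

theorem map_le_iff (g : 𝓞 K ≃+* 𝓞 K) {I : Ideal (𝓞 K)} : I.map g ≤ X.P ↔ I ≤ X.P := by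
  rw [Ideal.map_le_iff_le_comap]
  nth_rw 1 [← X.map_eq g]
  rw [Ideal.comap_map_of_bijective g g.bijective]

instance : Finite (𝓞 K ⧸ X.P) := Ideal.finiteQuotientOfFreeOfNeBot X.P X.ne_bot

theorem card_quotient : Nat.card (𝓞 K ⧸ X.P) = q ^ 2 := by
  rw [← X.absNorm_eq, Ideal.absNorm_apply, Submodule.cardQuot_apply]

/-- The symbol `x ↦ (x/P)₃` as a multiplicative map. -/
def symbol : 𝓞 K →* 𝓞 K :=
  (X.χ : 𝓞 K ⧸ X.P →* 𝓞 K).comp (Ideal.Quotient.mk X.P : 𝓞 K →* 𝓞 K ⧸ X.P)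

theorem symbol_apply (x : 𝓞 K) : X.symbol x = X.χ (Ideal.Quotient.mk X.P x) := rfl

theorem symbol_pow_three {x : 𝓞 K} (hx : x ∉ X.P) : X.symbol x ^ 3 = 1 :=
  X.isPowResidueChar.apply_pow (mt Ideal.Quotient.eq_zero_iff_mem.1 hx)

theorem symbol_neg_one : X.symbol (-1) = 1 := by
  have neg_one_notMem : (-1 : 𝓞 K) ∉ X.P := fun h ↦
    X.isMaximal.ne_top (X.P.eq_top_iff_one.2 (neg_neg (1 : 𝓞 K) ▸ X.P.neg_mem h))
  calc X.symbol (-1) = X.symbol ((-1) ^ 3) := by norm_num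
    _ = 1 := by rw [map_pow, X.symbol_pow_three neg_one_notMem]

theorem symbol_ringEquiv (g : 𝓞 K ≃+* 𝓞 K) (x : 𝓞 K) : X.symbol (g x) = g (X.symbol x) :=
  X.isPowResidueChar.apply_ringEquiv X.isPowResidueChar (g : 𝓞 K →+* 𝓞 K)
    (Ideal.quotientEquiv X.P X.P g (X.map_eq g).symm) (fun _ ↦ rfl) (Ideal.Quotient.mk X.P x)

theorem symbol_ringEquiv_eq_pow (F : PureCubicFrame k K m) {g : 𝓞 K ≃+* 𝓞 K} {j : ℕ} (hj : j ≠ 0)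
    (hg : g F.ζ = F.ζ ^ j) (x : 𝓞 K) : X.symbol (g x) = X.symbol x ^ j := by
  have hχ := ringHomComp_eq_pow X.isPowResidueChar.pow_eq_one F.isPrimitiveRoot_ζ
    (g := (g : 𝓞 K →+* 𝓞 K)) hg
  rw [symbol_ringEquiv, symbol_apply, ← MulChar.pow_apply' _ hj, ← hχ]
  rfl

theorem symbol_σ (F : PureCubicFrame k K m) (x : 𝓞 K) : X.symbol (F.σ x) = X.symbol x := by
  simpa only [pow_one] using
    X.symbol_ringEquiv_eq_pow F one_ne_zero (F.σ_ζ.trans (pow_one _).symm) x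

theorem symbol_τ (F : PureCubicFrame k K m) (x : 𝓞 K) : X.symbol (F.τ x) = X.symbol x ^ 2 :=
  X.symbol_ringEquiv_eq_pow F two_ne_zero F.τ_ζ x

theorem symbol_ζ (F : PureCubicFrame k K m) : X.symbol F.ζ = F.ζ ^ ((q ^ 2 - 1) / 3) := by
  have ζ_isUnit : IsUnit F.ζ := F.isPrimitiveRoot_ζ.isUnit (by norm_num)
  refine X.isPowResidueChar.apply_eq_of_map_eq (ζ_isUnit.map (Ideal.Quotient.mk X.P)).ne_zero ?_ ?_
  · rw [pow_right_comm, F.isPrimitiveRoot_ζ.pow_eq_one, one_pow]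
  · rw [X.card_quotient, map_pow]

theorem symbol_jacobiSum {κ : Type*} [Field κ] [Fintype κ] {π : 𝓞 K →+* κ} {χ : MulChar κ (𝓞 K)}
    (h : IsPowResidueChar 3 π χ) (hq : (q : κ) ≠ 0) : X.symbol (jacobiSum χ χ) = χ (q : κ) := by
  have three_dvd : 3 ∣ q + 1 := by have := X.mod_three; omega
  exact h.apply_map_jacobiSum X.isPowResidueChar X.prime three_dvd X.card_quotient hq

end RamifiedCubicSymbol

namespace PureCubicFrame

variable {k K : Type*} [Field k] [NumberField k] [Field K] [NumberField K] [Algebra k K] {m : ℕ}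
  [IsCyclotomicExtension {3} ℚ k]

theorem exists_isMaximal_pow_three_dvd (F : PureCubicFrame k K m) {q t m' : ℕ} (hq : q.Prime)
    (ht : Nat.Coprime 3 t) (hm : m = q ^ t * m') (hm' : ¬q ∣ m') :
    ∃ P : Ideal (𝓞 K), P.IsMaximal ∧ P ^ 3 ∣ Ideal.span {(q : 𝓞 K)} := by
  have span_ne_top : Ideal.span {(q : 𝓞 K)} ≠ ⊤ := fun h ↦ by
    have absNorm_eq := F.absNorm_span_natCast q
    rw [h, Ideal.absNorm_top] at absNorm_eq
    exact hq.one_lt.ne' ((Nat.pow_eq_one.1 absNorm_eq.symm).resolve_right (by norm_num))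
  obtain ⟨P, hP, hqP⟩ := Ideal.exists_le_maximal _ span_ne_top
  refine ⟨P, hP, pow_dvd_of_pow_eq_pow_mul (M := Ideal.span {F.μ}) (A := Ideal.span {(m' : 𝓞 K)})
    ht ?_ ?_ ?_ hqP ?_⟩
  · exact mt Ideal.span_singleton_eq_bot.1 (Nat.cast_ne_zero.2 hq.ne_zero)
  · exact mt Ideal.span_singleton_eq_bot.1
      (Nat.cast_ne_zero.2 fun h0 ↦ hm' (h0 ▸ dvd_zero q))
  · rw [Ideal.span_singleton_pow, Ideal.span_singleton_pow, Ideal.span_singleton_mul_span_singleton,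
      F.μ_pow, hm, Nat.cast_mul, Nat.cast_pow]
  · rw [Ideal.span_singleton_le_iff_mem]
    exact natCast_notMem_of_coprime hP.ne_top (hq.coprime_iff_not_dvd.2 hm')
      ((Ideal.span_singleton_le_iff_mem _).1 hqP)

theorem absNorm_eq_sq_of_pow_three_dvd (F : PureCubicFrame k K m) {q : ℕ} (hq : q.Prime)
    (hq3 : q % 3 = 2) {P : Ideal (𝓞 K)} (hP : P ≠ ⊤) (hdvd : P ^ 3 ∣ Ideal.span {(q : 𝓞 K)})
    (three_dvd : 3 ∣ Ideal.absNorm P - 1) : Ideal.absNorm P = q ^ 2 := by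
  have absNorm_dvd : Ideal.absNorm P ∣ q ^ 2 := by
    rw [← Nat.pow_dvd_pow_iff (n := 3) (by norm_num), ← pow_mul, ← map_pow,
      ← F.absNorm_span_natCast q]
    exact map_dvd Ideal.absNorm hdvd
  obtain ⟨i, hi, absNorm_eq⟩ := (Nat.dvd_prime_pow hq).1 absNorm_dvd
  interval_cases i
  · exact absurd (Ideal.absNorm_eq_one_iff.1 absNorm_eq) hP
  · rw [absNorm_eq, pow_one] at three_dvd
    omega
  · exact absNorm_eq

theorem nonempty_ramifiedCubicSymbol (F : PureCubicFrame k K m) {q t m' : ℕ} (hq : q.Prime)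
    (hq3 : q % 3 = 2) (ht : Nat.Coprime 3 t) (hm : m = q ^ t * m') (hm' : ¬q ∣ m') :
    Nonempty (RamifiedCubicSymbol K q) := by
  obtain ⟨P, hP, hdvd⟩ := F.exists_isMaximal_pow_three_dvd hq ht hm hm'
  have span_ne_bot : Ideal.span {(q : 𝓞 K)} ≠ ⊥ :=
    mt Ideal.span_singleton_eq_bot.1 (Nat.cast_ne_zero.2 hq.ne_zero)
  have span_le : Ideal.span {(q : 𝓞 K)} ≤ P ^ 3 := Ideal.dvd_iff_le.1 hdvd
  have pow_le : P ^ 3 ≤ P := Ideal.pow_le_self (by norm_num)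
  have hqP : (q : 𝓞 K) ∈ P := (Ideal.span_singleton_le_iff_mem _).1
    (span_le.trans pow_le)
  have : Finite (𝓞 K ⧸ P) := Ideal.finiteQuotientOfFreeOfNeBot P fun hP0 ↦
    span_ne_bot (le_bot_iff.1 (span_le.trans (pow_le.trans hP0.le)))
  have three_notMem : ((3 : ℕ) : 𝓞 K) ∉ P := natCast_notMem_of_coprime hP.ne_top
    ((Nat.coprime_primes hq Nat.prime_three).2 (by rintro rfl; omega)) hqP
  obtain ⟨χ, hχ⟩ := exists_isPowResidueChar F.isPrimitiveRoot_ζ (Ideal.Quotient.mk P)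
    (natCast_quotient_ne_zero three_notMem)
  have absNorm_eq : Ideal.absNorm P = q ^ 2 :=
    F.absNorm_eq_sq_of_pow_three_dvd hq hq3 hP.ne_top hdvd hχ.dvd_card_sub_one
  refine ⟨⟨P, χ, hχ, hq, hq3, (eq_of_le_of_absNorm_eq span_le span_ne_bot ?_).symm, absNorm_eq⟩⟩
  rw [F.absNorm_span_natCast, map_pow, absNorm_eq, ← pow_mul]

end PureCubicFrame

end RamifiedPrimes

section IdealClasses

variable {R R' : Type*} [CommRing R] [CommRing R']

theorem map_ringEquiv_ne_bot (e : R ≃+* R') {I : Ideal R} (hI : I ≠ ⊥) : I.map e ≠ ⊥ :=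
  mt (Ideal.map_eq_bot_iff_of_injective (f := e) e.injective).1 hI

theorem map_ringEquiv_span_singleton (e : R ≃+* R') (x : R) :
    (Ideal.span {x}).map e = Ideal.span {e x} := by
  rw [Ideal.map_span, Set.image_singleton]

variable [IsDedekindDomain R] [IsDedekindDomain R']

open Classical in
/-- The class of an ideal, with junk value `1` at the zero ideal. -/
noncomputable def idealClass (I : Ideal R) : ClassGroup R :=
  if hI : I ≠ ⊥ then ClassGroup.mk0 ⟨I, mem_nonZeroDivisors_iff_ne_zero.2 hI⟩ else 1

theorem idealClass_eq_mk0 {I : Ideal R} (hI : I ≠ ⊥) :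
    idealClass I = ClassGroup.mk0 ⟨I, mem_nonZeroDivisors_iff_ne_zero.2 hI⟩ := dif_pos hI

theorem idealClass_mul {I J : Ideal R} (hI : I ≠ ⊥) (hJ : J ≠ ⊥) :
    idealClass (I * J) = idealClass I * idealClass J := by
  rw [idealClass_eq_mk0 hI, idealClass_eq_mk0 hJ, idealClass_eq_mk0 (mul_ne_zero hI hJ), ← map_mul]
  rfl

theorem idealClass_span_singleton (x : R) : idealClass (Ideal.span {x}) = 1 := by
  by_cases hx : Ideal.span {x} = ⊥
  · exact dif_neg (not_not.2 hx)
  · rw [idealClass_eq_mk0 hx, ClassGroup.mk0_eq_one_iff]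
    exact ⟨x, rfl⟩

theorem exists_eq_span_singleton_of_idealClass_eq_one {I : Ideal R} (h : I ≠ ⊥)
    (hI : idealClass I = 1) : ∃ x ≠ 0, I = Ideal.span {x} := by
  rw [idealClass_eq_mk0 h, ClassGroup.mk0_eq_one_iff] at hI
  obtain ⟨x, rfl⟩ := hI.principal
  exact ⟨x, fun hx ↦ h (Ideal.span_singleton_eq_bot.2 hx), rfl⟩

theorem exists_idealClass_eq (a : ClassGroup R) : ∃ I ≠ (⊥ : Ideal R), idealClass I = a := by
  obtain ⟨I, rfl⟩ := ClassGroup.mk0_surjective a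
  have hI : (I : Ideal R) ≠ ⊥ := mem_nonZeroDivisors_iff_ne_zero.1 I.2
  exact ⟨I, hI, idealClass_eq_mk0 hI⟩

theorem exists_span_mul_eq_span_mul {I J : Ideal R} (hI : I ≠ ⊥) (hJ : J ≠ ⊥)
    (h : idealClass I = idealClass J) :
    ∃ x y : R, x ≠ 0 ∧ y ≠ 0 ∧ Ideal.span {x} * I = Ideal.span {y} * J := by
  rw [idealClass_eq_mk0 hI, idealClass_eq_mk0 hJ, ClassGroup.mk0_eq_mk0_iff] at h
  simpa only [exists_prop] using h

theorem exists_idealClass_eq_forall_not_le {ι : Type*} [Finite ι] {𝔓 : ι → Ideal R}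
    (isPrime : ∀ i, (𝔓 i).IsPrime) (ne_bot : ∀ i, 𝔓 i ≠ ⊥) (a : ClassGroup R) :
    ∃ I ≠ (⊥ : Ideal R), idealClass I = a ∧ ∀ i, ¬I ≤ 𝔓 i := by
  cases nonempty_fintype ι
  rcases isEmpty_or_nonempty ι with _ | ⟨⟨i₀⟩⟩
  · obtain ⟨I, hI, rfl⟩ := exists_idealClass_eq a
    exact ⟨I, hI, rfl, isEmptyElim⟩
  obtain ⟨J, hJ, hJa⟩ := exists_idealClass_eq a⁻¹
  have prod_ne_bot : ∏ i, 𝔓 i ≠ ⊥ := Finset.prod_ne_zero_iff.2 fun i _ ↦ ne_bot i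
  obtain ⟨y, hy⟩ := IsDedekindDomain.exists_sup_span_eq (Ideal.mul_le_left : J * ∏ i, 𝔓 i ≤ J)
    (mul_ne_zero hJ prod_ne_bot)
  obtain ⟨I, hI⟩ := Ideal.dvd_iff_le.2 (le_sup_right.trans_eq hy)
  have sup_eq_top : (∏ i, 𝔓 i) ⊔ I = ⊤ := by
    rw [hI, ← Ideal.mul_sup] at hy
    exact mul_left_cancel₀ hJ (hy.trans (Ideal.mul_top J).symm)
  have not_le (i : ι) : ¬I ≤ 𝔓 i := fun hle ↦ (isPrime i).ne_top <| top_le_iff.1 <|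
    sup_eq_top ▸ sup_le (Ideal.le_of_dvd (Finset.dvd_prod_of_mem _ (Finset.mem_univ i))) hle
  have hI0 : I ≠ ⊥ := fun h ↦ not_le i₀ (h ▸ bot_le)
  refine ⟨I, hI0, ?_, not_le⟩
  have mul_eq_one := idealClass_mul hJ hI0
  rw [← hI, idealClass_span_singleton, hJa] at mul_eq_one
  exact (inv_mul_eq_one.1 mul_eq_one.symm).symm

/-- The homomorphism of class groups induced by a ring isomorphism, by extension of ideals. -/
noncomputable def classGroupMap (e : R ≃+* R') : ClassGroup R →* ClassGroup R' :=
  letI := e.toRingHom.toAlgebra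
  haveI := (faithfulSMul_iff_algebraMap_injective R R').2 e.injective
  ClassGroup.extendedHom R R'

theorem classGroupMap_idealClass (e : R ≃+* R') {I : Ideal R} (hI : I ≠ ⊥) :
    classGroupMap e (idealClass I) = idealClass (I.map e) := by
  rw [idealClass_eq_mk0 hI, idealClass_eq_mk0 (map_ringEquiv_ne_bot e hI), classGroupMap,
    ClassGroup.extendedHom_mk0]
  rfl

end IdealClasses

section GenusCharacters

namespace PureCubicFrame

variable {k K : Type*} [Field k] [NumberField k] [Field K] [NumberField K] [Algebra k K] {m : ℕ}
  (F : PureCubicFrame k K m)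

theorem map_σ_σ_σ (I : Ideal (𝓞 K)) : ((I.map F.σ).map F.σ).map F.σ = I := by
  have comp_eq_id : ((F.σ : 𝓞 K →+* 𝓞 K).comp (F.σ : 𝓞 K →+* 𝓞 K)).comp (F.σ : 𝓞 K →+* 𝓞 K) =
      RingHom.id (𝓞 K) := RingHom.ext F.σ_σ_σ
  calc ((I.map F.σ).map F.σ).map F.σ
      = I.map (((F.σ : 𝓞 K →+* 𝓞 K).comp (F.σ : 𝓞 K →+* 𝓞 K)).comp (F.σ : 𝓞 K →+* 𝓞 K)) := by
        rw [← Ideal.map_map, ← Ideal.map_map]; rfl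
    _ = I := by rw [comp_eq_id, Ideal.map_id]

theorem map_τ_map_σ (I : Ideal (𝓞 K)) :
    (I.map F.σ).map F.τ = ((I.map F.τ).map F.σ).map F.σ := by
  have comp_eq : (F.τ : 𝓞 K →+* 𝓞 K).comp (F.σ : 𝓞 K →+* 𝓞 K) =
      ((F.σ : 𝓞 K →+* 𝓞 K).comp (F.σ : 𝓞 K →+* 𝓞 K)).comp (F.τ : 𝓞 K →+* 𝓞 K) :=
    RingHom.ext F.τ_σ
  calc (I.map F.σ).map F.τ = I.map ((F.τ : 𝓞 K →+* 𝓞 K).comp (F.σ : 𝓞 K →+* 𝓞 K)) := by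
        rw [← Ideal.map_map]; rfl
    _ = ((I.map F.τ).map F.σ).map F.σ := by rw [comp_eq, ← Ideal.map_map, ← Ideal.map_map]; rfl

theorem idealNorm_mul (I J : Ideal (𝓞 K)) :
    F.idealNorm (I * J) = F.idealNorm I * F.idealNorm J := by
  simp only [idealNorm, Ideal.map_mul]
  ring

theorem map_σ_idealNorm (I : Ideal (𝓞 K)) : (F.idealNorm I).map F.σ = F.idealNorm I := by
  simp only [idealNorm, Ideal.map_mul, map_σ_σ_σ]
  ring

theorem idealNorm_map_σ (I : Ideal (𝓞 K)) : F.idealNorm (I.map F.σ) = F.idealNorm I := by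
  simp only [idealNorm, map_σ_σ_σ]
  ring

theorem idealNorm_map_τ (I : Ideal (𝓞 K)) : F.idealNorm (I.map F.τ) = (F.idealNorm I).map F.τ := by
  simp only [idealNorm, Ideal.map_mul, map_τ_map_σ, map_σ_σ_σ]
  ring

theorem idealNorm_span_singleton (y : 𝓞 K) :
    F.idealNorm (Ideal.span {y}) = Ideal.span {y * F.σ y * F.σ (F.σ y)} := by
  simp only [idealNorm, map_ringEquiv_span_singleton, Ideal.span_singleton_mul_span_singleton]

theorem σ_mul_σ_mul_σ (y : 𝓞 K) : F.σ (y * F.σ y * F.σ (F.σ y)) = y * F.σ y * F.σ (F.σ y) := by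
  simp only [map_mul, F.σ_σ_σ]
  ring

theorem σ_τ_of_σ_eq {x : 𝓞 K} (hx : F.σ x = x) : F.σ (F.τ x) = F.τ x := by
  have := congrArg F.σ (F.τ_σ x)
  rwa [hx, F.σ_σ_σ] at this

theorem idealNorm_dvd_of_map_σ_eq {P I : Ideal (𝓞 K)} [P.IsPrime] (hP0 : P ≠ ⊥)
    (hσP : P.map F.σ ≠ P) (hσI : I.map F.σ = I) (hIP : I ≤ P) : F.idealNorm P ∣ I := by
  have isMaximal {Q : Ideal (𝓞 K)} (hQ : Q.IsPrime) (hQ0 : Q ≠ ⊥) : Q.IsMaximal :=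
    hQ.isMaximal hQ0
  have hP := isMaximal ‹_› hP0
  have hσP0 := map_ringEquiv_ne_bot F.σ hP0
  have hP₁ := isMaximal (Ideal.map_isPrime_of_equiv F.σ (I := P)) hσP0
  have hP₂ := isMaximal (Ideal.map_isPrime_of_equiv F.σ (I := P.map F.σ))
    (map_ringEquiv_ne_bot F.σ hσP0)
  have ne₂ : (P.map F.σ).map F.σ ≠ P := fun h ↦ hσP (by
    rw [← congrArg (Ideal.map F.σ) h, map_σ_σ_σ])
  have ne₁₂ : P.map F.σ ≠ (P.map F.σ).map F.σ := fun h ↦ ne₂ (by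
    rw [← map_σ_σ_σ F P, ← congrArg (Ideal.map F.σ) h, map_σ_σ_σ, ← h])
  have le₁ : I ≤ P.map F.σ := hσI ▸ Ideal.map_mono hIP
  have le₂ : I ≤ (P.map F.σ).map F.σ := hσI ▸ Ideal.map_mono le₁
  have coprime₀₁ := Ideal.isCoprime_of_isMaximal hσP.symm
  have coprime₀₂ := Ideal.isCoprime_of_isMaximal ne₂.symm
  have coprime₁₂ := Ideal.isCoprime_of_isMaximal ne₁₂
  exact (coprime₀₂.mul_left coprime₁₂).mul_dvd
    (coprime₀₁.mul_dvd (Ideal.dvd_iff_le.2 hIP) (Ideal.dvd_iff_le.2 le₁)) (Ideal.dvd_iff_le.2 le₂)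

end PureCubicFrame

variable {k K : Type*} [Field k] [NumberField k] [Field K] [NumberField K] [Algebra k K] {m : ℕ}
  {ι : Type*} [Fintype ι] {q : ι → ℕ} (X : ∀ i, RamifiedCubicSymbol K (q i)) (c : ι → ZMod 3)

/-- The product `∏ᵢ (·/𝔓ᵢ)₃ ^ cᵢ` of powers of cubic residue symbols. -/
noncomputable def symbolProd : 𝓞 K →* 𝓞 K := ∏ i, (X i).symbol ^ (c i).val

theorem symbolProd_apply (x : 𝓞 K) : symbolProd X c x = ∏ i, (X i).symbol x ^ (c i).val := by
  simp only [symbolProd, MonoidHom.finsetProd_apply, MonoidHom.pow_apply]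

theorem symbolProd_pow_three {x : 𝓞 K} (hx : ∀ i, x ∉ (X i).P) : symbolProd X c x ^ 3 = 1 := by
  rw [symbolProd_apply, ← Finset.prod_pow]
  refine Finset.prod_eq_one fun i _ ↦ ?_
  rw [pow_right_comm, (X i).symbol_pow_three (hx i), one_pow]

theorem symbolProd_add (c' : ι → ZMod 3) {x : 𝓞 K} (hx : ∀ i, x ∉ (X i).P) :
    symbolProd X (c + c') x = symbolProd X c x * symbolProd X c' x := by
  simp only [symbolProd_apply, ← Finset.prod_mul_distrib]
  refine Finset.prod_congr rfl fun i _ ↦ ?_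
  rw [Pi.add_apply, ZMod.val_add, ← pow_eq_pow_mod _ ((X i).symbol_pow_three (hx i)), pow_add]

theorem symbolProd_neg_one : symbolProd X c (-1) = 1 := by
  simp only [symbolProd_apply, RamifiedCubicSymbol.symbol_neg_one, one_pow, Finset.prod_const_one]

theorem symbolProd_σ (F : PureCubicFrame k K m) (x : 𝓞 K) :
    symbolProd X c (F.σ x) = symbolProd X c x := by
  simp only [symbolProd_apply, RamifiedCubicSymbol.symbol_σ]

theorem symbolProd_τ (F : PureCubicFrame k K m) (x : 𝓞 K) :
    symbolProd X c (F.τ x) = symbolProd X c x ^ 2 := by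
  simp only [symbolProd_apply, RamifiedCubicSymbol.symbol_τ, ← Finset.prod_pow, pow_right_comm]

variable {X c}

theorem symbolProd_eq_one_of_isUnit [IsCyclotomicExtension {3} ℚ k] (F : PureCubicFrame k K m)
    (hc : symbolProd X c F.ζ = 1) {u : 𝓞 K} (hu : IsUnit u) (hσ : F.σ u = u) :
    symbolProd X c u = 1 := by
  obtain ⟨j, rfl | rfl⟩ := F.eq_pow_or_eq_neg_pow_of_isUnit hu hσ
  · rw [map_pow, hc, one_pow]
  · rw [neg_eq_neg_one_mul, map_mul, map_pow, hc, one_pow, symbolProd_neg_one, one_mul]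

theorem symbolProd_mul_σ_mul_σ (F : PureCubicFrame k K m) {y : 𝓞 K} (hy : ∀ i, y ∉ (X i).P) :
    symbolProd X c (y * F.σ y * F.σ (F.σ y)) = 1 := by
  rw [← symbolProd_pow_three X c hy, map_mul, map_mul, symbolProd_σ, symbolProd_σ, symbolProd_σ]
  ring

end GenusCharacters

section GenusPairing

namespace PureCubicFrame

variable {k K : Type*} [Field k] [NumberField k] [Field K] [NumberField K] [Algebra k K] {m : ℕ}
  (F : PureCubicFrame k K m) {ι : Type*} {q : ι → ℕ} (X : ∀ i, RamifiedCubicSymbol K (q i))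

/-- `x` lies in the base field and generates the relative norm of some ideal of class `a` that is
prime to all the `𝔓ᵢ`. -/
def IsNormGenerator (a : ClassGroup (𝓞 K)) (x : 𝓞 K) : Prop :=
  ∃ I ≠ (⊥ : Ideal (𝓞 K)), idealClass I = a ∧ (∀ i, ¬I ≤ (X i).P) ∧ F.σ x = x ∧
    F.idealNorm I = Ideal.span {x}

theorem exists_isNormGenerator [IsCyclotomicExtension {3} ℚ k] [Finite ι]
    (a : ClassGroup (𝓞 K)) : ∃ x, F.IsNormGenerator X a x := by
  obtain ⟨I, hI, hIa, not_le⟩ := exists_idealClass_eq_forall_not_le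
    (fun i ↦ (X i).isMaximal.isPrime) (fun i ↦ (X i).ne_bot) a
  obtain ⟨x, hσ, hx⟩ := F.exists_idealNorm_eq_span I
  exact ⟨x, I, hI, hIa, not_le, hσ, hx⟩

variable {F X}

namespace IsNormGenerator

variable {a b : ClassGroup (𝓞 K)} {x y : 𝓞 K}

protected theorem mul (hx : F.IsNormGenerator X a x) (hy : F.IsNormGenerator X b y) :
    F.IsNormGenerator X (a * b) (x * y) := by
  obtain ⟨I, hI, rfl, hIP, hσx, hIx⟩ := hx
  obtain ⟨J, hJ, rfl, hJP, hσy, hJy⟩ := hy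
  refine ⟨I * J, mul_ne_zero hI hJ, idealClass_mul hI hJ, fun i hi ↦ ?_, ?_, ?_⟩
  · exact ((X i).isMaximal.isPrime.mul_le.1 hi).elim (hIP i) (hJP i)
  · rw [map_mul, hσx, hσy]
  · rw [idealNorm_mul, hIx, hJy, Ideal.span_singleton_mul_span_singleton]

protected theorem map_σ (hx : F.IsNormGenerator X a x) :
    F.IsNormGenerator X (classGroupMap F.σ a) x := by
  obtain ⟨I, hI, rfl, hIP, hσ, hIx⟩ := hx
  refine ⟨I.map F.σ, map_ringEquiv_ne_bot F.σ hI, (classGroupMap_idealClass F.σ hI).symm,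
    fun i hi ↦ hIP i (((X i).map_le_iff F.σ).1 hi), hσ, by rw [idealNorm_map_σ, hIx]⟩

protected theorem map_τ (hx : F.IsNormGenerator X a x) :
    F.IsNormGenerator X (classGroupMap F.τ a) (F.τ x) := by
  obtain ⟨I, hI, rfl, hIP, hσ, hIx⟩ := hx
  refine ⟨I.map F.τ, map_ringEquiv_ne_bot F.τ hI, (classGroupMap_idealClass F.τ hI).symm,
    fun i hi ↦ hIP i (((X i).map_le_iff F.τ).1 hi), F.σ_τ_of_σ_eq hσ,
    by rw [idealNorm_map_τ, hIx, map_ringEquiv_span_singleton]⟩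

theorem notMem (hx : F.IsNormGenerator X a x) (i : ι) : x ∉ (X i).P := by
  obtain ⟨I, -, -, hIP, -, hIx⟩ := hx
  simpa only [← Ideal.span_singleton_le_iff_mem, ← hIx, idealNorm, (X i).isMaximal.isPrime.mul_le,
    (X i).map_le_iff, or_self] using hIP i

variable [IsCyclotomicExtension {3} ℚ k] [Fintype ι] {c : ι → ZMod 3}

theorem symbolProd_eq_one (hc : symbolProd X c F.ζ = 1) (hx : F.IsNormGenerator X 1 x) :
    symbolProd X c x = 1 := by
  obtain ⟨I, hI, hI1, hIP, hσ, hIx⟩ := hx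
  obtain ⟨y, hy0, rfl⟩ := exists_eq_span_singleton_of_idealClass_eq_one hI hI1
  rw [idealNorm_span_singleton, Ideal.span_singleton_eq_span_singleton] at hIx
  obtain ⟨u, rfl⟩ := hIx
  have norm_ne_zero : y * F.σ y * F.σ (F.σ y) ≠ 0 := by simpa using hy0
  have hσu : F.σ u = u := by
    rw [map_mul, F.σ_mul_σ_mul_σ] at hσ
    exact mul_left_cancel₀ norm_ne_zero hσ
  rw [map_mul, symbolProd_mul_σ_mul_σ F fun i hi ↦ hIP i ((Ideal.span_singleton_le_iff_mem _).2 hi),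
    symbolProd_eq_one_of_isUnit F hc u.isUnit hσu, one_mul]

theorem symbolProd_eq (hc : symbolProd X c F.ζ = 1) (hx : F.IsNormGenerator X a x)
    (hy : F.IsNormGenerator X a y) : symbolProd X c x = symbolProd X c y := by
  obtain ⟨z, hz⟩ := F.exists_isNormGenerator X a⁻¹
  have mul_eq_one {w : 𝓞 K} (hw : F.IsNormGenerator X a w) :
      symbolProd X c w * symbolProd X c z = 1 := by
    rw [← map_mul]
    exact symbolProd_eq_one hc (mul_inv_cancel a ▸ hw.mul hz)
  have := mul_eq_one hx
  exact mul_right_cancel₀ (right_ne_zero_of_mul_eq_one this) (this.trans (mul_eq_one hy).symm)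

end IsNormGenerator

theorem ζ_notMem {P : Ideal (𝓞 K)} (hP : P ≠ ⊤) : F.ζ ∉ P := fun h ↦
  hP (P.eq_top_of_isUnit_mem h (F.isPrimitiveRoot_ζ.isUnit (by norm_num)))

variable [Fintype ι] (F X)

/-- The exponent vectors `c` for which `∏ᵢ (·/𝔓ᵢ)₃ ^ cᵢ` is trivial on `ζ₃`, hence on the units of
`ℚ(ζ₃)`. -/
def admissibleExponents : AddSubgroup (ι → ZMod 3) where
  carrier := {c | symbolProd X c F.ζ = 1}
  zero_mem' := by simp [symbolProd_apply]
  add_mem' {c d} (hc : _ = _) (hd : _ = _) := by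
    rw [Set.mem_ofPred_eq, symbolProd_add _ _ _ fun i ↦ ζ_notMem (X i).isMaximal.ne_top, hc, hd,
      one_mul]
  neg_mem' {c} (hc : _ = _) := by
    have := symbolProd_add X c (-c) fun i ↦ F.ζ_notMem (X i).isMaximal.ne_top
    rw [hc, one_mul, add_neg_cancel] at this
    rw [Set.mem_ofPred_eq, ← this]
    simp [symbolProd_apply]

variable [IsCyclotomicExtension {3} ℚ k]

/-- The pairing sending `c` and the class of an ideal `I` to `∏ᵢ (x/𝔓ᵢ)₃ ^ cᵢ`, where `x` is a
generator in `ℚ(ζ₃)` of the relative norm of `I`, once `I` is chosen prime to all the `𝔓ᵢ`. -/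
noncomputable def genusPairing :
    Multiplicative (F.admissibleExponents X) →* ClassGroup (𝓞 K) →* 𝓞 K where
  toFun c :=
    { toFun a := symbolProd X c.toAdd (F.exists_isNormGenerator X a).choose
      map_one' := (F.exists_isNormGenerator X 1).choose_spec.symbolProd_eq_one c.toAdd.2
      map_mul' a b := by
        have ha := (F.exists_isNormGenerator X a).choose_spec
        have hb := (F.exists_isNormGenerator X b).choose_spec
        have hab := (F.exists_isNormGenerator X (a * b)).choose_spec
        rw [← map_mul, hab.symbolProd_eq c.toAdd.2 (ha.mul hb)] }
  map_one' := by ext a; simp [symbolProd_apply]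
  map_mul' c d := MonoidHom.ext fun a ↦
    symbolProd_add X _ _ (F.exists_isNormGenerator X a).choose_spec.notMem

variable {F X} {a : ClassGroup (𝓞 K)} {x : 𝓞 K} (c : Multiplicative (F.admissibleExponents X))

theorem IsNormGenerator.genusPairing_eq (hx : F.IsNormGenerator X a x) :
    F.genusPairing X c a = symbolProd X c.toAdd x :=
  (F.exists_isNormGenerator X a).choose_spec.symbolProd_eq c.toAdd.2 hx

theorem genusPairing_pow_three : F.genusPairing X c a ^ 3 = 1 :=
  symbolProd_pow_three X _ (F.exists_isNormGenerator X a).choose_spec.notMem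

theorem genusPairing_map_σ : F.genusPairing X c (classGroupMap F.σ a) = F.genusPairing X c a := by
  obtain ⟨x, hx⟩ := F.exists_isNormGenerator X a
  rw [hx.genusPairing_eq, hx.map_σ.genusPairing_eq]

theorem genusPairing_map_τ :
    F.genusPairing X c (classGroupMap F.τ a) = F.genusPairing X c a ^ 2 := by
  obtain ⟨x, hx⟩ := F.exists_isNormGenerator X a
  rw [hx.genusPairing_eq, hx.map_τ.genusPairing_eq, symbolProd_τ]

theorem genusPairing_eq_one_of_map_τ_eq (hτ : classGroupMap F.τ a = a) :
    F.genusPairing X c a = 1 := by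
  have sq_eq := genusPairing_map_τ c (a := a)
  rw [hτ] at sq_eq
  calc F.genusPairing X c a = F.genusPairing X c a ^ 3 := by
        rw [pow_succ, ← sq_eq, ← sq, ← sq_eq]
    _ = 1 := genusPairing_pow_three c

end PureCubicFrame

end GenusPairing

section AmbiguousClasses

namespace PureCubicFrame

variable {k K : Type*} [Field k] [NumberField k] [Field K] [NumberField K] [Algebra k K] {m : ℕ}
  (F : PureCubicFrame k K m)

theorem μ_ne_zero (hm : m ≠ 0) : F.μ ≠ 0 := fun hμ ↦
  hm (by exact_mod_cast (F.μ_pow.symm.trans (by rw [hμ, zero_pow three_ne_zero]) : (m : 𝓞 K) = 0))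

-- Hilbert 90 by the Lagrange resolvent `Y c`: evaluated at `1`, `μ`, `μ²` it cannot vanish thrice.
theorem exists_mul_σ_eq_of_norm_eq (hm : m ≠ 0) {u v : 𝓞 K} (hu : u ≠ 0)
    (h : u * F.σ u * F.σ (F.σ u) = v * F.σ v * F.σ (F.σ v)) :
    ∃ y ≠ 0, v * F.σ y = F.σ (F.σ u) * y := by
  let Y (c : 𝓞 K) := c * u * F.σ u + v * F.σ u * F.σ c + v * F.σ v * F.σ (F.σ c)
  by_contra! hY
  have Y_eq_zero (c : 𝓞 K) : Y c = 0 := by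
    by_contra hc
    refine hY (Y c) hc ?_
    simp only [Y, map_add, map_mul, F.σ_σ_σ]
    linear_combination (-c) * h
  have hμ := F.μ_ne_zero hm
  have hζ := F.ζ_sq_add_ζ_add_one
  have resolvent₀ := Y_eq_zero 1
  have resolvent₁ := Y_eq_zero F.μ
  have resolvent₂ := Y_eq_zero (F.μ ^ 2)
  simp only [Y, map_pow, map_mul, map_one, F.σ_μ, F.σ_ζ] at resolvent₀ resolvent₁ resolvent₂
  have eq₁ : u * F.σ u + F.ζ * (v * F.σ u) + F.ζ ^ 2 * (v * F.σ v) = 0 :=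
    mul_left_cancel₀ hμ (by linear_combination resolvent₁)
  have eq₂ : u * F.σ u + F.ζ ^ 2 * (v * F.σ u) + F.ζ ^ 4 * (v * F.σ v) = 0 :=
    mul_left_cancel₀ (pow_ne_zero 2 hμ) (by linear_combination resolvent₂)
  have three_mul_eq_zero : 3 * (u * F.σ u) = 0 := by
    linear_combination resolvent₀ + eq₁ + eq₂ - (v * F.σ u) * hζ
      - (v * F.σ v) * (hζ + F.ζ * F.isPrimitiveRoot_ζ.pow_eq_one)
  simp [hu] at three_mul_eq_zero

theorem exists_map_σ_span_mul_eq (hm : m ≠ 0) {u v : 𝓞 K} (hu : u ≠ 0) {I : Ideal (𝓞 K)}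
    (hI : Ideal.span {u} * I.map F.σ = Ideal.span {v} * I)
    (h : u * F.σ u * F.σ (F.σ u) = v * F.σ v * F.σ (F.σ v)) :
    ∃ x ≠ 0, (Ideal.span {x} * I).map F.σ = Ideal.span {x} * I := by
  obtain ⟨y, hy, vy⟩ := F.exists_mul_σ_eq_of_norm_eq hm hu h
  refine ⟨y * F.σ (F.σ u), by simpa [hy] using hu, ?_⟩
  have hu' : Ideal.span {u} ≠ 0 := by simpa using hu
  refine mul_left_cancel₀ hu' ?_
  rw [Ideal.map_mul, map_ringEquiv_span_singleton, mul_left_comm, hI, ← mul_assoc, ← mul_assoc,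
    Ideal.span_singleton_mul_span_singleton, Ideal.span_singleton_mul_span_singleton]
  congr 3
  rw [map_mul, F.σ_σ_σ]
  linear_combination u * vy

theorem exists_span_mul_map_σ_eq [IsCyclotomicExtension {3} ℚ k] {I : Ideal (𝓞 K)} (hI : I ≠ ⊥)
    (h : idealClass (I.map F.σ) = idealClass I) :
    ∃ u v : 𝓞 K, ∃ j : ℕ, u ≠ 0 ∧ v ≠ 0 ∧ Ideal.span {u} * I.map F.σ = Ideal.span {v} * I ∧
      v * F.σ v * F.σ (F.σ v) = F.ζ ^ j * (u * F.σ u * F.σ (F.σ u)) := by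
  obtain ⟨u, v, hu, hv, huv⟩ :=
    exists_span_mul_eq_span_mul (map_ringEquiv_ne_bot F.σ hI) hI h
  have norm_eq := congrArg F.idealNorm huv
  rw [idealNorm_mul, idealNorm_mul, idealNorm_map_σ] at norm_eq
  have idealNorm_ne_zero : F.idealNorm I ≠ 0 := mul_ne_zero
    (mul_ne_zero hI (map_ringEquiv_ne_bot F.σ hI))
    (map_ringEquiv_ne_bot F.σ (map_ringEquiv_ne_bot F.σ hI))
  replace norm_eq := mul_right_cancel₀ idealNorm_ne_zero norm_eq
  rw [idealNorm_span_singleton, idealNorm_span_singleton,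
    Ideal.span_singleton_eq_span_singleton] at norm_eq
  obtain ⟨w, hw⟩ := norm_eq
  have hσw : F.σ w = w := by
    have := congrArg F.σ hw
    rw [map_mul, F.σ_mul_σ_mul_σ, F.σ_mul_σ_mul_σ, ← hw] at this
    exact mul_left_cancel₀ (by simpa using hu) this
  obtain ⟨j, hj | hj⟩ := F.eq_pow_or_eq_neg_pow_of_isUnit w.isUnit hσw
  · exact ⟨u, v, j, hu, hv, huv, by rw [← hw, hj, mul_comm]⟩
  · refine ⟨u, -v, j, hu, neg_ne_zero.2 hv, by rwa [Ideal.span_singleton_neg], ?_⟩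
    simp only [map_neg]
    linear_combination hw - (u * F.σ u * F.σ (F.σ u)) * hj

theorem τ_mul_σ_mul_σ (y : 𝓞 K) :
    F.τ (y * F.σ y * F.σ (F.σ y)) = F.τ y * F.σ (F.τ y) * F.σ (F.σ (F.τ y)) := by
  simp only [map_mul, F.τ_σ, F.σ_σ_σ]
  ring

-- `I` need not be equivalent to a `σ`-stable ideal: the unit relating `N u` and `N v` obstructs
-- Hilbert 90. Multiplying by `τ(I)²` replaces the unit `ζ ^ j` by its cube.
theorem exists_map_σ_eq_of_idealClass_map_σ_eq [IsCyclotomicExtension {3} ℚ k] (hm : m ≠ 0)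
    {I : Ideal (𝓞 K)} (hI : I ≠ ⊥) (h : idealClass (I.map F.σ) = idealClass I) :
    ∃ d ≠ ⊥, d.map F.σ = d ∧ idealClass d = idealClass I * idealClass (I.map F.τ) ^ 2 := by
  obtain ⟨u, v, j, hu, hv, huv, norm_eq⟩ := F.exists_span_mul_map_σ_eq hI h
  have hIτ := map_ringEquiv_ne_bot F.τ hI
  have huv_τ : Ideal.span {F.σ (F.τ v)} * (I.map F.τ).map F.σ =
      Ideal.span {F.σ (F.τ u)} * I.map F.τ := by
    have := congrArg (fun J ↦ (J.map F.τ).map F.σ) huv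
    simpa only [Ideal.map_mul, map_ringEquiv_span_singleton, map_τ_map_σ, map_σ_σ_σ] using this.symm
  have hJ : Ideal.span {u * F.σ (F.τ v) ^ 2} * (I * I.map F.τ ^ 2).map F.σ =
      Ideal.span {v * F.σ (F.τ u) ^ 2} * (I * I.map F.τ ^ 2) := by
    simp only [← Ideal.span_singleton_mul_span_singleton, ← Ideal.span_singleton_pow, Ideal.map_mul,
      Ideal.map_pow]
    rw [mul_mul_mul_comm, ← mul_pow, huv, huv_τ, mul_pow, mul_mul_mul_comm]
  have ζ_pow : (F.ζ ^ j) ^ 3 = 1 := by rw [pow_right_comm, F.isPrimitiveRoot_ζ.pow_eq_one, one_pow]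
  have norm_eq_τ := congrArg F.τ norm_eq
  rw [τ_mul_σ_mul_σ, map_mul, τ_mul_σ_mul_σ, map_pow, F.τ_ζ, pow_right_comm] at norm_eq_τ
  have mul_sq_eq {z a b a' b' : 𝓞 K} (hz : z ^ 3 = 1) (hb : b = z * a) (hb' : b' = z ^ 2 * a') :
      a * b' ^ 2 = b * a' ^ 2 := by
    rw [hb, hb']
    linear_combination z * a * a' ^ 2 * hz
  obtain ⟨x, hx, hσ⟩ := F.exists_map_σ_span_mul_eq hm (by simpa [hu] using hv) hJ (by
    simp only [map_mul, map_pow, F.σ_σ_σ]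
    linear_combination mul_sq_eq ζ_pow norm_eq norm_eq_τ)
  have hspan : Ideal.span {x} ≠ ⊥ := by simpa using hx
  have hJ0 : I * I.map F.τ ^ 2 ≠ ⊥ := mul_ne_zero hI (pow_ne_zero 2 hIτ)
  refine ⟨_, mul_ne_zero hspan hJ0, hσ, ?_⟩
  rw [idealClass_mul hspan hJ0, idealClass_span_singleton, one_mul, sq (I.map F.τ),
    idealClass_mul hI (mul_ne_zero hIτ hIτ), idealClass_mul hIτ hIτ, sq]

end PureCubicFrame

end AmbiguousClasses

section AmbiguousIdeals

namespace PureCubicFrame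

variable {k K : Type*} [Field k] [NumberField k] [Field K] [NumberField K] [Algebra k K] {m : ℕ}
  {F : PureCubicFrame k K m}

theorem induction_of_map_σ_eq {motive : Ideal (𝓞 K) → Prop} {I : Ideal (𝓞 K)} (hI : I ≠ ⊥)
    (hσ : I.map F.σ = I) (top : motive ⊤)
    (mul : ∀ A ≠ ⊥, ∀ B ≠ ⊥, motive A → motive B → motive (A * B))
    (prime : ∀ P : Ideal (𝓞 K), P.IsPrime → P ≠ ⊥ → P.map F.σ = P → motive P)
    (idealNorm : ∀ P : Ideal (𝓞 K), motive (F.idealNorm P)) : motive I := by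
  induction I using WellFoundedGT.induction with
  | ind I ih =>
    by_cases hI_top : I = ⊤
    · exact hI_top ▸ top
    obtain ⟨P, hP, hIP⟩ := I.exists_le_maximal hI_top
    have hP_prime := hP.isPrime
    have hP0 : P ≠ ⊥ := fun h ↦ hI (le_bot_iff.1 (h ▸ hIP))
    have of_dvd {A : Ideal (𝓞 K)} (hAI : A ∣ I) (hAP : A ≤ P) (hσA : A.map F.σ = A)
        (hA : motive A) : motive I := by
      obtain ⟨B, rfl⟩ := hAI
      have hA0 : A ≠ ⊥ := left_ne_zero_of_mul hI
      have hB0 : B ≠ ⊥ := right_ne_zero_of_mul hI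
      have ne : A * B ≠ B := fun h ↦
        hP.ne_top (top_le_iff.1 (Ideal.one_eq_top.ge.trans ((mul_eq_right₀ hB0).1 h ▸ hAP)))
      rw [Ideal.map_mul, hσA] at hσ
      exact mul A hA0 B hB0 hA
        (ih B (lt_of_le_of_ne Ideal.mul_le_right ne) hB0 (mul_left_cancel₀ hA0 hσ))
    by_cases hσP : P.map F.σ = P
    · exact of_dvd (Ideal.dvd_iff_le.2 hIP) le_rfl hσP (prime P hP_prime hP0 hσP)
    · refine of_dvd (F.idealNorm_dvd_of_map_σ_eq hP0 hσP hσ hIP) ?_ (F.map_σ_idealNorm P)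
        (idealNorm P)
      exact Ideal.mul_le_left.trans Ideal.mul_le_left

variable [IsCyclotomicExtension {3} ℚ k] {ι : Type*} [Fintype ι] {q : ι → ℕ}
  {X : ∀ i, RamifiedCubicSymbol K (q i)}

theorem genusPairing_idealClass_eq_one_of_map_σ_eq
    (hμ : ∀ P : Ideal (𝓞 K), P.IsPrime → F.μ ∈ P → 3 ∈ P ∨ ∃ i, P = (X i).P)
    (c : Multiplicative (F.admissibleExponents X)) {I : Ideal (𝓞 K)} (hI : I ≠ ⊥)
    (hσ : I.map F.σ = I) : F.genusPairing X c (idealClass I) = 1 := by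
  have eq_one_of_span (a : 𝓞 K) : F.genusPairing X c (idealClass (Ideal.span {a})) = 1 := by
    rw [idealClass_span_singleton, map_one]
  refine induction_of_map_σ_eq (motive := fun I ↦ F.genusPairing X c (idealClass I) = 1) hI hσ
    ?top ?mul ?prime ?idealNorm
  case top => simpa only [Ideal.span_singleton_one] using eq_one_of_span 1
  case mul =>
    intro A hA B hB eqA eqB
    rw [idealClass_mul hA hB, map_mul, eqA, eqB, one_mul]
  case idealNorm =>
    intro P
    obtain ⟨a, -, ha⟩ := F.exists_idealNorm_eq_span P
    exact ha ▸ eq_one_of_span a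
  case prime =>
    intro P hP hP0 hσP
    have eq_one_of_map_τ (hτ : P.map F.τ = P) : F.genusPairing X c (idealClass P) = 1 :=
      genusPairing_eq_one_of_map_τ_eq c (by rw [classGroupMap_idealClass F.τ hP0, hτ])
    rcases F.inert_or_three_mem_or_μ_mem hP0 hσP with ⟨a, -, rfl, -⟩ | three_mem | μ_mem
    · exact eq_one_of_span a
    · exact eq_one_of_map_τ (F.map_τ_eq_of_three_mem hσP three_mem)
    · obtain three_mem | ⟨i, rfl⟩ := hμ P hP μ_mem
      · exact eq_one_of_map_τ (F.map_τ_eq_of_three_mem hσP three_mem)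
      · exact eq_one_of_map_τ ((X i).map_eq F.τ)

theorem genusPairing_eq_one_of_classGroupMap_σ_eq (hm : m ≠ 0)
    (hμ : ∀ P : Ideal (𝓞 K), P.IsPrime → F.μ ∈ P → 3 ∈ P ∨ ∃ i, P = (X i).P)
    (c : Multiplicative (F.admissibleExponents X)) {a : ClassGroup (𝓞 K)}
    (ha : classGroupMap F.σ a = a) : F.genusPairing X c a = 1 := by
  obtain ⟨I, hI, rfl⟩ := exists_idealClass_eq a
  rw [classGroupMap_idealClass F.σ hI] at ha
  obtain ⟨d, hd, hσd, hdI⟩ := F.exists_map_σ_eq_of_idealClass_map_σ_eq hm hI ha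
  have pow_three := genusPairing_pow_three c (a := idealClass I)
  have pow_five := genusPairing_idealClass_eq_one_of_map_σ_eq hμ c hd hσd
  rw [hdI, map_mul, map_pow, ← classGroupMap_idealClass F.τ hI, genusPairing_map_τ] at pow_five
  linear_combination (F.genusPairing X c (idealClass I) ^ 3 + 1) * pow_three -
    F.genusPairing X c (idealClass I) * pow_five

end PureCubicFrame

end AmbiguousIdeals

section GenusPairingKernel

attribute [local instance] Ideal.Quotient.field

namespace PureCubicFrame

variable {k K : Type*} [Field k] [NumberField k] [Field K] [NumberField K] [Algebra k K] {m : ℕ}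
  {F : PureCubicFrame k K m}

theorem σ_jacobiSum (F : PureCubicFrame k K m) {κ : Type*} [CommRing κ] [Fintype κ]
    {χ : MulChar κ (𝓞 K)} (hχ : χ ^ 3 = 1) : F.σ (jacobiSum χ χ) = jacobiSum χ χ := by
  have σχ : χ.ringHomComp (F.σ : 𝓞 K →+* 𝓞 K) = χ := by
    rw [ringHomComp_eq_pow hχ F.isPrimitiveRoot_ζ (k := 1) (by simpa using F.σ_ζ), pow_one]
  calc F.σ (jacobiSum χ χ) = jacobiSum (χ.ringHomComp (F.σ : 𝓞 K →+* 𝓞 K)) (χ.ringHomComp _) :=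
        (jacobiSum_ringHomComp χ χ (F.σ : 𝓞 K →+* 𝓞 K)).symm
    _ = jacobiSum χ χ := by rw [σχ]

variable [IsCyclotomicExtension {3} ℚ k] {P : Ideal (𝓞 K)} [P.IsMaximal]
  {χ : MulChar (𝓞 K ⧸ P) (𝓞 K)}

theorem absNorm_span_jacobiSum [Fintype (𝓞 K ⧸ P)] (F : PureCubicFrame k K m)
    (h : IsPowResidueChar 3 (Ideal.Quotient.mk P) χ) :
    Ideal.absNorm (Ideal.span {jacobiSum χ χ}) = Ideal.absNorm P ^ 3 := by
  have χ_ne_one : χ ≠ 1 := fun hχ ↦ by simpa [hχ] using h.orderOf_eq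
  have χ_sq_ne_one : χ * χ ≠ 1 := fun hχ ↦ by
    have := Nat.le_of_dvd two_pos (orderOf_dvd_of_pow_eq_one ((sq χ).trans hχ))
    rw [h.orderOf_eq] at this
    omega
  have τχ : χ.ringHomComp (F.τ : 𝓞 K →+* 𝓞 K) = χ⁻¹ := by
    rw [ringHomComp_eq_pow h.pow_eq_one F.isPrimitiveRoot_ζ F.τ_ζ, eq_inv_iff_mul_eq_one,
      ← pow_succ, h.pow_eq_one]
  have norm_mul := congrArg (fun x ↦ Ideal.absNorm (Ideal.span {x}))
    (jacobiSum_mul_map_jacobiSum χ_ne_one χ_sq_ne_one τχ)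
  have norm_τ := absNorm_map_ringEquiv F.τ (Ideal.span {jacobiSum χ χ})
  rw [map_ringEquiv_span_singleton] at norm_τ
  have card_eq : Fintype.card (𝓞 K ⧸ P) = Ideal.absNorm P := by
    rw [← Nat.card_eq_fintype_card, Ideal.absNorm_apply, Submodule.cardQuot_apply]
  refine Nat.pow_left_injective two_ne_zero ?_
  calc Ideal.absNorm (Ideal.span {jacobiSum χ χ}) ^ 2
      = Ideal.absNorm (Ideal.span {jacobiSum χ χ * F.τ (jacobiSum χ χ)}) := by
        rw [← Ideal.span_singleton_mul_span_singleton, map_mul, norm_τ, sq]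
    _ = Ideal.absNorm P ^ 6 := norm_mul.trans (by rw [F.absNorm_span_natCast, card_eq])
    _ = (Ideal.absNorm P ^ 3) ^ 2 := by rw [← pow_mul]

theorem idealNorm_eq_span_jacobiSum [Fintype (𝓞 K ⧸ P)] (hP0 : P ≠ ⊥) (hσ : P.map F.σ ≠ P)
    (h : IsPowResidueChar 3 (Ideal.Quotient.mk P) χ) :
    F.idealNorm P = Ideal.span {jacobiSum χ χ} := by
  have jacobiSum_mem : jacobiSum χ χ ∈ P :=
    Ideal.Quotient.eq_zero_iff_mem.1 (h.map_jacobiSum (by norm_num))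
  have σ_span : (Ideal.span {jacobiSum χ χ}).map F.σ = Ideal.span {jacobiSum χ χ} := by
    rw [map_ringEquiv_span_singleton, F.σ_jacobiSum h.pow_eq_one]
  have absNorm_eq := F.absNorm_span_jacobiSum h
  refine (eq_of_le_of_absNorm_eq (Ideal.dvd_iff_le.1 (F.idealNorm_dvd_of_map_σ_eq hP0 hσ σ_span
    ((Ideal.span_singleton_le_iff_mem P).2 jacobiSum_mem))) (fun hj ↦ ?_) ?_).symm
  · rw [hj, Ideal.absNorm_bot, eq_comm, pow_eq_zero_iff three_ne_zero,
      Ideal.absNorm_eq_zero_iff] at absNorm_eq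
    exact hP0 absNorm_eq
  · simp only [absNorm_eq, idealNorm, map_mul, absNorm_map_ringEquiv]
    ring

variable {ι : Type*} [Fintype ι] {q : ι → ℕ} {X : ∀ i, RamifiedCubicSymbol K (q i)}

theorem apply_prod_eq_genusPairing (c : Multiplicative (F.admissibleExponents X)) (hP0 : P ≠ ⊥)
    (hσ : P.map F.σ ≠ P) (h : IsPowResidueChar 3 (Ideal.Quotient.mk P) χ)
    (hq : ∀ i, (q i : 𝓞 K) ∉ P) :
    χ (∏ i, q i ^ (c.toAdd.1 i).val : ℕ) = F.genusPairing X c (idealClass P) := by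
  have := Ideal.finiteQuotientOfFreeOfNeBot P hP0
  have := Fintype.ofFinite (𝓞 K ⧸ P)
  have isNormGenerator : F.IsNormGenerator X (idealClass P) (jacobiSum χ χ) :=
    ⟨P, hP0, rfl, fun i hi ↦ hq i (Ideal.IsMaximal.eq_of_le ‹_› (X i).isMaximal.ne_top hi ▸
      (X i).natCast_mem), F.σ_jacobiSum h.pow_eq_one, idealNorm_eq_span_jacobiSum hP0 hσ h⟩
  rw [isNormGenerator.genusPairing_eq, symbolProd_apply, Nat.cast_prod, map_prod]
  refine Finset.prod_congr rfl fun i _ ↦ ?_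
  rw [(X i).symbol_jacobiSum h (natCast_quotient_ne_zero (hq i)), Nat.cast_pow, map_pow]

theorem apply_prod_eq_one_of_genusPairing_eq_one {c : Multiplicative (F.admissibleExponents X)}
    (hc : F.genusPairing X c = 1) (hP0 : P ≠ ⊥)
    (h : IsPowResidueChar 3 (Ideal.Quotient.mk P) χ) (three_notMem : 3 ∉ P) (μ_notMem : F.μ ∉ P)
    (hq : ∀ i, (q i : 𝓞 K) ∉ P) : χ (∏ i, q i ^ (c.toAdd.1 i).val : ℕ) = 1 := by
  have := Ideal.finiteQuotientOfFreeOfNeBot P hP0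
  by_cases hσ : P.map F.σ = P
  · rcases F.inert_or_three_mem_or_μ_mem hP0 hσ with ⟨-, -, -, Q, hQ⟩ | three_mem | μ_mem
    · refine h.apply_natCast_eq_one_of_card_eq_pow ((Ideal.absNorm_apply P).symm.trans hQ) ?_
      rw [Nat.cast_prod]
      refine Finset.prod_ne_zero_iff.2 fun i _ ↦ ?_
      rw [Nat.cast_pow]
      exact pow_ne_zero _ (natCast_quotient_ne_zero (hq i))
    · exact absurd three_mem three_notMem
    · exact absurd μ_mem μ_notMem
  · rw [apply_prod_eq_genusPairing c hP0 hσ h hq, hc, MonoidHom.one_apply]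

theorem exists_pow_three_eq_prod_of_genusPairing_eq_one (hm : m ≠ 0) (hqm : ∀ i, q i ∣ m)
    {c : Multiplicative (F.admissibleExponents X)} (hc : F.genusPairing X c = 1) :
    ∃ β : K, β ^ 3 = (∏ i, q i ^ (c.toAdd.1 i).val : ℕ) := by
  set M := ∏ i, q i ^ (c.toAdd.1 i).val
  have hM : (M : 𝓞 K) ≠ 0 := Nat.cast_ne_zero.2 <|
    Finset.prod_ne_zero_iff.2 fun i _ ↦ pow_ne_zero _ (X i).prime.ne_zero
  have h3m : Ideal.span {3 * (m : 𝓞 K)} ≠ 0 := by simpa using hm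
  refine exists_pow_eq_of_forall_pow_sub_mem Nat.prime_three F.isPrimitiveRoot_ζ hM
    (Ideal.finite_factors h3m) fun P hP ↦ ?_
  rw [Set.mem_ofPred_eq, Ideal.dvd_span_singleton, P.isPrime.mul_mem_iff_mem_or_mem, not_or] at hP
  obtain ⟨three_notMem, m_notMem⟩ := hP
  have μ_notMem : F.μ ∉ P.asIdeal := fun h ↦
    m_notMem (F.μ_pow ▸ P.asIdeal.pow_mem_of_mem h 3 (by norm_num))
  have q_notMem (i : ι) : (q i : 𝓞 K) ∉ P.asIdeal := fun h ↦
    m_notMem (P.asIdeal.mem_of_dvd (Nat.cast_dvd_cast (hqm i)) h)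
  have := P.isMaximal
  have := Ideal.finiteQuotientOfFreeOfNeBot P.asIdeal P.ne_bot
  obtain ⟨χ, hχ⟩ := exists_isPowResidueChar F.isPrimitiveRoot_ζ (Ideal.Quotient.mk P.asIdeal)
    (natCast_quotient_ne_zero (by exact_mod_cast three_notMem))
  obtain ⟨y, hy⟩ := hχ.exists_pow_eq
    (apply_prod_eq_one_of_genusPairing_eq_one hc P.ne_bot hχ three_notMem μ_notMem q_notMem)
  obtain ⟨y, rfl⟩ := Ideal.Quotient.mk_surjective y
  refine ⟨y, ?_⟩
  rw [← Ideal.Quotient.eq_zero_iff_mem, map_sub, map_pow, hy, map_natCast, sub_self]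

end PureCubicFrame

end GenusPairingKernel

section GenusIndex

namespace PureCubicFrame

variable {k K : Type*} [Field k] [NumberField k] [Field K] [NumberField K] [Algebra k K] {m : ℕ}
  (F : PureCubicFrame k K m) [IsCyclotomicExtension {3} ℚ k]

theorem mul_classGroupMap_σ_mul_classGroupMap_σ_σ (a : ClassGroup (𝓞 K)) :
    a * classGroupMap F.σ a * classGroupMap F.σ (classGroupMap F.σ a) = 1 := by
  obtain ⟨I, hI, rfl⟩ := exists_idealClass_eq a
  have hσI := map_ringEquiv_ne_bot F.σ hI
  have hσσI := map_ringEquiv_ne_bot F.σ hσI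
  obtain ⟨x, -, hx⟩ := F.exists_idealNorm_eq_span I
  rw [classGroupMap_idealClass _ hI, classGroupMap_idealClass _ hσI, ← idealClass_mul hI hσI,
    ← idealClass_mul (mul_ne_zero hI hσI) hσσI]
  exact (congrArg idealClass hx).trans (idealClass_span_singleton x)

variable {ι : Type*} [Fintype ι] {q : ι → ℕ} {X : ∀ i, RamifiedCubicSymbol K (q i)}

theorem index_ker_genusPairing_sq_le_card_ker_pow_three (hm : m ≠ 0)
    (hμ : ∀ P : Ideal (𝓞 K), P.IsPrime → F.μ ∈ P → 3 ∈ P ∨ ∃ i, P = (X i).P) :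
    (F.genusPairing X).ker.index ^ 2 ≤
      Nat.card (powMonoidHom 3 : ClassGroup (𝓞 K) →* ClassGroup (𝓞 K)).ker := by
  refine (Nat.pow_le_pow_left (index_ker_le_index_iInf_ker (F.genusPairing X)) 2).trans ?_
  refine index_sq_le_card_ker_pow_three (classGroupMap F.σ : _ →* _)
    F.mul_classGroupMap_σ_mul_classGroupMap_σ_σ (fun a ha ↦ ?_) fun a ↦ ?_
  · simp only [Subgroup.mem_iInf, MonoidHom.mem_ker]
    exact fun c ↦ F.genusPairing_eq_one_of_classGroupMap_σ_eq hm hμ c ha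
  · simp only [Subgroup.mem_iInf, MonoidHom.mem_ker]
    intro c
    rw [div_eq_mul_inv, map_mul, genusPairing_map_σ, ← map_mul, mul_inv_cancel, map_one]

end PureCubicFrame

end GenusIndex

section Radicand

theorem dvd_exponent_of_pow_eq_pow {a b : ℕ} (hab : a.Coprime b) {p e n : ℕ} (hp : p.Prime)
    (hn : ¬p ∣ n) {y : ℚ} (hy : y ^ a = ((p ^ e * n : ℕ) : ℚ) ^ b) : a ∣ e := by
  have := Fact.mk hp
  have n_ne_zero : n ≠ 0 := fun h ↦ hn (h ▸ dvd_zero p)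
  have val_eq := congrArg (padicValRat p) hy
  rw [padicValRat.pow, padicValRat.pow, padicValRat.of_nat,
    padicValNat.mul (pow_ne_zero e hp.ne_zero) n_ne_zero, padicValNat.prime_pow,
    padicValNat.eq_zero_of_not_dvd hn, add_zero] at val_eq
  have dvd_mul : a ∣ b * e := Int.natCast_dvd_natCast.1 ⟨_, (Nat.cast_mul b e).trans val_eq.symm⟩
  exact hab.dvd_of_dvd_mul_left dvd_mul

theorem natCast_zmod_nine_sq {q : ℕ} (hq3 : q % 3 = 2) :
    (q : ZMod 9) ^ 2 = 4 ^ ((q ^ 2 - 1) / 3) := by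
  have four_pow_three : (4 : ZMod 9) ^ 3 = 1 := by decide
  have sq_mod : q ^ 2 % 9 = (q % 9) ^ 2 % 9 := Nat.pow_mod q 2 9
  rw [pow_eq_pow_mod _ four_pow_three, ← ZMod.natCast_mod q 9]
  obtain h | h | h : q % 9 = 2 ∨ q % 9 = 5 ∨ q % 9 = 8 := by omega
  · rw [show (q ^ 2 - 1) / 3 % 3 = 1 by rw [h] at sq_mod; omega, h]
    decide
  · rw [show (q ^ 2 - 1) / 3 % 3 = 2 by rw [h] at sq_mod; omega, h]
    decide
  · rw [show (q ^ 2 - 1) / 3 % 3 = 0 by rw [h] at sq_mod; omega, h]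
    decide

variable {ι : Type*} [Fintype ι] {q : ι → ℕ}

theorem prod_pow_mod_nine (hq3 : ∀ i, q i % 3 = 2) {t : ι → ℕ}
    (h : 3 ∣ ∑ i, (q i ^ 2 - 1) / 3 * t i) :
    (∏ i, q i ^ t i) % 9 = 1 ∨ (∏ i, q i ^ t i) % 9 = 8 := by
  have sq_eq_one : ((∏ i, q i ^ t i : ℕ) : ZMod 9) ^ 2 = 1 := by
    obtain ⟨n, hn⟩ := h
    calc ((∏ i, q i ^ t i : ℕ) : ZMod 9) ^ 2 = ∏ i, ((q i : ZMod 9) ^ 2) ^ t i := by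
          rw [Nat.cast_prod, ← Finset.prod_pow]
          simp only [Nat.cast_pow, pow_right_comm]
      _ = 4 ^ (3 * n) := by
          simp only [natCast_zmod_nine_sq (hq3 _), ← pow_mul, Finset.prod_pow_eq_pow_sum, hn]
      _ = 1 := by rw [pow_mul, show (4 : ZMod 9) ^ 3 = 1 by decide, one_pow]
  have val_of_sq_eq_one : ∀ x : ZMod 9, x ^ 2 = 1 → x.val = 1 ∨ x.val = 8 := by decide
  simpa only [ZMod.val_natCast] using val_of_sq_eq_one _ sq_eq_one

theorem not_three_dvd_prod_pow (hq3 : ∀ i, q i % 3 = 2) (e : ι → ℕ) : ¬3 ∣ ∏ i, q i ^ e i := by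
  rw [Nat.prime_three.prime.dvd_finsetProd_iff]
  rintro ⟨i, -, h⟩
  have := Nat.prime_three.dvd_of_dvd_pow h
  have := hq3 i
  omega

theorem exists_three_pow_mul_prod_pow_eq (hq : ∀ i, (q i).Prime) (q_injective : q.Injective)
    (hq3 : ∀ i, q i % 3 = 2) (s : ℕ) (e : ι → ℕ) (j : ι) :
    ∃ n, 3 ^ s * ∏ i, q i ^ e i = q j ^ e j * n ∧ ¬q j ∣ n := by
  classical
  refine ⟨3 ^ s * ∏ i ∈ Finset.univ.erase j, q i ^ e i, ?_, ?_⟩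
  · rw [← Finset.mul_prod_erase Finset.univ _ (Finset.mem_univ j), mul_left_comm]
  rw [(hq j).prime.dvd_mul, (hq j).prime.dvd_finsetProd_iff]
  rintro (h | ⟨i, hi, h⟩)
  · have := (Nat.prime_dvd_prime_iff_eq (hq j) Nat.prime_three).1 ((hq j).dvd_of_dvd_pow h)
    have := hq3 j
    omega
  · exact Finset.ne_of_mem_erase hi
      (q_injective ((Nat.prime_dvd_prime_iff_eq (hq j) (hq i)).1 ((hq j).dvd_of_dvd_pow h))).symm

theorem three_dvd_exponents (hq : ∀ i, (q i).Prime) (q_injective : q.Injective)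
    (hq3 : ∀ i, q i % 3 = 2) {s : ℕ} {e : ι → ℕ} {y : ℚ}
    (hy : y ^ 3 = ((3 ^ s * ∏ i, q i ^ e i : ℕ) : ℚ) ^ 2) : 3 ∣ s ∧ ∀ i, 3 ∣ e i := by
  refine ⟨dvd_exponent_of_pow_eq_pow (by norm_num) Nat.prime_three (not_three_dvd_prod_pow hq3 e)
    hy, fun j ↦ ?_⟩
  obtain ⟨n, hn, hjn⟩ := exists_three_pow_mul_prod_pow_eq hq q_injective hq3 s e j
  exact dvd_exponent_of_pow_eq_pow (by norm_num) (hq j) hjn (hn ▸ hy)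

end Radicand

section GenusRank

namespace PureCubicFrame

variable {k K : Type*} [Field k] [NumberField k] [Field K] [NumberField K] [Algebra k K] {m : ℕ}
  {F : PureCubicFrame k K m}

theorem exists_σ_mul_μ_pow_eq (F : PureCubicFrame k K m) {b : 𝓞 K} {n : ℕ} (hb : b ^ 3 = n) :
    ∃ j, F.σ (b * F.μ ^ j) = b * F.μ ^ j := by
  have hσb : (F.σ b : K) ^ 3 = (b : K) ^ 3 := by
    rw [← map_pow, ← map_pow, ← map_pow, hb, map_natCast]
  obtain ⟨i, hi⟩ := exists_eq_pow_mul_of_pow_eq_pow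
    (F.isPrimitiveRoot_ζ.map_of_injective RingOfIntegers.coe_injective) hσb
  replace hi : F.σ b = F.ζ ^ i * b := RingOfIntegers.ext (by rw [hi]; push_cast; rfl)
  refine ⟨2 * i, ?_⟩
  calc F.σ (b * F.μ ^ (2 * i)) = (F.ζ ^ 3) ^ i * (b * F.μ ^ (2 * i)) := by
        rw [map_mul, map_pow, F.σ_μ, hi]
        ring
    _ = b * F.μ ^ (2 * i) := by rw [F.isPrimitiveRoot_ζ.pow_eq_one, one_pow, one_mul]

variable {ι : Type*} [Fintype ι] {q : ι → ℕ} {X : ∀ i, RamifiedCubicSymbol K (q i)}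

theorem symbolProd_ζ (c : ι → ZMod 3) :
    symbolProd X c F.ζ = F.ζ ^ ∑ i, (q i ^ 2 - 1) / 3 * (c i).val := by
  simp only [symbolProd_apply, (X _).symbol_ζ F, ← pow_mul, Finset.prod_pow_eq_pow_sum]

theorem mem_admissibleExponents_iff {c : ι → ZMod 3} :
    c ∈ F.admissibleExponents X ↔ ∑ i, (((q i ^ 2 - 1) / 3 : ℕ) : ZMod 3) * c i = 0 := by
  have cast_sum : ∑ i, (((q i ^ 2 - 1) / 3 : ℕ) : ZMod 3) * c i =
      (∑ i, (q i ^ 2 - 1) / 3 * (c i).val : ℕ) := by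
    simp only [Nat.cast_sum, Nat.cast_mul, ZMod.natCast_zmod_val]
  change symbolProd X c F.ζ = 1 ↔ _
  rw [symbolProd_ζ, F.isPrimitiveRoot_ζ.pow_eq_one_iff_dvd, cast_sum, ZMod.natCast_eq_zero_iff]

theorem index_admissibleExponents_le : (F.admissibleExponents X).index ≤ 3 := by
  let φ := Fintype.linearCombination (ZMod 3) fun i ↦ (((q i ^ 2 - 1) / 3 : ℕ) : ZMod 3)
  have eq_ker : F.admissibleExponents X = φ.toAddMonoidHom.ker := by
    ext c
    simp [mem_admissibleExponents_iff, φ, Fintype.linearCombination_apply, mul_comm]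
  calc (F.admissibleExponents X).index = Nat.card φ.toAddMonoidHom.range := by
        rw [eq_ker, AddSubgroup.index_ker]
    _ ≤ Nat.card (ZMod 3) := Nat.card_le_card_of_injective _ Subtype.val_injective
    _ = 3 := Nat.card_zmod 3

theorem admissibleExponents_eq_top (hq9 : ∀ i, q i % 9 = 8) : F.admissibleExponents X = ⊤ := by
  refine (AddSubgroup.eq_top_iff' _).2 fun c ↦ mem_admissibleExponents_iff.2 ?_
  refine Finset.sum_eq_zero fun i _ ↦ ?_
  have sq_mod : q i ^ 2 % 9 = 1 := by rw [Nat.pow_mod, hq9 i]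
  rw [(ZMod.natCast_eq_zero_iff _ 3).2 (by omega), zero_mul]

variable [IsCyclotomicExtension {3} ℚ k]

theorem exists_rat_pow_three_eq_natCast_mul_pow_sq (F : PureCubicFrame k K m) {β : K} {n : ℕ}
    (hβ : β ^ 3 = n) : ∃ (j : ℕ) (y : ℚ), y ^ 3 = ((n * m ^ j : ℕ) : ℚ) ^ 2 := by
  have β_isIntegral : IsIntegral ℤ β := IsIntegral.of_pow three_pos (hβ ▸ isIntegral_natCast n)
  obtain ⟨b, rfl⟩ : ∃ b : 𝓞 K, (b : K) = β := ⟨⟨β, β_isIntegral⟩, rfl⟩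
  have hb : b ^ 3 = n := RingOfIntegers.ext (by push_cast; exact hβ)
  obtain ⟨j, hj⟩ := F.exists_σ_mul_μ_pow_eq hb
  refine ⟨j, F.exists_rat_pow_three_eq_sq hj ?_⟩
  rw [mul_pow, hb, pow_right_comm, F.μ_pow, Nat.cast_mul, Nat.cast_pow]

theorem pow_card_eq_index_mul :
    3 ^ Fintype.card ι = (F.genusPairing X).ker.index *
      (Nat.card (F.genusPairing X).ker * (F.admissibleExponents X).index) := by
  calc 3 ^ Fintype.card ι = Nat.card (ι → ZMod 3) := by
        rw [Nat.card_fun, Nat.card_zmod, Nat.card_eq_fintype_card]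
    _ = Nat.card (Multiplicative (F.admissibleExponents X)) * (F.admissibleExponents X).index :=
        (AddSubgroup.card_mul_index _).symm
    _ = _ := by rw [← Subgroup.card_mul_index (F.genusPairing X).ker]; ring

variable {s : ℕ} {t : ι → ℕ}

theorem exists_eq_neg_mul_of_mem_ker_genusPairing (hq3 : ∀ i, q i % 3 = 2)
    (q_injective : q.Injective) (ht : ∀ i, t i ≠ 0) (hm : m = 3 ^ s * ∏ i, q i ^ t i)
    {c : Multiplicative (F.admissibleExponents X)} (hc : c ∈ (F.genusPairing X).ker) :
    ∃ j : ZMod 3, s * j = 0 ∧ ∀ i, c.toAdd.1 i = -(t i * j) := by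
  have q_prime (i : ι) : (q i).Prime := (X i).prime
  have m_ne_zero : m ≠ 0 := hm ▸ mul_ne_zero (by norm_num)
    (Finset.prod_ne_zero_iff.2 fun i _ ↦ pow_ne_zero _ (q_prime i).ne_zero)
  have q_dvd (i : ι) : q i ∣ m := hm ▸ ((dvd_pow_self _ (ht i)).trans
    (Finset.dvd_prod_of_mem (fun i ↦ q i ^ t i) (Finset.mem_univ i))).mul_left _
  obtain ⟨β, hβ⟩ := exists_pow_three_eq_prod_of_genusPairing_eq_one m_ne_zero q_dvd hc
  obtain ⟨j, y, hy⟩ := F.exists_rat_pow_three_eq_natCast_mul_pow_sq hβ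
  have prod_eq : (∏ i, q i ^ (c.toAdd.1 i).val) * m ^ j =
      3 ^ (s * j) * ∏ i, q i ^ ((c.toAdd.1 i).val + t i * j) := by
    simp only [hm, mul_pow, ← pow_mul, ← Finset.prod_pow, pow_add, Finset.prod_mul_distrib]
    ring
  obtain ⟨hs, hc⟩ := three_dvd_exponents q_prime q_injective hq3 (prod_eq ▸ hy)
  simp only [← ZMod.natCast_eq_zero_iff, Nat.cast_add, Nat.cast_mul, ZMod.natCast_zmod_val] at hs hc
  exact ⟨j, hs, fun i ↦ eq_neg_of_add_eq_zero_left (hc i)⟩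

theorem card_ker_genusPairing_le (hq3 : ∀ i, q i % 3 = 2)
    (q_injective : q.Injective) (ht : ∀ i, t i ≠ 0) (hm : m = 3 ^ s * ∏ i, q i ^ t i) :
    Nat.card (F.genusPairing X).ker ≤ 3 := by
  choose j hj using fun c : (F.genusPairing X).ker ↦
    exists_eq_neg_mul_of_mem_ker_genusPairing hq3 q_injective ht hm c.2
  refine (Nat.card_le_card_of_injective j fun c d hcd ↦ ?_).trans (Nat.card_zmod 3).le
  refine Subtype.ext (Multiplicative.toAdd.injective (Subtype.ext (funext fun i ↦ ?_)))
  rw [(hj c).2, (hj d).2, hcd]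

theorem ker_genusPairing_eq_bot (hq3 : ∀ i, q i % 3 = 2) (q_injective : q.Injective)
    (ht : ∀ i, t i ≠ 0) (hs : s ≤ 2) (hm : m = 3 ^ s * ∏ i, q i ^ t i)
    (hm9 : ¬(m % 9 = 1 ∨ m % 9 = 8)) : (F.genusPairing X).ker = ⊥ := by
  refine (Subgroup.eq_bot_iff_forall _).2 fun c hc ↦ ?_
  obtain ⟨j, hsj, hcj⟩ := exists_eq_neg_mul_of_mem_ker_genusPairing hq3 q_injective ht hm hc
  have j_eq_zero : j = 0 := by
    by_contra hj
    have := Fact.mk Nat.prime_three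
    have s_eq_zero : s = 0 := Nat.eq_zero_of_dvd_of_lt
      ((ZMod.natCast_eq_zero_iff s 3).1 ((mul_eq_zero.1 hsj).resolve_right hj)) (by omega)
    have dvd_sum : 3 ∣ ∑ i, (q i ^ 2 - 1) / 3 * t i := by
      have := mem_admissibleExponents_iff.1 c.toAdd.2
      simp only [hcj, mul_neg, ← mul_assoc, Finset.sum_neg_distrib, ← Finset.sum_mul, neg_eq_zero,
        mul_eq_zero, hj, or_false] at this
      exact (ZMod.natCast_eq_zero_iff _ 3).1 (by exact_mod_cast this)
    exact hm9 (by simpa [hm, s_eq_zero] using prod_pow_mod_nine hq3 dvd_sum)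
  refine Multiplicative.toAdd.injective (Subtype.ext (funext fun i ↦ ?_))
  rw [hcj, j_eq_zero, mul_zero, neg_zero]
  rfl

end PureCubicFrame

end GenusRank

section ClassGroupBound

namespace PureCubicFrame

variable {k K : Type*} [Field k] [NumberField k] [Field K] [NumberField K] [Algebra k K] {m s : ℕ}
  {F : PureCubicFrame k K m} {ι : Type*} [Fintype ι] {q t : ι → ℕ}
  {X : ∀ i, RamifiedCubicSymbol K (q i)}

theorem three_mem_or_exists_eq_of_μ_mem (hm : m = 3 ^ s * ∏ i, q i ^ t i) {P : Ideal (𝓞 K)}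
    (hP : P.IsPrime) (hμ : F.μ ∈ P) : 3 ∈ P ∨ ∃ i, P = (X i).P := by
  have m_mem : (m : 𝓞 K) ∈ P := F.μ_pow ▸ P.pow_mem_of_mem hμ 3 three_pos
  rw [hm, Nat.cast_mul, Nat.cast_pow, Nat.cast_ofNat, Nat.cast_prod] at m_mem
  refine (hP.mem_or_mem m_mem).imp (hP.mem_of_pow_mem s) fun prod_mem ↦ ?_
  obtain ⟨i, -, hi⟩ := hP.prod_mem_iff.1 prod_mem
  rw [Nat.cast_pow] at hi
  exact ⟨i, (X i).eq_of_natCast_mem (hP.mem_of_pow_mem _ hi)⟩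

variable [IsCyclotomicExtension {3} ℚ k]

theorem pow_le_index_ker_genusPairing {a b : ℕ} (ha : (F.admissibleExponents X).index ≤ 3 ^ a)
    (hb : Nat.card (F.genusPairing X).ker ≤ 3 ^ b) :
    3 ^ (Fintype.card ι - (a + b)) ≤ (F.genusPairing X).ker.index := by
  have index_pos : 0 < (F.genusPairing X).ker.index :=
    Nat.pos_of_ne_zero Subgroup.index_ne_zero_of_finite
  rcases le_total (Fintype.card ι) (a + b) with h | h
  · rwa [Nat.sub_eq_zero_of_le h, pow_zero]
  refine Nat.le_of_mul_le_mul_right ?_ (pow_pos three_pos (a + b))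
  calc 3 ^ (Fintype.card ι - (a + b)) * 3 ^ (a + b) = 3 ^ Fintype.card ι := by
        rw [← pow_add, Nat.sub_add_cancel h]
    _ = (F.genusPairing X).ker.index *
          (Nat.card (F.genusPairing X).ker * (F.admissibleExponents X).index) :=
        pow_card_eq_index_mul
    _ ≤ (F.genusPairing X).ker.index * 3 ^ (a + b) := by
        rw [add_comm a b, pow_add]
        gcongr

theorem pow_le_index_ker_genusPairing_of_mod_nine (hq3 : ∀ i, q i % 3 = 2)
    (q_injective : q.Injective) (ht : ∀ i, t i ≠ 0) (hs : s ≤ 2) (hm : m = 3 ^ s * ∏ i, q i ^ t i)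
    {r : ℕ}
    (hr₁ : (∀ i, q i % 9 = 8) → ¬(m % 9 = 1 ∨ m % 9 = 8) → r = Fintype.card ι)
    (hr₂ : (∀ i, q i % 9 = 8) → (m % 9 = 1 ∨ m % 9 = 8) → r = Fintype.card ι - 1)
    (hr₃ : (∃ i, q i % 9 = 2 ∨ q i % 9 = 5) → ¬(m % 9 = 1 ∨ m % 9 = 8) → r = Fintype.card ι - 1)
    (hr₄ : (∃ i, q i % 9 = 2 ∨ q i % 9 = 5) → (m % 9 = 1 ∨ m % 9 = 8) → r = Fintype.card ι - 2) :
    3 ^ r ≤ (F.genusPairing X).ker.index := by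
  have card_ker_le := card_ker_genusPairing_le (F := F) (X := X) hq3 q_injective ht hm
  have card_ker_le_one (hm9 : ¬(m % 9 = 1 ∨ m % 9 = 8)) :
      Nat.card (F.genusPairing X).ker ≤ 3 ^ 0 := by
    rw [ker_genusPairing_eq_bot hq3 q_injective ht hs hm hm9, Subgroup.card_bot, pow_zero]
  have index_le := index_admissibleExponents_le (F := F) (X := X)
  by_cases hq9 : ∀ i, q i % 9 = 8
  · have index_le_one : (F.admissibleExponents X).index ≤ 3 ^ 0 := by
      rw [admissibleExponents_eq_top hq9, AddSubgroup.index_top, pow_zero]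
    by_cases hm9 : m % 9 = 1 ∨ m % 9 = 8
    · exact hr₂ hq9 hm9 ▸ pow_le_index_ker_genusPairing index_le_one (b := 1) card_ker_le
    · exact hr₁ hq9 hm9 ▸ pow_le_index_ker_genusPairing index_le_one (card_ker_le_one hm9)
  · have exists_mod_nine : ∃ i, q i % 9 = 2 ∨ q i % 9 = 5 := by
      obtain ⟨i, hi⟩ := not_forall.1 hq9
      have := hq3 i
      exact ⟨i, by omega⟩
    by_cases hm9 : m % 9 = 1 ∨ m % 9 = 8
    · exact hr₄ exists_mod_nine hm9 ▸
        pow_le_index_ker_genusPairing (a := 1) (b := 1) index_le card_ker_le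
    · exact hr₃ exists_mod_nine hm9 ▸
        pow_le_index_ker_genusPairing (a := 1) index_le (card_ker_le_one hm9)

end PureCubicFrame

open IntermediateField in
theorem pow_sq_le_card_ker_pow_three_classGroup {ι : Type*} [Fintype ι] [Nonempty ι] {q t : ι → ℕ}
    (hq : ∀ i, (q i).Prime) (q_injective : q.Injective) (hq3 : ∀ i, q i % 3 = 2)
    (ht : ∀ i, t i = 1 ∨ t i = 2) {s : ℕ} (hs : s ≤ 2) {m : ℕ} (hm : m = 3 ^ s * ∏ i, q i ^ t i)
    {K : Type*} [Field K] [NumberField K] {ζ α : K} (hζ : IsPrimitiveRoot ζ 3)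
    (hα : α ^ 3 = (m : K)) (hgen : Algebra.adjoin ℚ ({ζ, α} : Set K) = ⊤) {r : ℕ}
    (hr₁ : (∀ i, q i % 9 = 8) → ¬(m % 9 = 1 ∨ m % 9 = 8) → r = Fintype.card ι)
    (hr₂ : (∀ i, q i % 9 = 8) → (m % 9 = 1 ∨ m % 9 = 8) → r = Fintype.card ι - 1)
    (hr₃ : (∃ i, q i % 9 = 2 ∨ q i % 9 = 5) → ¬(m % 9 = 1 ∨ m % 9 = 8) → r = Fintype.card ι - 1)
    (hr₄ : (∃ i, q i % 9 = 2 ∨ q i % 9 = 5) → (m % 9 = 1 ∨ m % 9 = 8) → r = Fintype.card ι - 2) :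
    (3 ^ r) ^ 2 ≤ Nat.card (powMonoidHom 3 : ClassGroup (𝓞 K) →* ClassGroup (𝓞 K)).ker := by
  have coprime_t (i : ι) : Nat.Coprime 3 (t i) := by rcases ht i with h | h <;> rw [h] <;> norm_num
  have t_ne_zero (i : ι) : t i ≠ 0 := by rcases ht i with h | h <;> rw [h] <;> norm_num
  have m_ne_zero : m ≠ 0 := hm ▸ mul_ne_zero (by norm_num)
    (Finset.prod_ne_zero_iff.2 fun i _ ↦ pow_ne_zero _ (hq i).ne_zero)
  have m_sq_not_cube (y : ℚ) : y ^ 3 ≠ (m : ℚ) ^ 2 := fun hy ↦ by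
    obtain ⟨i⟩ := ‹Nonempty ι›
    have := (three_dvd_exponents hq q_injective hq3 (hm ▸ hy)).2 i
    have := ht i
    omega
  have : IsCyclotomicExtension {3} ℚ ℚ⟮ζ⟯ := hζ.intermediateField_adjoin_isCyclotomicExtension ℚ
  obtain ⟨F⟩ := nonempty_pureCubicFrame m_ne_zero hζ hα hgen m_sq_not_cube
  have exists_symbol (i : ι) : Nonempty (RamifiedCubicSymbol K (q i)) := by
    obtain ⟨n, hn, hin⟩ := exists_three_pow_mul_prod_pow_eq hq q_injective hq3 s t i
    exact F.nonempty_ramifiedCubicSymbol (hq i) (hq3 i) (coprime_t i) (hm.trans hn) hin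
  let X (i : ι) := (exists_symbol i).some
  calc (3 ^ r) ^ 2 ≤ (F.genusPairing X).ker.index ^ 2 := Nat.pow_le_pow_left
        (F.pow_le_index_ker_genusPairing_of_mod_nine hq3 q_injective t_ne_zero hs hm hr₁ hr₂ hr₃
          hr₄) 2
    _ ≤ Nat.card (powMonoidHom 3 : ClassGroup (𝓞 K) →* ClassGroup (𝓞 K)).ker :=
        F.index_ker_genusPairing_sq_le_card_ker_pow_three m_ne_zero
          fun P hP hμ ↦ F.three_mem_or_exists_eq_of_μ_mem hm hP hμ

end ClassGroupBound

section SIntegers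

variable {R : Type*} [CommRing R] [IsDedekindDomain R] {K : Type*} [Field K] [Algebra R K]
  [IsFractionRing R K] {S : Finset (HeightOneSpectrum R)}

theorem exists_pow_forall_mul_mem_range {b : K}
    (hb : b ∈ (S : Set (HeightOneSpectrum R)).integer K) :
    ∃ N : ℕ, ∀ d ∈ (∏ v ∈ S, v.asIdeal) ^ N, ∃ a : R,
      algebraMap R K a = algebraMap R K d * b := by
  obtain ⟨y, z, hz, rfl⟩ := IsFractionRing.div_surjective (A := R) b
  have z_ne_zero : z ≠ 0 := nonZeroDivisors.ne_zero hz
  let order (v : HeightOneSpectrum R) : ℕ :=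
    (Associates.mk v.asIdeal).count (Associates.mk (Ideal.span {z})).factors
  refine ⟨∑ v ∈ S, order v, fun d hd ↦
    HeightOneSpectrum.mem_integers_of_valuation_le_one K _ fun v ↦ ?_⟩
  by_cases hv : v ∈ S
  · have d_mem : d ∈ v.asIdeal ^ order v :=
      ((Ideal.pow_right_mono (Ideal.le_of_dvd (Finset.dvd_prod_of_mem _ hv)) _).trans
        (Ideal.pow_le_pow_right (Finset.single_le_sum (fun _ _ ↦ Nat.zero_le _) hv))) hd
    have valuation_z : v.intValuation z = WithZero.exp (-(order v : ℤ)) :=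
      v.intValuation_if_neg z_ne_zero
    have valuation_d_le : v.intValuation d ≤ v.intValuation z :=
      valuation_z ▸ (v.intValuation_le_pow_iff_mem d (order v)).2 d_mem
    have valuation_z_pos : 0 < v.intValuation z := by
      rw [valuation_z]
      exact WithZero.exp_pos
    simp only [map_mul, map_div₀, HeightOneSpectrum.valuation_of_algebraMap]
    rw [mul_div_left_comm]
    exact mul_le_one' (v.intValuation_le_one y) ((div_le_one₀ valuation_z_pos).2 valuation_d_le)
  · rw [map_mul]
    exact mul_le_one' (v.valuation_le_one d) (hb v hv)

theorem exists_pow_forall_mul_mem_of_mem_map {I : Ideal R}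
    {x : (S : Set (HeightOneSpectrum R)).integer K}
    (hx : x ∈ I.map (algebraMap R ((S : Set (HeightOneSpectrum R)).integer K))) :
    ∃ N : ℕ, ∀ d ∈ (∏ v ∈ S, v.asIdeal) ^ N, ∃ a ∈ I,
      algebraMap R K a = algebraMap R K d * (x : K) := by
  induction hx using Submodule.span_induction with
  | mem x hx =>
    obtain ⟨i, hi, rfl⟩ := hx
    exact ⟨0, fun d _ ↦ ⟨d * i, I.mul_mem_left _ hi, map_mul _ d i⟩⟩
  | zero => exact ⟨0, fun d _ ↦ ⟨0, I.zero_mem, by simp⟩⟩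
  | add x y _ _ ihx ihy =>
    obtain ⟨N, hN⟩ := ihx
    obtain ⟨M, hM⟩ := ihy
    refine ⟨N + M, fun d hd ↦ ?_⟩
    obtain ⟨a, ha, hax⟩ := hN d (Ideal.pow_le_pow_right (Nat.le_add_right _ _) hd)
    obtain ⟨b, hb, hby⟩ := hM d (Ideal.pow_le_pow_right (Nat.le_add_left _ _) hd)
    exact ⟨a + b, I.add_mem ha hb, by rw [map_add, hax, hby, ← mul_add]; rfl⟩
  | smul b x _ ih =>
    obtain ⟨N, hN⟩ := ih
    obtain ⟨M, hM⟩ := exists_pow_forall_mul_mem_range b.2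
    refine ⟨M + N, fun d hd ↦ ?_⟩
    rw [pow_add] at hd
    induction hd using Submodule.mul_induction_on' with
    | mem_mul_mem d₁ hd₁ d₂ hd₂ =>
      obtain ⟨a, ha⟩ := hM d₁ hd₁
      obtain ⟨c, hc, hcx⟩ := hN d₂ hd₂
      exact ⟨a * c, I.mul_mem_left _ hc, by
        rw [map_mul, map_mul, ha, hcx, mul_mul_mul_comm]; rfl⟩
    | add d₁ _ d₂ _ ih₁ ih₂ =>
      obtain ⟨a₁, ha₁, h₁⟩ := ih₁
      obtain ⟨a₂, ha₂, h₂⟩ := ih₂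
      exact ⟨a₁ + a₂, I.add_mem ha₁ ha₂, by rw [map_add, h₁, h₂, map_add, add_mul]⟩

theorem exists_pow_mul_le_of_map_le_map {I J : Ideal R}
    (hIJ : I.map (algebraMap R ((S : Set (HeightOneSpectrum R)).integer K)) ≤
      J.map (algebraMap R ((S : Set (HeightOneSpectrum R)).integer K))) :
    ∃ N : ℕ, (∏ v ∈ S, v.asIdeal) ^ N * I ≤ J := by
  induction I, IsNoetherian.noetherian I using Submodule.fg_induction with
  | singleton i =>
    obtain ⟨N, hN⟩ := exists_pow_forall_mul_mem_of_mem_map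
      (hIJ (Ideal.mem_map_of_mem _ (Ideal.mem_span_singleton_self i)))
    refine ⟨N, Ideal.mul_le.2 fun d hd w hw ↦ ?_⟩
    obtain ⟨c, rfl⟩ := Ideal.mem_span_singleton'.1 hw
    obtain ⟨a, ha, h⟩ := hN d hd
    have : a = d * i := IsFractionRing.injective R K (h.trans (map_mul _ d i).symm)
    rw [mul_left_comm, ← this]
    exact J.mul_mem_left c ha
  | sup I₁ I₂ _ _ ih₁ ih₂ =>
    obtain ⟨N₁, h₁⟩ := ih₁ ((Ideal.map_mono le_sup_left).trans hIJ)
    obtain ⟨N₂, h₂⟩ := ih₂ ((Ideal.map_mono le_sup_right).trans hIJ)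
    refine ⟨N₁ + N₂, ?_⟩
    rw [Ideal.mul_sup]
    exact sup_le
      ((Ideal.mul_mono_left (Ideal.pow_le_pow_right (Nat.le_add_right _ _))).trans h₁)
      ((Ideal.mul_mono_left (Ideal.pow_le_pow_right (Nat.le_add_left _ _))).trans h₂)

theorem prod_asIdeal_pow_ne_bot (S : Finset (HeightOneSpectrum R)) (n : ℕ) :
    (∏ v ∈ S, v.asIdeal) ^ n ≠ ⊥ :=
  pow_ne_zero n (Finset.prod_ne_zero_iff.2 fun v _ ↦ v.ne_bot)

theorem idealClass_mem_closure_of_dvd_pow {N : ℕ} {J : Ideal R}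
    (hJ : J ∣ (∏ v ∈ S, v.asIdeal) ^ N) :
    idealClass J ∈
      Subgroup.closure ((fun v : HeightOneSpectrum R ↦ idealClass v.asIdeal) '' S) := by
  induction J using UniqueFactorizationMonoid.induction_on_prime with
  | h₁ => exact absurd (zero_dvd_iff.1 hJ) (prod_asIdeal_pow_ne_bot S N)
  | h₂ I hI =>
    rw [Ideal.isUnit_iff.1 hI, ← Ideal.span_singleton_one, idealClass_span_singleton]
    exact Subgroup.one_mem _
  | h₃ I P hI hP ih =>
    rw [idealClass_mul hP.ne_zero hI]
    refine Subgroup.mul_mem _ ?_ (ih ((dvd_mul_left _ _).trans hJ))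
    obtain ⟨v, hv, P_dvd⟩ :=
      (hP.dvd_finsetProd_iff _).1 (hP.dvd_of_dvd_pow ((dvd_mul_right _ _).trans hJ))
    rw [associated_iff_eq.1 (hP.associated_of_dvd v.prime P_dvd)]
    exact Subgroup.subset_closure ⟨v, hv, rfl⟩

theorem idealClass_div_mem_closure_of_map_eq_map {I J : Ideal R} (hI : I ≠ ⊥) (hJ : J ≠ ⊥)
    (hIJ : I.map (algebraMap R ((S : Set (HeightOneSpectrum R)).integer K)) =
      J.map (algebraMap R ((S : Set (HeightOneSpectrum R)).integer K))) :
    idealClass I / idealClass J ∈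
      Subgroup.closure ((fun v : HeightOneSpectrum R ↦ idealClass v.asIdeal) '' S) := by
  obtain ⟨N, hN⟩ := exists_pow_mul_le_of_map_le_map hIJ.le
  obtain ⟨M, hM⟩ := exists_pow_mul_le_of_map_le_map hIJ.ge
  obtain ⟨A, hA⟩ := Ideal.dvd_iff_le.2 hN
  obtain ⟨B, hB⟩ := Ideal.dvd_iff_le.2 hM
  have A_dvd : A ∣ (∏ v ∈ S, v.asIdeal) ^ (M + N) := by
    refine ⟨B, mul_left_cancel₀ hI ?_⟩
    rw [pow_add, mul_comm A B, mul_comm I, mul_assoc, hA, ← mul_assoc, hB, mul_assoc]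
  have A_ne_bot : A ≠ ⊥ := ne_zero_of_dvd_ne_zero (prod_asIdeal_pow_ne_bot S _) A_dvd
  have class_eq : idealClass ((∏ v ∈ S, v.asIdeal) ^ N) * idealClass I =
      idealClass J * idealClass A := by
    rw [← idealClass_mul (prod_asIdeal_pow_ne_bot S N) hI, hA, idealClass_mul hJ A_ne_bot]
  have div_eq : idealClass I / idealClass J =
      idealClass A / idealClass ((∏ v ∈ S, v.asIdeal) ^ N) := by
    rw [div_eq_div_iff_mul_eq_mul, mul_comm, class_eq, mul_comm]
  rw [div_eq]
  exact Subgroup.div_mem _ (idealClass_mem_closure_of_dvd_pow A_dvd)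
    (idealClass_mem_closure_of_dvd_pow dvd_rfl)

theorem isPrincipal_map_of_extendedHom_idealClass_eq_one {I : Ideal R} (hI : I ≠ ⊥)
    (h : ClassGroup.extendedHom R ((S : Set (HeightOneSpectrum R)).integer K) (idealClass I) = 1) :
    (I.map (algebraMap R ((S : Set (HeightOneSpectrum R)).integer K))).IsPrincipal := by
  rw [idealClass_eq_mk0 hI, ClassGroup.extendedHom_mk0', ClassGroup.mk_eq_one_iff] at h
  rwa [← IsLocalization.coeSubmodule_isPrincipal
      (FractionRing ((S : Set (HeightOneSpectrum R)).integer K)) le_rfl,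
    ← FractionalIdeal.coe_coeIdeal,
    ← FractionalIdeal.extendedHom_coeIdeal_eq_map (K := FractionRing R)]

theorem ker_classGroup_extendedHom_integer_le :
    (ClassGroup.extendedHom R ((S : Set (HeightOneSpectrum R)).integer K)).ker ≤
      Subgroup.closure ((fun v : HeightOneSpectrum R ↦ idealClass v.asIdeal) '' S) := by
  intro a ha
  obtain ⟨I, hI, rfl⟩ := exists_idealClass_eq a
  obtain ⟨x, map_eq⟩ := (isPrincipal_map_of_extendedHom_idealClass_eq_one hI ha).principal
  obtain ⟨y, z, hz, hyz⟩ := IsFractionRing.div_surjective (A := R) (x : K)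
  have z_ne_zero : z ≠ 0 := nonZeroDivisors.ne_zero hz
  have mul_eq : algebraMap R ((S : Set (HeightOneSpectrum R)).integer K) z * x =
      algebraMap R _ y := by
    refine Subtype.ext ?_
    change algebraMap R K z * x = algebraMap R K y
    rw [← hyz, mul_div_cancel₀ _ ((map_ne_zero_iff _ (IsFractionRing.injective R K)).2 z_ne_zero)]
  have zI_ne_bot : Ideal.span {z} * I ≠ ⊥ :=
    mul_ne_zero (mt Ideal.span_singleton_eq_bot.1 z_ne_zero) hI
  have map_eq_map : (Ideal.span {z} * I).map
      (algebraMap R ((S : Set (HeightOneSpectrum R)).integer K)) =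
        (Ideal.span {y}).map (algebraMap R _) := by
    rw [Ideal.map_mul, map_eq, Ideal.map_span, Ideal.map_span, Set.image_singleton,
      Set.image_singleton, ← mul_eq]
    exact Ideal.span_singleton_mul_span_singleton _ _
  have y_ne_bot : Ideal.span {y} ≠ ⊥ := by
    intro h
    rw [h, Ideal.map_bot, Ideal.map_eq_bot_iff_of_injective
      (FaithfulSMul.algebraMap_injective R _)] at map_eq_map
    exact zI_ne_bot map_eq_map
  have div_mem := idealClass_div_mem_closure_of_map_eq_map zI_ne_bot y_ne_bot map_eq_map
  rwa [idealClass_mul (mt Ideal.span_singleton_eq_bot.1 z_ne_zero) hI, idealClass_span_singleton,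
    idealClass_span_singleton, one_mul, div_one] at div_mem

theorem card_ker_pow_classGroup_le {n : ℕ} (hn : n ≠ 0) [Finite (ClassGroup R)]
    [Finite (powMonoidHom n : ClassGroup ((S : Set (HeightOneSpectrum R)).integer K) →* _).ker] :
    Nat.card (powMonoidHom n : ClassGroup R →* ClassGroup R).ker ≤
      Nat.card (powMonoidHom n :
        ClassGroup ((S : Set (HeightOneSpectrum R)).integer K) →* _).ker * n ^ S.card := by
  refine (card_ker_pow_le_mul_pow_card hn _ _
    (ker_classGroup_extendedHom_integer_le (K := K) (S := S))).trans ?_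
  gcongr
  · exact Nat.pos_of_ne_zero hn
  · rw [Nat.card_coe_set_eq, ← Set.ncard_coe_finset]
    exact Set.ncard_image_le S.finite_toSet

end SIntegers

theorem stmt_15_general {ι : Type*} [Fintype ι] [Nonempty ι] {q t : ι → ℕ}
    (hq : ∀ i, (q i).Prime) (q_injective : q.Injective) (hq3 : ∀ i, q i % 3 = 2)
    (ht : ∀ i, t i = 1 ∨ t i = 2) {s : ℕ} (hs : s ≤ 2) {m : ℕ} (hm : m = 3 ^ s * ∏ i, q i ^ t i)
    {K : Type*} [Field K] [NumberField K] {ζ α : K} (hζ : IsPrimitiveRoot ζ 3)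
    (hα : α ^ 3 = (m : K)) (hgen : Algebra.adjoin ℚ ({ζ, α} : Set K) = ⊤) {r : ℕ}
    (hr₁ : (∀ i, q i % 9 = 8) → ¬(m % 9 = 1 ∨ m % 9 = 8) → r = Fintype.card ι)
    (hr₂ : (∀ i, q i % 9 = 8) → (m % 9 = 1 ∨ m % 9 = 8) → r = Fintype.card ι - 1)
    (hr₃ : (∃ i, q i % 9 = 2 ∨ q i % 9 = 5) → ¬(m % 9 = 1 ∨ m % 9 = 8) → r = Fintype.card ι - 1)
    (hr₄ : (∃ i, q i % 9 = 2 ∨ q i % 9 = 5) → (m % 9 = 1 ∨ m % 9 = 8) → r = Fintype.card ι - 2)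
    {S : Finset (HeightOneSpectrum (𝓞 K))} {d : ℕ}
    (hd : Nat.card {c : ClassGroup ((S : Set (HeightOneSpectrum (𝓞 K))).integer K) // c ^ 3 = 1} =
      3 ^ d) :
    2 * r ≤ d + S.card := by
  have finite_ker : Finite (powMonoidHom 3 :
      ClassGroup ((S : Set (HeightOneSpectrum (𝓞 K))).integer K) →* _).ker :=
    Nat.finite_of_card_ne_zero (hd.trans_ne (by positivity))
  refine (Nat.pow_le_pow_iff_right (by norm_num : 1 < 3)).1 ?_
  calc 3 ^ (2 * r) = (3 ^ r) ^ 2 := by rw [mul_comm, pow_mul]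
    _ ≤ Nat.card (powMonoidHom 3 : ClassGroup (𝓞 K) →* ClassGroup (𝓞 K)).ker :=
        pow_sq_le_card_ker_pow_three_classGroup hq q_injective hq3 ht hs hm hζ hα hgen
          hr₁ hr₂ hr₃ hr₄
    _ ≤ _ * 3 ^ S.card := card_ker_pow_classGroup_le (K := K) three_ne_zero
    _ = 3 ^ (d + S.card) := by
        rw [pow_add]
        exact congrArg (· * _) hd

/-- With `m = 3^s · ∏ q_i^{t_i}` and `K = ℚ(ζ₃, m^{1/3})` as in Gerth's
theorem and `r` determined by the congruence classes of the `q_i` and of `m` modulo 9,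
for any finite set `S` of nonzero prime ideals of `O_K` one has
`dim_{𝔽₃} Cl_S(K)[3] ≥ 2r − 3|S|` (the dimension `d` being encoded by
`|Cl_S(K)[3]| = 3^d`). -/
theorem stmt_15 (J : ℕ) (hJ : 1 ≤ J) (q : Fin J → ℕ)
    (hq_prime : ∀ i, (q i).Prime) (hq_distinct : Function.Injective q)
    (hq_mod3 : ∀ i, q i % 3 = 2)
    (t : Fin J → ℕ) (ht : ∀ i, t i = 1 ∨ t i = 2)
    (s : ℕ) (hs : s ≤ 2)
    (m : ℕ) (hm : m = 3 ^ s * ∏ i, q i ^ t i)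
    (K : Type) [Field K] [NumberField K] (ζ α : K)
    (hζ : IsPrimitiveRoot ζ 3) (hα : α ^ 3 = (m : K))
    (hgen : Algebra.adjoin ℚ ({ζ, α} : Set K) = ⊤)
    (r : ℕ)
    (hr₁ : (∀ i, q i % 9 = 8) → ¬(m % 9 = 1 ∨ m % 9 = 8) → r = J)
    (hr₂ : (∀ i, q i % 9 = 8) → (m % 9 = 1 ∨ m % 9 = 8) → r = J - 1)
    (hr₃ : (∃ i, q i % 9 = 2 ∨ q i % 9 = 5) → ¬(m % 9 = 1 ∨ m % 9 = 8) → r = J - 1)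
    (hr₄ : (∃ i, q i % 9 = 2 ∨ q i % 9 = 5) → (m % 9 = 1 ∨ m % 9 = 8) → r = J - 2)
    (S : Finset (HeightOneSpectrum (RingOfIntegers K))) (d : ℕ)
    (hd : Nat.card
        {c : ClassGroup ((S : Set (HeightOneSpectrum (RingOfIntegers K))).integer K) //
          c ^ 3 = 1} = 3 ^ d) :
    2 * (r : ℤ) - 3 * S.card ≤ (d : ℤ) := by
  have : Nonempty (Fin J) := ⟨⟨0, hJ⟩⟩
  have := stmt_15_general hq_prime hq_distinct hq_mod3 ht hs hm hζ hα hgen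
    (by simpa using hr₁) (by simpa using hr₂) (by simpa using hr₃) (by simpa using hr₄) hd
  omega
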